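/- arXiv:1607.04586 — 15 statements merged into one kernel-verified Lean document; each statement's English description precedes it below -/
import Mathlib

section
/- Let p be a prime, let G be a torsion-free abelian group, and let H be a pure subgroup of G. Then the closure of H with respect to the topology induced by the p-adic pseudometric d_p is also a pure subgroup of G. -/
/-- `g` is divisible by `p ^ k` in `G`. -/
def pDvd (p : ℕ) {G : Type*} [AddCommGroup G] (k : ℕ) (g : G) : Prop :=
  ∃ x : G, p ^ k • x = g

/-- The closure of a set `S ⊆ G` with respect to the topology induced by the
`p`-adic pseudometric: `g` lies in the closure iff for every `k` there is
`h ∈ S` with `g - h` divisible by `p ^ k` in `G`. -/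
def pClosure (p : ℕ) {G : Type*} [AddCommGroup G] (S : Set G) : Set G :=
  {g : G | ∀ k : ℕ, ∃ h ∈ S, pDvd p k (g - h)}

/-- A subgroup `H` of `G` is pure if `n • g ∈ H` with `n ≠ 0` implies `g ∈ H`. -/
def IsPureSubgroup {G : Type*} [AddCommGroup G] (H : AddSubgroup G) : Prop :=
  ∀ n : ℤ, n ≠ 0 → ∀ g : G, n • g ∈ H → g ∈ H

theorem stmt1 (p : ℕ) [Fact p.Prime] (G : Type*) [AddCommGroup G]
    [NoZeroSMulDivisors ℤ G] (H : AddSubgroup G) (hH : IsPureSubgroup H) :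
    ∃ H' : AddSubgroup G, (H' : Set G) = pClosure p (H : Set G) ∧ IsPureSubgroup H' := by
  have hp : p.Prime := Fact.out
  refine ⟨{ carrier := pClosure p (H : Set G)
            zero_mem' := fun k => ⟨0, H.zero_mem, 0, by simp⟩
            add_mem' := ?_
            neg_mem' := ?_ }, rfl, ?_⟩
  · intro a b ha hb k
    obtain ⟨h, hh, x, hx⟩ := ha k
    obtain ⟨h', hh', y, hy⟩ := hb k
    exact ⟨h + h', H.add_mem hh hh', x + y, by rw [smul_add, hx, hy]; abel⟩
  · intro a ha k
    obtain ⟨h, hh, x, hx⟩ := ha k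
    exact ⟨-h, H.neg_mem hh, -x, by rw [smul_neg, hx]; abel⟩
  · intro n hn g hg k
    have hfin : FiniteMultiplicity (p : ℤ) n :=
      Int.finiteMultiplicity_iff.2 ⟨by simpa using hp.ne_one, hn⟩
    obtain ⟨m, hm, hndvd⟩ := hfin.exists_eq_pow_mul_and_not_dvd
    generalize multiplicity (p : ℤ) n = a at hm
    have hcop : IsCoprime m ((p : ℤ) ^ k) :=
      (((Nat.prime_iff_prime_int.1 hp).coprime_iff_not_dvd.2 hndvd).symm).pow_right
    obtain ⟨u, v, huv⟩ := hcop
    obtain ⟨h, hh, x, hx⟩ := hg (a + k)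
    have hx' : ((p : ℤ) ^ (a + k)) • x = n • g - h := by
      rw [← hx, ← natCast_zsmul]; push_cast; rfl
    have hmem : m • g - ((p : ℤ) ^ k) • x ∈ H := by
      apply hH ((p : ℤ) ^ a) (pow_ne_zero _ (by exact_mod_cast hp.ne_zero))
      have : ((p : ℤ) ^ a) • (m • g - ((p : ℤ) ^ k) • x) = h := by
        rw [smul_sub, smul_smul, smul_smul, ← hm, ← pow_add, hx']; abel
      rw [this]; exact hh
    refine ⟨u • (m • g - ((p : ℤ) ^ k) • x), H.zsmul_mem hmem u, u • x + v • g, ?_⟩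
    rw [← natCast_zsmul]
    push_cast
    have h2 : g - u • m • g = (v * (p : ℤ) ^ k) • g := by
      rw [sub_eq_iff_eq_add, smul_smul, ← add_smul, add_comm, huv, one_smul]
    rw [smul_sub, sub_sub_eq_add_sub, add_sub_right_comm, h2, smul_add, smul_smul, smul_smul,
      smul_smul, mul_comm v, mul_comm u, add_comm]
end

section
/- Let p be a prime, let G be a torsion-free abelian group, let g ∈ G, let H be a pure subgroup of G, and let ε > 0. If d_p(g, h) ≥ ε for every h ∈ H, then for every nonzero integer n and every h ∈ H one has (1/|n|_p) · d_p(n • g, h) ≥ ε, where |n|_p denotes the p-adic absolute value of n. -/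
/-- The `p`-adic pseudometric on a torsion-free abelian group. -/
noncomputable def pdist (p : ℕ) {G : Type*} [AddCommGroup G] (g h : G) : ℝ :=
  sInf {r : ℝ | ∃ k : ℕ, pDvd p k (g - h) ∧ r = (p : ℝ) ^ (-(k : ℤ))}

theorem pdist_le_aux (p : ℕ) {G : Type*} [AddCommGroup G] (g h : G) (k : ℕ)
    (hk : pDvd p k (g - h)) : pdist p g h ≤ (p : ℝ) ^ (-(k : ℤ)) := by
  apply csInf_le
  · refine ⟨0, ?_⟩
    rintro r ⟨k, -, rfl⟩
    positivity
  · exact ⟨k, hk, rfl⟩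

theorem le_pdist_aux (p : ℕ) {G : Type*} [AddCommGroup G] (g h : G) (c : ℝ)
    (hc : ∀ k, pDvd p k (g - h) → c ≤ (p : ℝ) ^ (-(k : ℤ))) : c ≤ pdist p g h := by
  apply le_csInf
  · exact ⟨_, 0, ⟨g - h, by simp⟩, rfl⟩
  · rintro r ⟨k, hk, rfl⟩
    exact hc k hk

theorem stmt2 (p : ℕ) [Fact p.Prime] (G : Type*) [AddCommGroup G]
    [NoZeroSMulDivisors ℤ G] (g : G) (H : AddSubgroup G) (hH : IsPureSubgroup H)
    (ε : ℝ) (hε : 0 < ε) (hsep : ∀ h ∈ H, ε ≤ pdist p g h) :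
    ∀ n : ℤ, n ≠ 0 → ∀ h ∈ H, ε ≤ (1 / ‖(n : ℤ_[p])‖) * pdist p (n • g) h := by
  intro n hn h hh
  have hp : p.Prime := Fact.out
  have hpR : (1 : ℝ) < p := by exact_mod_cast hp.one_lt
  have hp0 : (p : ℝ) ≠ 0 := by positivity
  have hpZ : Prime (p : ℤ) := Nat.prime_iff_prime_int.mp hp
  have hfin : FiniteMultiplicity (p : ℤ) n :=
    Int.finiteMultiplicity_iff.mpr ⟨by simpa using hp.ne_one, hn⟩
  obtain ⟨m, hnm, hm⟩ := hfin.exists_eq_pow_mul_and_not_dvd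
  generalize multiplicity (p : ℤ) n = a at hnm
  have hm1 : ‖(m : ℤ_[p])‖ = 1 := by
    refine le_antisymm (PadicInt.norm_le_one _) ?_
    by_contra hlt
    exact hm ((PadicInt.norm_int_lt_one_iff_dvd m).mp (not_le.mp hlt))
  have hnorm : 1 / ‖(n : ℤ_[p])‖ = (p : ℝ) ^ (a : ℤ) := by
    rw [hnm]
    push_cast
    rw [norm_mul, hm1, norm_pow, PadicInt.norm_p]
    simp
  have hε1 : ε ≤ 1 := by
    have h1 := pdist_le_aux p g 0 0 ⟨g - 0, by simp⟩
    simpa using (hsep 0 H.zero_mem).trans h1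
  have hpa : 0 < (p : ℝ) ^ (a : ℤ) := by positivity
  rw [hnorm, ← div_le_iff₀' hpa]
  apply le_pdist_aux
  rintro k ⟨x, hx⟩
  rw [div_le_iff₀' hpa, ← zpow_add₀ hp0]
  rcases le_total k a with hka | hka
  · exact hε1.trans (one_le_zpow₀ hpR.le (by omega))
  · obtain ⟨b, rfl⟩ := Nat.exists_eq_add_of_le hka
    have hx' : ((p : ℤ) ^ (a + b)) • x = n • g - h := by
      rw [← hx]
      exact_mod_cast natCast_zsmul x (p ^ (a + b))
    have hmem : m • g - ((p : ℤ) ^ b) • x ∈ H := by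
      apply hH ((p : ℤ) ^ a) (pow_ne_zero _ hpZ.ne_zero)
      have : ((p : ℤ) ^ a) • (m • g - ((p : ℤ) ^ b) • x) = h := by
        rw [smul_sub, smul_smul, smul_smul, ← pow_add, hx', ← hnm]
        abel
      rwa [this]
    have hcop : IsCoprime m ((p : ℤ) ^ b) :=
      (((Prime.coprime_iff_not_dvd hpZ).mpr hm).symm).pow_right
    obtain ⟨u, v, huv⟩ := hcop
    have hd : pDvd p b (g - u • (m • g - ((p : ℤ) ^ b) • x)) := by
      refine ⟨u • x + v • g, ?_⟩
      have e : p ^ b • (u • x + v • g) = ((p : ℤ) ^ b) • (u • x + v • g) := by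
        exact_mod_cast (natCast_zsmul (u • x + v • g) (p ^ b)).symm
      rw [e]
      have : g = u • m • g + v • ((p : ℤ) ^ b) • g := by
        rw [smul_smul, smul_smul, ← add_smul, huv, one_smul]
      nth_rewrite 2 [this]
      module
    have h1 := (hsep _ (H.zsmul_mem hmem u)).trans (pdist_le_aux p g _ b hd)
    convert h1 using 2
    push_cast
    ring
end

section
/- Let p be a prime, let G be a torsion-free abelian group, and let g ∈ G be an element not lying in G_p. Then the closure (with respect to the topology induced by d_p) of the pure subgroup generated by g is a minimal p-ideal of G; that is, it is a p-ideal that properly contains G_p, and every p-ideal of G that is properly contained in it equals G_p. -/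
/-- The subgroup `G_p` of elements divisible by every power of `p`, as a set. -/
def GpSet (p : ℕ) (G : Type*) [AddCommGroup G] : Set G :=
  {g : G | ∀ k : ℕ, pDvd p k g}

/-- A `p`-ideal of `G` is a pure subgroup that is closed in the topology induced
by the `p`-adic pseudometric. -/
def IsPIdeal (p : ℕ) {G : Type*} [AddCommGroup G] (J : AddSubgroup G) : Prop :=
  IsPureSubgroup J ∧ pClosure p (J : Set G) ⊆ (J : Set G)

/-- The pure subgroup of `G` generated by `g`, as a set. -/
def pureSpan {G : Type*} [AddCommGroup G] (g : G) : Set G :=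
  {x : G | ∃ n : ℤ, n ≠ 0 ∧ ∃ m : ℤ, n • x = m • g}

theorem pDvd_iff {p : ℕ} {G : Type*} [AddCommGroup G] {k : ℕ} {g : G} :
    pDvd p k g ↔ ∃ x : G, ((p : ℤ) ^ k) • x = g := by
  unfold pDvd
  have : ∀ x : G, ((p : ℤ) ^ k) • x = p ^ k • x := fun x => by
    rw [← natCast_zsmul]; push_cast; rfl
  simp only [this]

theorem pDvd_add {p : ℕ} {G : Type*} [AddCommGroup G] {k : ℕ} {a b : G}
    (ha : pDvd p k a) (hb : pDvd p k b) : pDvd p k (a + b) := by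
  obtain ⟨x, rfl⟩ := ha
  obtain ⟨y, rfl⟩ := hb
  exact ⟨x + y, smul_add _ _ _⟩

theorem pDvd_zsmul {p : ℕ} {G : Type*} [AddCommGroup G] {k : ℕ} {a : G} (n : ℤ)
    (ha : pDvd p k a) : pDvd p k (n • a) := by
  obtain ⟨x, rfl⟩ := ha
  exact ⟨n • x, smul_comm _ _ _⟩

theorem pDvd_pow {p : ℕ} {G : Type*} [AddCommGroup G] {k : ℕ} (a : G) :
    pDvd p k (((p : ℤ) ^ k) • a) := pDvd_iff.2 ⟨a, rfl⟩

theorem zsmul_cancel' {G : Type*} [AddCommGroup G] [NoZeroSMulDivisors ℤ G] {n : ℤ}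
    (hn : n ≠ 0) {a b : G} (h : n • a = n • b) : a = b := by
  have h1 : n • (a - b) = 0 := by rw [smul_sub, h, sub_self]
  rcases NoZeroSMulDivisors.eq_zero_or_eq_zero_of_smul_eq_zero h1 with h2 | h2
  · exact absurd h2 hn
  · exact sub_eq_zero.1 h2

/-- Bezout cancellation. -/
theorem exists_bez {p : ℕ} {G : Type*} [AddCommGroup G] {q : ℤ} {k : ℕ}
    (hq : IsCoprime q ((p : ℤ) ^ k)) :
    ∃ a : ℤ, ∀ x h : G, pDvd p k (q • x - h) → pDvd p k (x - a • h) := by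
  obtain ⟨a, b, hab⟩ := hq
  refine ⟨a, fun x h hx => ?_⟩
  have : x - a • h = a • (q • x - h) + ((p : ℤ) ^ k) • (b • x) := by
    have h1 : x = (a * q + b * (p : ℤ) ^ k) • x := by rw [hab, one_smul]
    nth_rewrite 1 [h1]
    module
  rw [this]
  exact pDvd_add (pDvd_zsmul _ hx) (pDvd_pow _)

theorem exists_pfree (p : ℕ) [Fact p.Prime] {G : Type*} [AddCommGroup G]
    [NoZeroSMulDivisors ℤ G] (g : G) (hg : g ∉ GpSet p G) :
    ∃ (i : ℕ) (g' : G), ((p : ℤ) ^ i) • g' = g ∧ ¬ pDvd p 1 g' := by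
  classical
  have hex : ∃ k, ¬ pDvd p k g := by simpa [GpSet] using hg
  have hs := Nat.find_spec hex
  have hm : ∀ m, m < Nat.find hex → pDvd p m g := fun m hm => not_not.1 (Nat.find_min hex hm)
  generalize Nat.find hex = k at hs hm
  cases k with
  | zero => exact absurd ⟨g, by simp⟩ hs
  | succ i =>
    obtain ⟨x, hx⟩ := pDvd_iff.1 (hm i (Nat.lt_succ_self i))
    refine ⟨i, x, hx, fun h => hs ?_⟩
    obtain ⟨y, hy⟩ := pDvd_iff.1 h
    refine pDvd_iff.2 ⟨y, ?_⟩
    rw [← hx, ← hy, smul_smul]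
    ring_nf

theorem coprime_of {p : ℕ} [hp : Fact p.Prime] {q : ℤ} (h : ¬ (p : ℤ) ∣ q) (k : ℕ) :
    IsCoprime q ((p : ℤ) ^ k) :=
  (((Nat.prime_iff_prime_int.1 hp.out).coprime_iff_not_dvd.2 h).symm).pow_right

theorem pDvd_of_zsmul {p : ℕ} [hp : Fact p.Prime] {G : Type*} [AddCommGroup G] {q : ℤ}
    (h : ¬ (p : ℤ) ∣ q) {k : ℕ} {x : G} (hx : pDvd p k (q • x)) : pDvd p k x := by
  obtain ⟨a, ha⟩ := exists_bez (G := G) (coprime_of h k)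
  simpa using ha x 0 (by simpa using hx)

theorem pDvd_one_of_dvd {p : ℕ} {G : Type*} [AddCommGroup G] {q : ℤ}
    (h : (p : ℤ) ∣ q) (x : G) : pDvd p 1 (q • x) := by
  obtain ⟨c, rfl⟩ := h
  exact pDvd_iff.2 ⟨c • x, by rw [pow_one, smul_smul]⟩

def pureSpanSub {G : Type*} [AddCommGroup G] (g : G) : AddSubgroup G where
  carrier := pureSpan g
  zero_mem' := ⟨1, one_ne_zero, 0, by simp⟩
  add_mem' := by
    rintro a b ⟨n, hn, m, h⟩ ⟨n', hn', m', h'⟩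
    refine ⟨n * n', mul_ne_zero hn hn', n' * m + n * m', ?_⟩
    have : (n * n') • (a + b) = n' • (n • a) + n • (n' • b) := by module
    rw [this, h, h']
    module
  neg_mem' := by
    rintro a ⟨n, hn, m, h⟩
    exact ⟨n, hn, -m, by rw [smul_neg, h, neg_smul]⟩

theorem pureSpanSub_pure {G : Type*} [AddCommGroup G] (g : G) :
    IsPureSubgroup (pureSpanSub g) := by
  rintro n hn x ⟨n', hn', m, h⟩
  exact ⟨n' * n, mul_ne_zero hn' hn, m, by rw [mul_smul, h]⟩

def pClosureSub (p : ℕ) {G : Type*} [AddCommGroup G] (H : AddSubgroup G) : AddSubgroup G where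
  carrier := pClosure p (H : Set G)
  zero_mem' := fun k => ⟨0, H.zero_mem, 0, by simp⟩
  add_mem' := by
    intro a b ha hb k
    obtain ⟨x, hx, hx'⟩ := ha k
    obtain ⟨y, hy, hy'⟩ := hb k
    refine ⟨x + y, H.add_mem hx hy, ?_⟩
    rw [add_sub_add_comm]
    exact pDvd_add hx' hy'
  neg_mem' := by
    intro a ha k
    obtain ⟨x, hx, hx'⟩ := ha k
    refine ⟨-x, H.neg_mem hx, ?_⟩
    have := pDvd_zsmul (-1) hx'
    rwa [show (-1 : ℤ) • (a - x) = -a - -x by module] at this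

theorem pClosureSub_pIdeal (p : ℕ) [hp : Fact p.Prime] {G : Type*} [AddCommGroup G]
    [NoZeroSMulDivisors ℤ G] (H : AddSubgroup G) (hH : IsPureSubgroup H) :
    IsPIdeal p (pClosureSub p H) := by
  have hp0 : (p : ℤ) ≠ 0 := by exact_mod_cast hp.out.ne_zero
  constructor
  · have hP : ∀ x : G, (p : ℤ) • x ∈ pClosureSub p H → x ∈ pClosureSub p H := by
      intro x hx k
      obtain ⟨h, hh, hd⟩ := hx (k + 1)
      obtain ⟨y, hy⟩ := pDvd_iff.1 hd
      refine ⟨x - ((p : ℤ) ^ k) • y, hH p hp0 _ ?_, ?_⟩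
      · have : (p : ℤ) • (x - ((p : ℤ) ^ k) • y) = h := by
          rw [smul_sub, smul_smul, ← pow_succ', hy]; abel
        rw [this]; exact hh
      · rw [sub_sub_cancel]; exact pDvd_pow _
    have hPi : ∀ (i : ℕ) (x : G), ((p : ℤ) ^ i) • x ∈ pClosureSub p H →
        x ∈ pClosureSub p H := by
      intro i
      induction i with
      | zero => intro x hx; simpa using hx
      | succ i ih => intro x hx; exact hP _ (ih _ (by rwa [smul_smul, ← pow_succ]))
    intro n hn x hx
    have hfin : FiniteMultiplicity (p : ℤ) n := by
      rw [Int.finiteMultiplicity_iff]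
      exact ⟨by simpa using hp.out.ne_one, hn⟩
    obtain ⟨q, hq, hq'⟩ := hfin.exists_eq_pow_mul_and_not_dvd
    generalize multiplicity (p : ℤ) n = i at hq
    rw [hq, mul_smul] at hx
    have hx2 := hPi _ _ hx
    intro k
    obtain ⟨h, hh, hd⟩ := hx2 k
    obtain ⟨a, ha⟩ := exists_bez (G := G) (coprime_of hq' k)
    exact ⟨a • h, H.zsmul_mem hh a, ha _ _ hd⟩
  · intro x hx k
    obtain ⟨y, hy, hd⟩ := hx k
    obtain ⟨z, hz, hd'⟩ := hy k
    exact ⟨z, hz, by simpa using pDvd_add hd hd'⟩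

theorem stmt3 (p : ℕ) [Fact p.Prime] (G : Type*) [AddCommGroup G]
    [NoZeroSMulDivisors ℤ G] (g : G) (hg : g ∉ GpSet p G) :
    ∃ J : AddSubgroup G,
      (J : Set G) = pClosure p (pureSpan g) ∧
      IsPIdeal p J ∧
      GpSet p G ⊂ (J : Set G) ∧
      ∀ J' : AddSubgroup G, IsPIdeal p J' → (J' : Set G) ⊂ (J : Set G) →
        (J' : Set G) = GpSet p G := by
  have hp0 : (p : ℤ) ≠ 0 := by exact_mod_cast (Fact.out : p.Prime).ne_zero
  have hGp : ∀ J : AddSubgroup G, pClosure p (J : Set G) ⊆ J → GpSet p G ⊆ J :=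
    fun J hJ x hx => hJ fun k => ⟨0, J.zero_mem, by simpa using hx k⟩
  have hI := pClosureSub_pIdeal p (pureSpanSub g) (pureSpanSub_pure g)
  have hgJ : g ∈ pClosureSub p (pureSpanSub g) := fun k =>
    ⟨g, ⟨1, one_ne_zero, 1, rfl⟩, 0, by simp⟩
  refine ⟨pClosureSub p (pureSpanSub g), rfl, hI, ⟨hGp _ hI.2, fun h => hg (h hgJ)⟩, ?_⟩
  intro J' hJ' hlt
  refine Set.Subset.antisymm ?_ (hGp _ hJ'.2)
  intro x0 hx0
  by_contra hx0p
  apply hlt.2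
  obtain ⟨i, g', hg', hgn⟩ := exists_pfree p g hg
  obtain ⟨j, x, hx, hxn⟩ := exists_pfree p x0 hx0p
  have hxJ' : x ∈ J' := hJ'.1 _ (pow_ne_zero j hp0) x (by rw [hx]; exact hx0)
  have hxJ := hlt.1 hxJ'
  have key : g' ∈ J' := by
    apply hJ'.2
    intro k
    obtain ⟨h, ⟨n, hn, m, hnm⟩, hd⟩ := hxJ (k + 1)
    obtain ⟨y, hy⟩ := pDvd_iff.1 hd
    have hhn : ¬ pDvd p 1 h := by
      intro hh
      apply hxn
      have : x = h + ((p : ℤ) ^ 1) • (((p : ℤ) ^ k) • y) := by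
        rw [smul_smul, ← pow_add, add_comm 1 k, hy]; abel
      rw [this]
      exact pDvd_add hh (pDvd_pow _)
    rw [← hg', smul_smul] at hnm
    generalize m * (p : ℤ) ^ i = m' at hnm
    obtain ⟨d, n1, m1, hd0, hcop, rfl, rfl⟩ : ∃ d n1 m1 : ℤ, d ≠ 0 ∧ IsCoprime n1 m1 ∧
        n = d * n1 ∧ m' = d * m1 := by
      have hpos : 0 < Int.gcd n m' := Int.gcd_pos_of_ne_zero_left _ hn
      obtain ⟨n1, m1, hc, h1, h2⟩ := Int.exists_gcd_one hpos
      exact ⟨Int.gcd n m', n1, m1, by exact_mod_cast hpos.ne',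
        Int.isCoprime_iff_gcd_eq_one.2 hc, by rw [mul_comm]; exact h1,
        by rw [mul_comm]; exact h2⟩
    rw [mul_smul, mul_smul] at hnm
    have e := zsmul_cancel' hd0 hnm
    have hm1 : ¬ (p : ℤ) ∣ m1 := by
      intro hpm
      by_cases hpn : (p : ℤ) ∣ n1
      · exact (Nat.prime_iff_prime_int.1 (Fact.out : p.Prime)).not_unit
          (hcop.isUnit_of_dvd' hpn hpm)
      · exact hhn (pDvd_of_zsmul hpn (by rw [e]; exact pDvd_one_of_dvd hpm _))
    obtain ⟨a, ha⟩ := exists_bez (G := G) (coprime_of hm1 k)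
    refine ⟨a • (n1 • x), J'.zsmul_mem (J'.zsmul_mem hxJ' _) _, ha _ _ ?_⟩
    refine pDvd_iff.2 ⟨-((n1 * (p : ℤ)) • y), ?_⟩
    rw [← e, ← smul_sub, ← neg_sub x h, ← hy, pow_succ]
    module
  have hgJ' : g ∈ J' := by rw [← hg']; exact J'.zsmul_mem key _
  intro z hz
  apply hJ'.2
  intro k
  obtain ⟨h, ⟨n, hn, m, hnm⟩, hd⟩ := hz k
  exact ⟨h, hJ'.1 n hn h (by rw [hnm]; exact J'.zsmul_mem hgJ' m), hd⟩
end

section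
/- Let p be a prime, let G be a torsion-free abelian group, let t be a p-adic sublinear pseudometric on G, let H be a subgroup of G, let g ∈ G, and let f : H → ℤ_p be a t-contractive homomorphism. For h ∈ H and a nonzero integer n, define the subset B(h, n) := {α ∈ ℚ_p : |n|_p · ‖α − (1/n) f(h)‖ ≤ t(n • g, h)} of the field ℚ_p of p-adic numbers. Then: (1) the intersection of B(h, n) over all h ∈ H and all nonzero integers n is nonempty; (2) if f extends to a t-contractive homomorphism f' on the subgroup H + ℤ • g, then f'(g) lies in this intersection; (3) for every β in this intersection, f extends to a t-contractive homomorphism f' : H + ℤ • g → ℤ_p with f'(g) = β. -/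
/-- A `p`-adic sublinear pseudometric on `G`: a pseudometric that is translation
invariant, absolutely scalable, dominated by the `p`-adic pseudometric, and
satisfies the strong triangle inequality. -/
structure IsPadicSublinear (p : ℕ) [Fact p.Prime] {G : Type*} [AddCommGroup G]
    (t : G → G → ℝ) : Prop where
  nonneg : ∀ g h : G, 0 ≤ t g h
  refl : ∀ g : G, t g g = 0
  symm : ∀ g h : G, t g h = t h g
  translation : ∀ g₁ g₂ h : G, t (g₁ + h) (g₂ + h) = t g₁ g₂
  scalable : ∀ (n : ℤ) (g₁ g₂ : G), t (n • g₁) (n • g₂) = ‖(n : ℤ_[p])‖ * t g₁ g₂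
  dominated : ∀ g₁ g₂ : G, t g₁ g₂ ≤ pdist p g₁ g₂
  strong : ∀ g₁ g₂ g₃ : G, t g₁ g₂ ≤ max (t g₁ g₃) (t g₃ g₂)

theorem aux_t_le_one (p : ℕ) [Fact p.Prime] {G : Type*} [AddCommGroup G]
    (t : G → G → ℝ) (ht : IsPadicSublinear p t) (a b : G) : t a b ≤ 1 := by
  refine (ht.dominated a b).trans ?_
  unfold pdist
  refine csInf_le ⟨0, ?_⟩ ⟨0, ⟨a - b, by simp⟩, by simp⟩
  rintro r ⟨k, -, rfl⟩
  positivity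

theorem aux_norm (p : ℕ) [Fact p.Prime] (n : ℤ) (hn : n ≠ 0) (α c : ℚ_[p]) :
    ‖(n : ℚ_[p])‖ * ‖α - c / (n : ℚ_[p])‖ = ‖(n : ℚ_[p]) * α - c‖ := by
  have : (n : ℚ_[p]) ≠ 0 := by exact_mod_cast hn
  rw [← norm_mul, mul_sub, mul_div_cancel₀ _ this]

theorem aux_nonempty (p : ℕ) [Fact p.Prime] {ι : Type*} [Nonempty ι] (c : ι → ℚ_[p]) (r : ι → ℝ)
    (hr : ∀ i, 0 ≤ r i) (h : ∀ i j, dist (c i) (c j) ≤ max (r i) (r j)) :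
    ∃ x, ∀ i, dist x (c i) ≤ r i := by
  have hsub : ∀ i j, r i ≤ r j →
      Metric.closedBall (c i) (r i) ⊆ Metric.closedBall (c j) (r j) := by
    intro i j hij x hx
    rw [Metric.mem_closedBall] at *
    refine (dist_triangle_max x (c i) (c j)).trans (max_le (hx.trans hij) ?_)
    exact (h i j).trans (max_le hij le_rfl)
  have := IsCompact.nonempty_iInter_of_directed_nonempty_isCompact_isClosed
    (fun i => Metric.closedBall (c i) (r i))
    (by
      intro i j
      rcases le_total (r i) (r j) with hij | hij
      · exact ⟨i, subset_rfl, hsub i j hij⟩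
      · exact ⟨j, hsub j i hij, subset_rfl⟩)
    (fun i => ⟨c i, Metric.mem_closedBall_self (hr i)⟩)
    (fun i => isCompact_closedBall _ _) (fun i => Metric.isClosed_closedBall)
  obtain ⟨x, hx⟩ := this
  exact ⟨x, fun i => by simpa using Set.mem_iInter.1 hx i⟩

theorem stmt4 (p : ℕ) [Fact p.Prime] (G : Type*) [AddCommGroup G]
    [NoZeroSMulDivisors ℤ G] (t : G → G → ℝ) (ht : IsPadicSublinear p t)
    (H : AddSubgroup G) (g : G) (f : H →+ ℤ_[p])
    (hf : ∀ h₁ h₂ : H, ‖f h₁ - f h₂‖ ≤ t (h₁ : G) (h₂ : G)) :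
    -- the intersection of the sets `B(h, n)` as a subset of `ℚ_[p]`
    let B : Set ℚ_[p] := {α : ℚ_[p] | ∀ (h : G) (hh : h ∈ H) (n : ℤ), n ≠ 0 →
      ‖(n : ℚ_[p])‖ * ‖α - (f ⟨h, hh⟩ : ℚ_[p]) / (n : ℚ_[p])‖ ≤ t (n • g) h}
    -- (1) the intersection is nonempty
    B.Nonempty ∧
    -- (2) any `t`-contractive extension of `f` to `H + ℤ • g` sends `g` into the intersection
    (∀ f' : (H ⊔ AddSubgroup.zmultiples g : AddSubgroup G) →+ ℤ_[p],
      (∀ h₁ h₂ : (H ⊔ AddSubgroup.zmultiples g : AddSubgroup G),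
        ‖f' h₁ - f' h₂‖ ≤ t (h₁ : G) (h₂ : G)) →
      (∀ (h : G) (hh : h ∈ H), f' ⟨h, AddSubgroup.mem_sup_left hh⟩ = f ⟨h, hh⟩) →
      ((f' ⟨g, AddSubgroup.mem_sup_right (AddSubgroup.mem_zmultiples g)⟩ : ℚ_[p]) ∈ B)) ∧
    -- (3) every element of the intersection is the value at `g` of a `t`-contractive extension
    (∀ β ∈ B, ∃ f' : (H ⊔ AddSubgroup.zmultiples g : AddSubgroup G) →+ ℤ_[p],
      (∀ h₁ h₂ : (H ⊔ AddSubgroup.zmultiples g : AddSubgroup G),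
        ‖f' h₁ - f' h₂‖ ≤ t (h₁ : G) (h₂ : G)) ∧
      (∀ (h : G) (hh : h ∈ H), f' ⟨h, AddSubgroup.mem_sup_left hh⟩ = f ⟨h, hh⟩) ∧
      (f' ⟨g, AddSubgroup.mem_sup_right (AddSubgroup.mem_zmultiples g)⟩ : ℚ_[p]) = β) := by
  intro B
  have hcast : ∀ n : ℤ, ‖(n : ℤ_[p])‖ = ‖(n : ℚ_[p])‖ := fun n => by
    rw [← PadicInt.coe_intCast, PadicInt.norm_def]
  refine ⟨?_, ?_, ?_⟩
  · haveI : Nonempty (H × {n : ℤ // n ≠ 0}) := ⟨(0, ⟨1, one_ne_zero⟩)⟩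
    obtain ⟨x, hx⟩ := aux_nonempty p (ι := H × {n : ℤ // n ≠ 0})
      (fun i => (f i.1 : ℚ_[p]) / ((i.2 : ℤ) : ℚ_[p]))
      (fun i => t ((i.2 : ℤ) • g) i.1 / ‖((i.2 : ℤ) : ℚ_[p])‖)
      (fun i => div_nonneg (ht.nonneg _ _) (norm_nonneg _))
      (by
        rintro ⟨h, n, hn⟩ ⟨h', m, hm⟩
        have hn' : (n : ℚ_[p]) ≠ 0 := by exact_mod_cast hn
        have hm' : (m : ℚ_[p]) ≠ 0 := by exact_mod_cast hm
        have hn0 : 0 < ‖(n : ℚ_[p])‖ := norm_pos_iff.2 hn'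
        have hm0 : 0 < ‖(m : ℚ_[p])‖ := norm_pos_iff.2 hm'
        dsimp only
        have e : (f h : ℚ_[p]) / (n : ℚ_[p]) - (f h' : ℚ_[p]) / (m : ℚ_[p])
            = ((f (m • h) - f (n • h') : ℤ_[p]) : ℚ_[p]) / (n * m) := by
          simp only [map_zsmul, zsmul_eq_mul]
          push_cast
          field_simp
        rw [dist_eq_norm, e, norm_div, norm_mul, ← PadicInt.norm_def]
        have h1 := (hf (m • h) (n • h')).trans (ht.strong _ _ ((m * n) • g))
        have e1 : t ((m • h : H) : G) ((m * n) • g) = ‖(m : ℚ_[p])‖ * t (n • g) h := by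
          rw [mul_smul, AddSubgroup.coe_zsmul, ht.scalable, hcast, ht.symm]
        have e2 : t ((m * n) • g) ((n • h' : H) : G) = ‖(n : ℚ_[p])‖ * t (m • g) h' := by
          rw [mul_comm, mul_smul, AddSubgroup.coe_zsmul, ht.scalable, hcast]
        rw [e1, e2] at h1
        rcases le_max_iff.1 h1 with h2 | h2
        · apply le_max_of_le_left
          rw [div_le_div_iff₀ (by positivity) hn0]
          nlinarith
        · apply le_max_of_le_right
          rw [div_le_div_iff₀ (by positivity) hm0]
          nlinarith)
    refine ⟨x, fun h hh n hn => ?_⟩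
    have h1 := hx (⟨h, hh⟩, ⟨n, hn⟩)
    have hn0 : 0 < ‖(n : ℚ_[p])‖ := norm_pos_iff.2 (by exact_mod_cast hn)
    rw [dist_eq_norm, le_div_iff₀ hn0, mul_comm] at h1
    exact h1
  · intro f' hf' hext h hh n hn
    rw [aux_norm p n hn, ← hext h hh]
    have h1 := hf' (n • ⟨g, AddSubgroup.mem_sup_right (AddSubgroup.mem_zmultiples g)⟩)
      ⟨h, AddSubgroup.mem_sup_left hh⟩
    rw [map_zsmul, zsmul_eq_mul, PadicInt.norm_def] at h1
    push_cast at h1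
    exact h1
  · intro β hβ
    have hβ1 : ‖β‖ ≤ 1 := by
      have h1 := hβ 0 H.zero_mem 1 one_ne_zero
      rw [aux_norm p 1 one_ne_zero] at h1
      have h0 : f ⟨0, H.zero_mem⟩ = 0 := f.map_zero
      rw [h0] at h1
      have h2 := h1.trans (aux_t_le_one p t ht _ _)
      simpa using h2
    obtain ⟨b, rfl⟩ : ∃ b : ℤ_[p], (b : ℚ_[p]) = β := ⟨⟨β, hβ1⟩, rfl⟩
    -- the key estimate
    have key : ∀ (h : H) (n : ℤ), ‖f h + n * b‖ ≤ t ((h : G) + n • g) 0 := by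
      intro h n
      have e : t ((h : G) + n • g) 0 = t (n • g) ((-h : H) : G) := by
        have := ht.translation (n • g) ((-h : H) : G) (h : G)
        rw [← this]
        simp [add_comm]
      rw [e]
      by_cases hn : n = 0
      · subst hn
        have := hf 0 (-h)
        simpa using this
      · have h1 := hβ ((-h : H) : G) (-h : H).2 n hn
        rw [aux_norm p n hn] at h1
        refine le_trans (le_of_eq ?_) h1
        rw [PadicInt.norm_def]
        have : f ⟨((-h : H) : G), (-h : H).2⟩ = - f h := f.map_neg h
        rw [this]
        push_cast
        rw [sub_neg_eq_add, add_comm]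
    have rep : ∀ x : (H ⊔ AddSubgroup.zmultiples g : AddSubgroup G),
        ∃ q : H × ℤ, (q.1 : G) + q.2 • g = x := by
      rintro ⟨x, hx⟩
      obtain ⟨y, hy, z, hz, rfl⟩ := AddSubgroup.mem_sup.1 hx
      obtain ⟨n, rfl⟩ := AddSubgroup.mem_zmultiples_iff.1 hz
      exact ⟨(⟨y, hy⟩, n), rfl⟩
    choose q hq using rep
    have uniq : ∀ (x : (H ⊔ AddSubgroup.zmultiples g : AddSubgroup G)) (h : H) (n : ℤ),
        (h : G) + n • g = x → f (q x).1 + ((q x).2 : ℤ_[p]) * b = f h + n * b := by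
      intro x h n hx
      have h1 := key ((q x).1 - h) ((q x).2 - n)
      have e : (((q x).1 - h : H) : G) + ((q x).2 - n) • g = 0 := by
        rw [AddSubgroup.coe_sub, sub_smul, ← sub_self (x : G)]
        nth_rewrite 1 [← hq x]
        rw [← hx]
        abel
      rw [e, ht.refl] at h1
      have h2 := norm_le_zero_iff.1 h1
      rw [map_sub] at h2
      push_cast at h2
      linear_combination h2
    let F : (H ⊔ AddSubgroup.zmultiples g : AddSubgroup G) →+ ℤ_[p] :=
      AddMonoidHom.mk' (fun x => f (q x).1 + ((q x).2 : ℤ_[p]) * b) (by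
        intro x y
        have := uniq (x + y) ((q x).1 + (q y).1) ((q x).2 + (q y).2) (by
          rw [AddSubgroup.coe_add, AddSubgroup.coe_add, ← hq x, ← hq y, add_smul]
          abel)
        rw [this, map_add]
        push_cast
        ring)
    have hF : ∀ x, F x = f (q x).1 + ((q x).2 : ℤ_[p]) * b := fun x => rfl
    refine ⟨F, ?_, ?_, ?_⟩
    · intro x y
      rw [← map_sub, hF]
      refine (key _ _).trans (le_of_eq ?_)
      rw [hq, ← ht.translation _ _ (y : G)]
      simp
    · intro h hh
      rw [hF, uniq _ ⟨h, hh⟩ 0 (by simp)]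
      simp
    · rw [hF, uniq _ 0 1 (by simp)]
      simp
end

section
/- (p-adic Hahn–Banach theorem.) Let p be a prime, let G be a torsion-free abelian group, let t be a p-adic sublinear pseudometric on G, let H be a subgroup of G, and let f : H → ℤ_p be a t-contractive homomorphism. Then there exists a group homomorphism f' : G → ℤ_p extending f (f'(h) = f(h) for all h ∈ H) such that ‖f'(g₁) − f'(g₂)‖ ≤ t(g₁, g₂) for all g₁, g₂ ∈ G. -/
/-- One-step extension: find the value of the extension at `g`. -/
theorem exists_value (p : ℕ) [Fact p.Prime] {G : Type*} [AddCommGroup G] (N : G → ℝ)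
    (N0 : ∀ g, 0 ≤ N g) (Nsub : ∀ a b, N (a - b) ≤ max (N a) (N b))
    (Nsm : ∀ (n : ℤ) g, N (n • g) = ‖(n : ℚ_[p])‖ * N g)
    (Γ : AddSubgroup (G × ℚ_[p])) (hΓ : ∀ x ∈ Γ, ‖x.2‖ ≤ N x.1) (g : G) :
    ∃ a : ℚ_[p], ∀ x ∈ Γ, ∀ n : ℤ, ‖x.2 + n • a‖ ≤ N (x.1 + n • g) := by
  let ι := Γ × {n : ℤ // n ≠ 0}
  have hn0 : ∀ n : {n : ℤ // n ≠ 0}, ((n : ℤ) : ℚ_[p]) ≠ 0 := fun n => by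
    exact_mod_cast n.2
  let c : ι → ℚ_[p] := fun i => -(i.1.1.2 / ((i.2 : ℤ) : ℚ_[p]))
  let r : ι → ℝ := fun i => N (i.1.1.1 + (i.2 : ℤ) • g) / ‖((i.2 : ℤ) : ℚ_[p])‖
  have hr : ∀ i, 0 ≤ r i := fun i => div_nonneg (N0 _) (norm_nonneg _)
  have hdist : ∀ i j, dist (c i) (c j) ≤ max (r i) (r j) := by
    rintro ⟨⟨⟨h, y⟩, hx⟩, n⟩ ⟨⟨⟨h', y'⟩, hx'⟩, n'⟩
    have hn := hn0 n
    have hn' := hn0 n'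
    obtain ⟨n, hnz⟩ := n
    obtain ⟨n', hnz'⟩ := n'
    simp only [c, r] at *
    have pn : 0 < ‖(n : ℚ_[p])‖ := norm_pos_iff.2 hn
    have pn' : 0 < ‖(n' : ℚ_[p])‖ := norm_pos_iff.2 hn'
    have h1 := hΓ _ (Γ.sub_mem (Γ.zsmul_mem hx n') (Γ.zsmul_mem hx' n))
    simp only [Prod.smul_mk, Prod.mk_sub_mk, zsmul_eq_mul] at h1
    have e : n' • h - n • h' = n' • (h + n • g) - n • (h' + n' • g) := by
      simp only [smul_add, smul_smul, mul_comm n n']; abel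
    rw [e] at h1
    have h2 := h1.trans (Nsub _ _)
    rw [Nsm, Nsm] at h2
    rw [dist_comm, dist_eq_norm]
    have e2 : -(y' / (n' : ℚ_[p])) - -(y / (n : ℚ_[p])) = (n' * y - n * y') / (n * n') := by
      field_simp; ring
    rw [e2, norm_div, norm_mul, div_le_iff₀ (by positivity)]
    refine h2.trans (le_of_eq ?_)
    rw [max_mul_of_nonneg _ _ (by positivity)]
    congr 1 <;> field_simp
  have key : (⋂ i, Metric.closedBall (c i) (r i)).Nonempty := by
    have : Nonempty ι := ⟨(0, ⟨1, one_ne_zero⟩)⟩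
    apply IsCompact.nonempty_iInter_of_directed_nonempty_isCompact_isClosed
    · have aux : ∀ i j, r i ≤ r j →
          Metric.closedBall (c i) (r i) ⊆ Metric.closedBall (c j) (r j) := by
        intro i j hij x hx
        rw [Metric.mem_closedBall] at hx ⊢
        refine (dist_triangle_max x (c i) (c j)).trans (max_le (hx.trans hij) ?_)
        exact (hdist i j).trans (max_le hij le_rfl)
      intro i j
      rcases le_total (r i) (r j) with h | h
      · exact ⟨i, subset_rfl, aux _ _ h⟩
      · exact ⟨j, aux _ _ h, subset_rfl⟩
    · exact fun i => ⟨c i, Metric.mem_closedBall_self (hr i)⟩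
    · exact fun i => isCompact_closedBall _ _
    · exact fun i => Metric.isClosed_closedBall
  obtain ⟨a, ha⟩ := key
  refine ⟨a, fun x hx n => ?_⟩
  by_cases hn : n = 0
  · subst hn; simpa using hΓ x hx
  have h := Set.mem_iInter.1 ha (⟨x, hx⟩, ⟨n, hn⟩)
  have hnn : (n : ℚ_[p]) ≠ 0 := by exact_mod_cast hn
  have pn : 0 < ‖(n : ℚ_[p])‖ := norm_pos_iff.2 hnn
  simp only [c, r, Metric.mem_closedBall, dist_eq_norm] at h
  rw [le_div_iff₀ pn, ← norm_mul] at h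
  have e : x.2 + n • a = (a - -(x.2 / (n : ℚ_[p]))) * n := by
    rw [zsmul_eq_mul]
    field_simp
    ring
  rw [e]
  exact h

/-- The `p`-adic Hahn–Banach theorem: every `t`-contractive functional on a
subgroup of `G` extends to a `t`-contractive `p`-adic functional on all of `G`. -/
theorem stmt5 (p : ℕ) [Fact p.Prime] (G : Type*) [AddCommGroup G]
    [NoZeroSMulDivisors ℤ G] (t : G → G → ℝ) (ht : IsPadicSublinear p t)
    (H : AddSubgroup G) (f : H →+ ℤ_[p])
    (hf : ∀ h₁ h₂ : H, ‖f h₁ - f h₂‖ ≤ t (h₁ : G) (h₂ : G)) :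
    ∃ f' : G →+ ℤ_[p],
      (∀ (h : G) (hh : h ∈ H), f' h = f ⟨h, hh⟩) ∧
      ∀ g₁ g₂ : G, ‖f' g₁ - f' g₂‖ ≤ t g₁ g₂ := by
  set N : G → ℝ := fun g => t g 0 with hN
  have tN : ∀ a b, t a b = N (a - b) := fun a b => by
    have := ht.translation (a - b) 0 b
    simpa using this
  have N0 : ∀ g, 0 ≤ N g := fun g => ht.nonneg _ _
  have Nsub : ∀ a b, N (a - b) ≤ max (N a) (N b) := fun a b => by
    rw [← tN]
    have := ht.strong a b 0
    rwa [ht.symm 0 b] at this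
  have Nsm : ∀ (n : ℤ) g, N (n • g) = ‖(n : ℚ_[p])‖ * N g := fun n g => by
    have := ht.scalable n g 0
    rw [smul_zero, PadicInt.norm_def] at this
    simpa using this
  have Nz : N 0 = 0 := ht.refl 0
  have N1 : ∀ g, N g ≤ 1 := fun g => by
    refine (ht.dominated g 0).trans (csInf_le ⟨0, ?_⟩ ⟨0, ⟨g, by simp⟩, by simp⟩)
    rintro r ⟨k, -, rfl⟩
    positivity
  let φ : H →+ G × ℚ_[p] :=
    H.subtype.prod ((PadicInt.Coe.ringHom (p := p)).toAddMonoidHom.comp f)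
  have hφ : φ.range ∈ {Γ : AddSubgroup (G × ℚ_[p]) | ∀ x ∈ Γ, ‖x.2‖ ≤ N x.1} := by
    rintro _ ⟨h, rfl⟩
    have := hf h 0
    rw [map_zero, sub_zero, PadicInt.norm_def] at this
    exact this
  obtain ⟨Γ, hle, hmax⟩ := zorn_le_nonempty₀
    {Γ : AddSubgroup (G × ℚ_[p]) | ∀ x ∈ Γ, ‖x.2‖ ≤ N x.1} (by
      intro C hC hchain y hy
      refine ⟨sSup C, ?_, fun z hz => le_sSup hz⟩
      intro x hx
      obtain ⟨s, hs, hxs⟩ := (AddSubgroup.mem_sSup_of_directedOn ⟨y, hy⟩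
        hchain.directedOn).1 hx
      exact hC hs x hxs) _ hφ
  have hΓ : ∀ x ∈ Γ, ‖x.2‖ ≤ N x.1 := hmax.prop
  have surj : ∀ g, ∃ a, (g, a) ∈ Γ := by
    intro g
    obtain ⟨a, ha⟩ := exists_value p N N0 Nsub Nsm Γ hΓ g
    refine ⟨a, ?_⟩
    have hm : Γ ⊔ AddSubgroup.zmultiples (g, a) ∈
        {Γ : AddSubgroup (G × ℚ_[p]) | ∀ x ∈ Γ, ‖x.2‖ ≤ N x.1} := by
      intro x hx
      obtain ⟨y, hy, z, hz, rfl⟩ := AddSubgroup.mem_sup.1 hx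
      obtain ⟨n, rfl⟩ := AddSubgroup.mem_zmultiples_iff.1 hz
      exact ha y hy n
    exact hmax.le_of_ge hm le_sup_left
      ((le_sup_right : _ ≤ Γ ⊔ AddSubgroup.zmultiples (g, a))
        (AddSubgroup.mem_zmultiples _))
  have uniq : ∀ g a b, (g, a) ∈ Γ → (g, b) ∈ Γ → a = b := by
    intro g a b h1 h2
    have := hΓ _ (Γ.sub_mem h1 h2)
    simp only [Prod.mk_sub_mk, sub_self, Nz] at this
    exact sub_eq_zero.1 (norm_le_zero_iff.1 this)
  choose F hF using surj
  have hb : ∀ g, ‖F g‖ ≤ N g := fun g => hΓ _ (hF g)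
  let f' : G →+ ℤ_[p] := AddMonoidHom.mk' (fun g => ⟨F g, (hb g).trans (N1 g)⟩) (by
    intro a b
    apply Subtype.ext
    exact uniq _ _ _ (hF _) (Γ.add_mem (hF a) (hF b)))
  refine ⟨f', fun h hh => ?_, fun a b => ?_⟩
  · apply Subtype.ext
    exact uniq _ _ _ (hF h) (hle ⟨⟨h, hh⟩, rfl⟩)
  · rw [← map_sub, tN]
    exact hb (a - b)
end

section
/- Let p be a prime, let G be a torsion-free abelian group, and let g ∈ G. Then there exists a p-adic functional f : G → ℤ_p such that ‖f(g)‖ = d_p(g, 0). -/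
lemma pdual_level (p : ℕ) [Fact p.Prime] (G : Type*) [AddCommGroup G]
    [NoZeroSMulDivisors ℤ G] (x : G) (hx : ∀ z : G, p • z ≠ x) (n : ℕ) :
    ∃ a : G → ℤ, ¬ (p : ℤ) ∣ a x ∧
      ∀ y z, (p : ℤ) ^ (n + 1) ∣ a (y + z) - a y - a z := by
  have hp : p.Prime := Fact.out
  have hp0 : (p : ℚ) ≠ 0 := by exact_mod_cast hp.ne_zero
  let N : AddSubgroup G := (nsmulAddMonoidHom (α := G) (p ^ (n + 1))).range
  have hne : ((p ^ n • x : G) : G ⧸ N) ≠ 0 := by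
    intro h
    rw [QuotientAddGroup.eq_zero_iff] at h
    obtain ⟨z, hz⟩ := h
    have hz' : p ^ (n + 1) • z = p ^ n • x := hz
    apply hx z
    have h0 : ((p : ℤ) ^ n) • (p • z - x) = 0 := by
      have e : ((p : ℤ) ^ n) • (p • z - x) = p ^ n • (p • z - x) := by
        rw [← natCast_zsmul _ (p ^ n), Nat.cast_pow]
      rw [e, smul_sub, smul_smul, ← pow_succ, hz', sub_self]
    rcases smul_eq_zero.mp h0 with h | h
    · exact absurd h (pow_ne_zero _ (by exact_mod_cast hp.ne_zero))
    · exact sub_eq_zero.mp h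
  obtain ⟨c, hc⟩ := CharacterModule.exists_character_apply_ne_zero_of_ne_zero hne
  have key : ∀ y : G, ∃ a : ℤ,
      c (y : G ⧸ N) = (((a : ℚ) / (p : ℚ) ^ (n + 1) : ℚ) : AddCircle (1 : ℚ)) := by
    intro y
    obtain ⟨q, hq⟩ := QuotientAddGroup.mk_surjective (c (y : G ⧸ N))
    have h1 : p ^ (n + 1) • c (y : G ⧸ N) = 0 := by
      rw [← map_nsmul, ← QuotientAddGroup.mk_nsmul]
      have : ((p ^ (n + 1) • y : G) : G ⧸ N) = 0 :=
        (QuotientAddGroup.eq_zero_iff _).mpr ⟨y, rfl⟩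
      rw [this, map_zero]
    rw [← hq, ← QuotientAddGroup.mk_nsmul] at h1
    obtain ⟨m, hm⟩ := (AddCircle.coe_eq_zero_iff (1 : ℚ)).mp h1
    refine ⟨m, ?_⟩
    rw [← hq]
    have : q = (m : ℚ) / (p : ℚ) ^ (n + 1) := by
      rw [eq_div_iff (pow_ne_zero _ hp0)]
      simp only [zsmul_eq_mul, nsmul_eq_mul, mul_one] at hm
      push_cast at hm
      rw [hm, mul_comm]
    rw [← this]
  choose a ha using key
  refine ⟨a, ?_, ?_⟩
  · rintro ⟨b, hb⟩
    apply hc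
    rw [QuotientAddGroup.mk_nsmul, map_nsmul, ha, hb, ← AddCircle.coe_nsmul,
      AddCircle.coe_eq_zero_iff]
    refine ⟨b, ?_⟩
    simp only [zsmul_eq_mul, nsmul_eq_mul, mul_one]
    push_cast
    field_simp
    ring
  · intro y z
    have h := ha (y + z)
    rw [QuotientAddGroup.mk_add, map_add, ha y, ha z, ← AddCircle.coe_add, eq_comm,
      ← sub_eq_zero, ← AddCircle.coe_sub, AddCircle.coe_eq_zero_iff] at h
    obtain ⟨m, hm⟩ := h
    refine ⟨m, ?_⟩
    simp only [zsmul_eq_mul, mul_one] at hm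
    field_simp at hm
    have : ((a (y + z) - a y - a z : ℤ) : ℚ) = ((p : ℤ) ^ (n + 1) * m : ℤ) := by
      push_cast
      linarith
    exact_mod_cast this

lemma pdual_unit (p : ℕ) [Fact p.Prime] (G : Type*) [AddCommGroup G]
    [NoZeroSMulDivisors ℤ G] (x : G) (hx : ∀ z : G, p • z ≠ x) :
    ∃ f : G →+ ℤ_[p], ‖f x‖ = 1 := by
  have hp : p.Prime := Fact.out
  let C : ℕ → Set (G → ℤ_[p]) := fun n =>
    {f | ‖f x‖ = 1 ∧ ∀ y z, ‖f (y + z) - f y - f z‖ ≤ (p : ℝ) ^ (-((n + 1 : ℕ) : ℤ))}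
  have hcl : ∀ n, IsClosed (C n) := by
    intro n
    apply IsClosed.inter
    · exact isClosed_eq (by fun_prop) continuous_const
    · have e : {f : G → ℤ_[p] | ∀ y z,
          ‖f (y + z) - f y - f z‖ ≤ (p : ℝ) ^ (-((n + 1 : ℕ) : ℤ))} =
          ⋂ y, ⋂ z, {f | ‖f (y + z) - f y - f z‖ ≤ (p : ℝ) ^ (-((n + 1 : ℕ) : ℤ))} := by
        ext f
        simp only [Set.mem_iInter, Set.mem_ofPred_eq]
      change IsClosed {f : G → ℤ_[p] | ∀ y z,
          ‖f (y + z) - f y - f z‖ ≤ (p : ℝ) ^ (-((n + 1 : ℕ) : ℤ))}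
      rw [e]
      exact isClosed_iInter fun y => isClosed_iInter fun z =>
        isClosed_le (by fun_prop) continuous_const
  have hp1 : (1 : ℝ) < p := by exact_mod_cast hp.one_lt
  obtain ⟨f, hf⟩ := IsCompact.nonempty_iInter_of_sequence_nonempty_isCompact_isClosed C
    (by
      rintro n f ⟨h1, h2⟩
      refine ⟨h1, fun y z => (h2 y z).trans ?_⟩
      apply zpow_le_zpow_right₀ hp1.le
      push_cast; linarith)
    (by
      intro n
      obtain ⟨a, h1, h2⟩ := pdual_level p G x hx n
      refine ⟨fun y => (a y : ℤ_[p]), ?_, ?_⟩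
      · have := PadicInt.norm_int_lt_one_iff_dvd (p := p) (a x)
        exact le_antisymm (PadicInt.norm_le_one _) (not_lt.mp fun h => h1 (this.mp h))
      · intro y z
        have := (PadicInt.norm_int_le_pow_iff_dvd (p := p) (k := a (y + z) - a y - a z) (n := n + 1)).mpr
          (by exact_mod_cast h2 y z)
        push_cast at this ⊢
        exact this)
    (hcl 0).isCompact hcl
  rw [Set.mem_iInter] at hf
  have hadd : ∀ y z, f (y + z) = f y + f z := by
    intro y z
    have h0 : ‖f (y + z) - f y - f z‖ ≤ 0 := by
      have ht : Filter.Tendsto (fun n : ℕ => ((p : ℝ)⁻¹) ^ (n + 1)) Filter.atTop (nhds 0) :=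
        (tendsto_pow_atTop_nhds_zero_of_lt_one (by positivity)
          (inv_lt_one_of_one_lt₀ hp1)).comp (Filter.tendsto_add_atTop_nat 1)
      refine ge_of_tendsto' ht fun n => ?_
      have := (hf n).2 y z
      rwa [zpow_neg, zpow_natCast, ← inv_pow] at this
    have := norm_le_zero_iff.mp h0
    rw [sub_sub, sub_eq_zero] at this
    exact this
  exact ⟨AddMonoidHom.mk' f hadd, (hf 0).1⟩

theorem stmt6 (p : ℕ) [Fact p.Prime] (G : Type*) [AddCommGroup G]
    [NoZeroSMulDivisors ℤ G] (g : G) :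
    ∃ f : G →+ ℤ_[p], ‖f g‖ = pdist p g 0 := by
  have hp : p.Prime := Fact.out
  have hp1 : (1 : ℝ) < p := by exact_mod_cast hp.one_lt
  unfold pdist
  rw [sub_zero]
  by_cases hall : ∀ k, pDvd p k g
  · refine ⟨0, ?_⟩
    rw [AddMonoidHom.zero_apply, norm_zero]
    have hlb : (0 : ℝ) ∈ lowerBounds {r : ℝ | ∃ k : ℕ, pDvd p k g ∧ r = (p : ℝ) ^ (-(k : ℤ))} := by
      rintro r ⟨k, -, rfl⟩
      positivity
    refine le_antisymm (le_csInf ⟨_, 0, hall 0, rfl⟩ hlb) ?_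
    have ht : Filter.Tendsto (fun n : ℕ => ((p : ℝ)⁻¹) ^ n) Filter.atTop (nhds 0) :=
      tendsto_pow_atTop_nhds_zero_of_lt_one (by positivity) (inv_lt_one_of_one_lt₀ hp1)
    refine ge_of_tendsto' ht fun n => csInf_le ⟨0, hlb⟩ ⟨n, hall n, ?_⟩
    rw [zpow_neg, zpow_natCast, inv_pow]
  · push Not at hall
    classical
    have hspec := Nat.find_spec hall
    have hmin : ∀ m, m < Nat.find hall → pDvd p m g := fun m hm =>
      not_not.mp (Nat.find_min hall hm)
    generalize Nat.find hall = K at hspec hmin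
    obtain _ | k := K
    · exact absurd (show pDvd p 0 g from ⟨g, by simp⟩) hspec
    obtain ⟨x, hx⟩ := hmin k (Nat.lt_succ_self k)
    obtain ⟨f, hf⟩ := pdual_unit p G x (by
      rintro z rfl
      exact hspec ⟨z, by rw [pow_succ, mul_smul, hx]⟩)
    refine ⟨f, ?_⟩
    have hfg : ‖f g‖ = (p : ℝ) ^ (-(k : ℤ)) := by
      rw [← hx, map_nsmul, nsmul_eq_mul, norm_mul, hf, mul_one]
      push_cast
      exact PadicInt.norm_p_pow k
    rw [hfg]
    symm
    apply IsLeast.csInf_eq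
    refine ⟨⟨k, ⟨x, hx⟩, rfl⟩, ?_⟩
    rintro r ⟨m, ⟨y, hy⟩, rfl⟩
    apply zpow_le_zpow_right₀ hp1.le
    have : m ≤ k := by
      by_contra hlt
      push Not at hlt
      obtain ⟨d, rfl⟩ := Nat.exists_eq_add_of_le (Nat.succ_le_of_lt hlt)
      exact hspec ⟨p ^ d • y, by rw [smul_smul, ← pow_add]; exact hy⟩
    omega
end

section
/- Let p be a prime and let G be a torsion-free abelian group that is not p-divisible (i.e., there exists g ∈ G that is not divisible by p in G). Then there exists a nonzero p-adic functional on G, that is, a group homomorphism f : G → ℤ_p with f ≠ 0. -/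
theorem exists_basis_mod_aux.{u} (p : ℕ) [Fact p.Prime] (G V : Type u) [AddCommGroup G]
    [AddCommGroup V] [Module (ZMod p) V] (q : G →+ V) (hq : Function.Surjective q)
    (hker : ∀ x : G, q x = 0 ↔ ∃ y, p • y = x)
    (hG : ∃ g : G, ¬∃ x : G, p • x = g) :
    ∃ (ι : Type u) (b : ι → G), Nonempty ι ∧
      (∀ g : G, ∃ (l : ι →₀ ℤ) (h : G), g = Finsupp.linearCombination ℤ b l + p • h) ∧
      (∀ (l : ι →₀ ℤ) (h : G), Finsupp.linearCombination ℤ b l = p • h → ∀ i, (p : ℤ) ∣ l i) := by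
  classical
  obtain ⟨g₀, hg₀⟩ := hG
  obtain ⟨ι, ⟨B⟩⟩ : ∃ ι : Type u, Nonempty (Module.Basis ι (ZMod p) V) :=
    ⟨_, ⟨Module.Basis.ofVectorSpace (ZMod p) V⟩⟩
  choose b hb using fun i => hq (B i)
  have key : ∀ l : ι →₀ ℤ,
      B.repr (q (Finsupp.linearCombination ℤ b l))
        = l.mapRange (fun n : ℤ => (n : ZMod p)) (by simp) := by
    intro l
    induction l using Finsupp.induction_linear with
    | zero => simp
    | add f g hf hg =>
      rw [map_add, map_add, map_add, hf, hg]
      ext i; simp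
    | single i n =>
      rw [Finsupp.linearCombination_single, map_zsmul, hb, map_zsmul,
        Module.Basis.repr_self]
      ext j
      by_cases hij : i = j <;> simp [Finsupp.single_apply, hij]
  refine ⟨ι, b, ?_, ?_, ?_⟩
  · by_contra hne
    rw [not_nonempty_iff] at hne
    apply hg₀
    rw [← hker]
    apply B.repr.injective
    exact Subsingleton.elim _ _
  · intro g
    let l := (B.repr (q g)).mapRange (fun z : ZMod p => (z.val : ℤ)) (by simp)
    have h1 : q (g - Finsupp.linearCombination ℤ b l) = 0 := by
      rw [map_sub, sub_eq_zero]
      apply B.repr.injective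
      rw [key]
      ext i; simp [l]
    obtain ⟨y, hy⟩ := (hker _).1 h1
    exact ⟨l, y, by rw [hy]; abel⟩
  · intro l h hl i
    have h1 : q (Finsupp.linearCombination ℤ b l) = 0 := (hker _).2 ⟨h, hl.symm⟩
    have h2 := key l
    rw [h1, map_zero] at h2
    have h3 := DFunLike.congr_fun h2 i
    simp only [Finsupp.coe_zero, Pi.zero_apply, Finsupp.mapRange_apply] at h3
    exact (ZMod.intCast_zmod_eq_zero_iff_dvd _ _).1 h3.symm

theorem exists_basis_mod.{u} (p : ℕ) [Fact p.Prime] (G : Type u) [AddCommGroup G]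
    (hG : ∃ g : G, ¬∃ x : G, p • x = g) :
    ∃ (ι : Type u) (b : ι → G), Nonempty ι ∧
      (∀ g : G, ∃ (l : ι →₀ ℤ) (h : G), g = Finsupp.linearCombination ℤ b l + p • h) ∧
      (∀ (l : ι →₀ ℤ) (h : G), Finsupp.linearCombination ℤ b l = p • h → ∀ i, (p : ℤ) ∣ l i) := by
  let H : AddSubgroup G := (nsmulAddMonoidHom (α := G) p).range
  let M : Module (ZMod p) (G ⧸ H) := AddCommGroup.zmodModule (n := p) (by
    intro x
    obtain ⟨x, rfl⟩ := QuotientAddGroup.mk_surjective x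
    rw [← QuotientAddGroup.mk_nsmul, QuotientAddGroup.eq_zero_iff]
    exact ⟨x, rfl⟩)
  exact @exists_basis_mod_aux p _ G (G ⧸ H) _ _ M (QuotientAddGroup.mk' H)
    QuotientAddGroup.mk_surjective (fun x => QuotientAddGroup.eq_zero_iff x) hG

theorem exists_padic_limit (p : ℕ) [Fact p.Prime] (a : ℕ → ℤ)
    (h : ∀ m n, m ≤ n → ((p : ℤ) ^ m) ∣ a m - a n) :
    ∃ z : ℤ_[p], ∀ n, (p : ℤ_[p]) ^ n ∣ z - a n := by
  have key : ∀ (n : ℕ) (x y : ℤ_[p]),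
      x ≡ y [SMOD (IsLocalRing.maximalIdeal ℤ_[p] ^ n • ⊤ : Submodule ℤ_[p] ℤ_[p])] ↔
        (p : ℤ_[p]) ^ n ∣ x - y := by
    intro n x y
    rw [SModEq.sub_mem, PadicInt.maximalIdeal_eq_span_p, Ideal.span_singleton_pow,
      smul_eq_mul, Ideal.mul_top, Ideal.mem_span_singleton]
  obtain ⟨z, hz⟩ := IsPrecomplete.prec
    (inferInstance : IsPrecomplete (IsLocalRing.maximalIdeal ℤ_[p]) ℤ_[p])
    (f := fun n => (a n : ℤ_[p])) (by
      intro m n hmn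
      rw [key]
      have := map_dvd (Int.castRingHom ℤ_[p]) (h m n hmn)
      simpa using this)
  refine ⟨z, fun n => ?_⟩
  have := (key _ _ _).1 (hz n)
  rwa [dvd_sub_comm] at this

theorem stmt7 (p : ℕ) [Fact p.Prime] (G : Type*) [AddCommGroup G]
    [NoZeroSMulDivisors ℤ G] (hG : ∃ g : G, ¬∃ x : G, p • x = g) :
    ∃ f : G →+ ℤ_[p], f ≠ 0 := by
  classical
  obtain ⟨ι, b, ⟨i⟩, hA, hB⟩ := exists_basis_mod p G hG
  have hp : (p : ℤ) ≠ 0 := by exact_mod_cast (Fact.out : p.Prime).ne_zero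
  have hAn : ∀ (n : ℕ) (g : G), ∃ (l : ι →₀ ℤ) (h : G),
      g = Finsupp.linearCombination ℤ b l + ((p : ℤ) ^ n) • h := by
    intro n
    induction n with
    | zero => intro g; exact ⟨0, g, by simp⟩
    | succ n ih =>
      intro g
      obtain ⟨l, h, hl⟩ := ih g
      obtain ⟨l', h', hl'⟩ := hA h
      refine ⟨l + ((p : ℤ) ^ n) • l', h', ?_⟩
      rw [hl, hl', map_add, map_smul, smul_add, pow_succ, mul_smul, natCast_zsmul, add_assoc]
  have hBn : ∀ (n : ℕ) (l : ι →₀ ℤ) (h : G),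
      Finsupp.linearCombination ℤ b l = ((p : ℤ) ^ n) • h → ((p : ℤ) ^ n) ∣ l i := by
    intro n
    induction n with
    | zero => intro l h _; simp
    | succ n ih =>
      intro l h hl
      have h1 := hB l (((p : ℤ) ^ n) • h) (by
        rw [hl, pow_succ', mul_smul, natCast_zsmul])
      let l' : ι →₀ ℤ := l.mapRange (fun x => x / (p : ℤ)) (by simp)
      have hll : l = (p : ℤ) • l' := by
        ext j
        simp [l', Int.mul_ediv_cancel' (h1 j)]
      have h2 : (p : ℤ) • (Finsupp.linearCombination ℤ b l' - ((p : ℤ) ^ n) • h) = 0 := by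
        rw [smul_sub, ← map_smul, ← hll, hl, pow_succ', mul_smul, sub_self]
      have h3 := (smul_eq_zero.1 h2).resolve_left hp
      have h4 := ih l' h (sub_eq_zero.1 h3)
      rw [hll, Finsupp.smul_apply, smul_eq_mul, pow_succ']
      exact mul_dvd_mul_left _ h4
  have hcmp : ∀ (n : ℕ) (l l' : ι →₀ ℤ) (h h' : G),
      Finsupp.linearCombination ℤ b l + ((p : ℤ) ^ n) • h =
        Finsupp.linearCombination ℤ b l' + ((p : ℤ) ^ n) • h' →
      ((p : ℤ) ^ n) ∣ l i - l' i := by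
    intro n l l' h h' e
    refine hBn n (l - l') (h' - h) ?_
    rw [map_sub, smul_sub, sub_eq_sub_iff_add_eq_add, e, add_comm]
  have hex : ∀ g : G, ∃ z : ℤ_[p], ∀ (n : ℕ) (l : ι →₀ ℤ) (h : G),
      g = Finsupp.linearCombination ℤ b l + ((p : ℤ) ^ n) • h →
      (p : ℤ_[p]) ^ n ∣ z - (l i : ℤ) := by
    intro g
    choose l h hl using fun n => hAn n g
    obtain ⟨z, hz⟩ := exists_padic_limit p (fun n => l n i) (by
      intro m n hmn
      obtain ⟨k, rfl⟩ := Nat.exists_eq_add_of_le hmn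
      refine hcmp m (l m) (l (m + k)) (h m) (((p : ℤ) ^ k) • h (m + k)) ?_
      rw [← hl m, ← mul_smul, ← pow_add, ← hl (m + k)])
    refine ⟨z, fun n l' h' e => ?_⟩
    have h1 := map_dvd (Int.castRingHom ℤ_[p]) (hcmp n (l n) l' (h n) h' ((hl n).symm.trans e))
    have h2 := dvd_add (hz n) (by simpa using h1)
    simpa using h2
  choose f hf using hex
  have huniq : ∀ x y : ℤ_[p], (∀ n : ℕ, (p : ℤ_[p]) ^ n ∣ x - y) → x = y := by
    intro x y hxy
    by_contra hne
    have hd : x - y ≠ 0 := sub_ne_zero.2 hne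
    have hfin : FiniteMultiplicity (p : ℤ_[p]) (x - y) :=
      FiniteMultiplicity.of_not_isUnit PadicInt.prime_p.not_isUnit hd
    obtain ⟨n, hn⟩ := hfin
    exact hn (hxy _)
  refine ⟨AddMonoidHom.mk' f ?_, ?_⟩
  · intro x y
    apply huniq
    intro n
    obtain ⟨l, h, hl⟩ := hAn n x
    obtain ⟨l', h', hl'⟩ := hAn n y
    have h1 := hf x n l h hl
    have h2 := hf y n l' h' hl'
    have h3 := hf (x + y) n (l + l') (h + h') (by
      rw [map_add, smul_add, add_add_add_comm, ← hl, ← hl'])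
    have h4 := dvd_sub h3 (dvd_add h1 h2)
    convert h4 using 1
    rw [Finsupp.add_apply]; push_cast; ring
  · intro h0
    have h1 : f (b i) = 0 := DFunLike.congr_fun h0 (b i)
    have h2 := hf (b i) 1 (Finsupp.single i 1) 0 (by simp)
    rw [h1] at h2
    simp only [pow_one, Finsupp.single_eq_same, Int.cast_one, zero_sub, dvd_neg] at h2
    exact PadicInt.prime_p.not_isUnit (isUnit_of_dvd_one h2)
end

section
/- Let p be a prime, let G be a torsion-free abelian group, let H be a pure subgroup of G, and suppose g ∈ G does not lie in the closure of H with respect to the topology induced by the p-adic pseudometric d_p. Then there exists a p-adic functional f : G → ℤ_p such that f(h) = 0 for all h ∈ H but f(g) ≠ 0. -/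
/-- Basis data for a `ZMod p`-vector space quotient of `Q` with kernel `pQ`. -/
theorem aux_basis_gen.{u} (p : ℕ) [Fact p.Prime] (Q V : Type u) [AddCommGroup Q]
    [AddCommGroup V] [Module (ZMod p) V] (π : Q →+ V) (hπ : Function.Surjective π)
    (hker : ∀ q, π q = 0 → ∃ q', q = (p : ℤ) • q') :
    ∃ (ι : Type u) (s : (ι →₀ ℤ) →+ Q) (c : Q →+ (ι →₀ ZMod p)),
      (∀ q, c q = 0 → ∃ q', q = (p : ℤ) • q') ∧
      (∀ m i, c (s m) i = (m i : ZMod p)) ∧ (∀ q, c ((p : ℤ) • q) = 0) := by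
  obtain ⟨ι, ⟨b⟩⟩ : ∃ ι : Type u, Nonempty (Module.Basis ι (ZMod p) V) :=
    ⟨_, ⟨Module.Basis.ofVectorSpace (ZMod p) V⟩⟩
  let c : Q →+ (ι →₀ ZMod p) := b.repr.toLinearMap.toAddMonoidHom.comp π
  choose v hvb using fun i => hπ (b i)
  refine ⟨ι, (Finsupp.linearCombination ℤ v).toAddMonoidHom, c, ?_, ?_, ?_⟩
  · intro q hq
    apply hker
    have : b.repr (π q) = 0 := hq
    simpa using this
  · intro m i
    have hv : ∀ j, c (v j) = Finsupp.single j 1 := by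
      intro j
      change b.repr (π (v j)) = _
      rw [hvb]; simp
    induction m using Finsupp.induction_linear with
    | zero => simp
    | add f g hf hg => rw [map_add, map_add, Finsupp.add_apply, hf, hg]; simp
    | single j a =>
      simp only [LinearMap.toAddMonoidHom_coe, Finsupp.linearCombination_single, map_zsmul, hv]
      by_cases h : j = i
      · subst h; simp
      · simp [h]
  · intro q
    rw [map_zsmul]
    ext i
    simp

/-- Basis data for `Q / pQ`. -/
theorem aux_basis.{u} (p : ℕ) [Fact p.Prime] (Q : Type u) [AddCommGroup Q] :
    ∃ (ι : Type u) (s : (ι →₀ ℤ) →+ Q) (c : Q →+ (ι →₀ ZMod p)),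
      (∀ q, c q = 0 → ∃ q', q = (p : ℤ) • q') ∧
      (∀ m i, c (s m) i = (m i : ZMod p)) ∧ (∀ q, c ((p : ℤ) • q) = 0) := by
  let N : AddSubgroup Q := (zsmulAddGroupHom (p : ℤ) : Q →+ Q).range
  have hN : ∀ x : Q, p • x ∈ N := fun x => ⟨x, by simp⟩
  let _ : Module (ZMod p) (Q ⧸ N) := QuotientAddGroup.zmodModule hN
  refine aux_basis_gen p Q (Q ⧸ N) (QuotientAddGroup.mk' N) (QuotientAddGroup.mk'_surjective N) ?_
  intro q hq
  obtain ⟨y, hy⟩ := (QuotientAddGroup.eq_zero_iff q).1 hq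
  exact ⟨y, by simpa using hy.symm⟩

theorem aux_lim (p : ℕ) [Fact p.Prime] (a : ℕ → ℤ)
    (h : ∀ m n, m ≤ n → (p : ℤ) ^ m ∣ a m - a n) :
    ∃ z : ℤ_[p], ∀ n, (p : ℤ_[p]) ^ n ∣ (a n : ℤ_[p]) - z := by
  have H := IsPrecomplete.prec (I := IsLocalRing.maximalIdeal ℤ_[p]) (M := ℤ_[p]) inferInstance
    (f := fun n => (a n : ℤ_[p]))
  simp only [SModEq.sub_mem, PadicInt.maximalIdeal_eq_span_p, smul_eq_mul, Ideal.mul_top,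
    Ideal.span_singleton_pow, Ideal.mem_span_singleton] at H
  apply H
  intro m n hmn
  have := (PadicInt.pow_p_dvd_int_iff (p := p) m _).2 (h m n hmn)
  simpa using this

theorem aux_haus (p : ℕ) [Fact p.Prime] (z : ℤ_[p])
    (h : ∀ n, (p : ℤ_[p]) ^ n ∣ z) : z = 0 := by
  apply IsHausdorff.haus (I := IsLocalRing.maximalIdeal ℤ_[p]) (M := ℤ_[p]) inferInstance
  simpa only [SModEq.sub_mem, PadicInt.maximalIdeal_eq_span_p, smul_eq_mul, Ideal.mul_top,
    Ideal.span_singleton_pow, Ideal.mem_span_singleton, sub_zero] using h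

theorem aux_main (p : ℕ) [Fact p.Prime] (Q : Type*) [AddCommGroup Q]
    (hQ : ∀ q : Q, (p : ℤ) • q = 0 → q = 0) (x : Q) (hx : ¬ ∃ y, x = (p : ℤ) • y) :
    ∃ f : Q →+ ℤ_[p], f x ≠ 0 := by
  obtain ⟨ι, s, c, hc, hcs, hcp⟩ := aux_basis p Q
  have step : ∀ q, ∃ m q', q = s m + (p : ℤ) • q' := by
    intro q
    let m : ι →₀ ℤ := (c q).mapRange (fun t => (t.val : ℤ)) (by simp)
    obtain ⟨q', hq'⟩ := hc (q - s m) (by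
      rw [map_sub, sub_eq_zero]
      ext i
      rw [hcs]; simp [m])
    exact ⟨m, q', by rw [← hq']; abel⟩
  have ex : ∀ (n : ℕ) q, ∃ m q', q = s m + (p : ℤ) ^ n • q' := by
    intro n
    induction n with
    | zero => intro q; exact ⟨0, q, by simp⟩
    | succ n ih =>
      intro q
      obtain ⟨m, q', h⟩ := ih q
      obtain ⟨m', q'', h'⟩ := step q'
      refine ⟨m + (p : ℤ) ^ n • m', q'', ?_⟩
      rw [h, h', map_add, map_zsmul, smul_add, pow_succ, mul_smul, add_assoc]
  have hp0 : (p : ℤ) ≠ 0 := by exact_mod_cast (Fact.out : p.Prime).ne_zero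
  have inj : ∀ (n : ℕ) m q', s m = (p : ℤ) ^ n • q' → ∀ i, (p : ℤ) ^ n ∣ m i := by
    intro n
    induction n with
    | zero => intro m q' _ i; simp
    | succ n ih =>
      intro m q' h
      rw [pow_succ', mul_smul] at h
      have h1 : ∀ i, (p : ℤ) ∣ m i := by
        intro i
        have := hcs m i
        rw [h, hcp] at this
        exact (ZMod.intCast_zmod_eq_zero_iff_dvd _ _).1 (by simpa using this.symm)
      let m' : ι →₀ ℤ := m.mapRange (fun t => t / p) (by simp)
      have hm : m = (p : ℤ) • m' := by
        ext i
        simp [m', Int.mul_ediv_cancel' (h1 i)]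
      have h2 : s m' = (p : ℤ) ^ n • q' := by
        rw [← sub_eq_zero]
        apply hQ
        rw [smul_sub, ← map_zsmul, ← hm, h, sub_self]
      intro i
      rw [hm, pow_succ']
      exact mul_dvd_mul_left _ (ih m' q' h2 i)
  have hcx : c x ≠ 0 := fun h => hx (hc x h)
  obtain ⟨i, hi⟩ := Finsupp.ne_iff.1 hcx
  let R : Q → ℤ_[p] → Prop := fun q z => ∀ n : ℕ, ∃ m q', q = s m + (p : ℤ) ^ n • q' ∧
    (p : ℤ_[p]) ^ n ∣ (m i : ℤ_[p]) - z
  have Rtot : ∀ q, ∃ z, R q z := by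
    intro q
    choose m q' h using fun n => ex n q
    obtain ⟨z, hz⟩ := aux_lim p (fun n => m n i) (by
      intro k n hkn
      obtain ⟨d, rfl⟩ := Nat.exists_eq_add_of_le hkn
      have := inj k (m k - m (k + d)) ((p : ℤ) ^ d • q' (k + d) - q' k) (by
        have e := (h k).symm.trans (h (k + d))
        rw [map_sub, smul_sub, ← mul_smul, ← pow_add, sub_eq_sub_iff_add_eq_add, e, add_comm]) i
      simpa using this)
    exact ⟨z, fun n => ⟨m n, q' n, h n, hz n⟩⟩
  have Radd : ∀ q r z w, R q z → R r w → R (q + r) (z + w) := by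
    intro q r z w h1 h2 n
    obtain ⟨m, q', e, d⟩ := h1 n
    obtain ⟨m2, q2, e2, d2⟩ := h2 n
    refine ⟨m + m2, q' + q2, ?_, ?_⟩
    · rw [e, e2, map_add, smul_add]; abel
    · have := dvd_add d d2
      convert this using 1
      simp; ring
  have Runi : ∀ q z w, R q z → R q w → z = w := by
    intro q z w h1 h2
    rw [← sub_eq_zero]
    apply aux_haus
    intro n
    obtain ⟨m, q', e, d⟩ := h1 n
    obtain ⟨m2, q2, e2, d2⟩ := h2 n
    have h3 := inj n (m - m2) (q2 - q') (by
      have e := e.symm.trans e2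
      rw [map_sub, smul_sub, sub_eq_sub_iff_add_eq_add, e, add_comm]) i
    have h4 := (PadicInt.pow_p_dvd_int_iff (p := p) n _).2 h3
    have := dvd_add (dvd_sub d2 d) h4
    convert this using 1
    simp; ring
  choose f hf using Rtot
  refine ⟨AddMonoidHom.mk' f fun a b => Runi _ _ _ (hf _) (Radd _ _ _ _ (hf a) (hf b)), ?_⟩
  intro h0
  have h0 : f x = 0 := h0
  obtain ⟨m, q', e, d⟩ := hf x 1
  rw [h0, sub_zero, PadicInt.pow_p_dvd_int_iff, pow_one] at d
  apply hi
  rw [e, map_add, pow_one, hcp, add_zero, hcs]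
  simpa using (ZMod.intCast_zmod_eq_zero_iff_dvd _ _).2 d

theorem stmt8 (p : ℕ) [Fact p.Prime] (G : Type*) [AddCommGroup G]
    [NoZeroSMulDivisors ℤ G] (H : AddSubgroup G) (hH : IsPureSubgroup H)
    (g : G) (hg : g ∉ pClosure p (H : Set G)) :
    ∃ f : G →+ ℤ_[p], (∀ h ∈ H, f h = 0) ∧ f g ≠ 0 := by
  have hp0 : (p : ℤ) ≠ 0 := by exact_mod_cast (Fact.out : p.Prime).ne_zero
  have hQ : ∀ q : G ⧸ H, (p : ℤ) • q = 0 → q = 0 := by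
    intro q
    induction q using QuotientAddGroup.induction_on with
    | H y =>
      intro h
      rw [← QuotientAddGroup.mk_zsmul, QuotientAddGroup.eq_zero_iff] at h
      exact (QuotientAddGroup.eq_zero_iff y).2 (hH p hp0 y h)
  have h1 : ∃ k : ℕ, ¬ ∃ y : G ⧸ H, (g : G ⧸ H) = (p : ℤ) ^ k • y := by
    by_contra! hcon
    apply hg
    intro k
    obtain ⟨y, hy⟩ := hcon k
    obtain ⟨y, rfl⟩ := QuotientAddGroup.mk_surjective y
    refine ⟨g - (p : ℤ) ^ k • y, ?_, y, ?_⟩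
    · have : ((g - (p : ℤ) ^ k • y : G) : G ⧸ H) = 0 := by
        rw [QuotientAddGroup.mk_sub, QuotientAddGroup.mk_zsmul, hy, sub_self]
      exact (QuotientAddGroup.eq_zero_iff _).1 this
    · rw [sub_sub_cancel, ← natCast_zsmul]; push_cast; rfl
  classical
  obtain ⟨k, y, hy, hny⟩ : ∃ (k : ℕ) (y : G ⧸ H), (g : G ⧸ H) = (p : ℤ) ^ k • y ∧
      ¬ ∃ w, y = (p : ℤ) • w := by
    by_contra! hcon
    obtain ⟨k, hk⟩ := h1
    apply hk
    clear hk
    induction k with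
    | zero => exact ⟨g, by simp⟩
    | succ k ih =>
      obtain ⟨y, hy⟩ := ih
      obtain ⟨w, rfl⟩ := hcon k y hy
      exact ⟨w, by rw [hy, pow_succ, mul_smul]⟩
  obtain ⟨f, hf⟩ := aux_main p (G ⧸ H) hQ y hny
  refine ⟨f.comp (QuotientAddGroup.mk' H), ?_, ?_⟩
  · intro h hh
    have : (QuotientAddGroup.mk' H h) = 0 := (QuotientAddGroup.eq_zero_iff h).2 hh
    rw [AddMonoidHom.comp_apply, this, map_zero]
  · have : f.comp (QuotientAddGroup.mk' H) g = f (g : G ⧸ H) := rfl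
    rw [this, hy, map_zsmul, zsmul_eq_mul]
    refine mul_ne_zero ?_ hf
    exact_mod_cast pow_ne_zero k (Fact.out : p.Prime).ne_zero
end

section
/- Let p be a prime, let G be a torsion-free abelian group, let H be a subgroup of G, and suppose m ∈ ℕ is such that p^m • g ∈ H for every g ∈ G (i.e., the order of every element of G/H divides p^m). Then for every g ∈ G with g ∉ H, there exists a p-adic functional f : G → ℤ_p such that ‖f(g)‖ > p^{-m} and ‖f(h)‖ ≤ p^{-m} for all h ∈ H. -/
namespace Stmt9Aux

/-- The subgroup of p-adic integers inside the p-adic numbers. -/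
noncomputable abbrev Zp (p : ℕ) [Fact p.Prime] : AddSubgroup ℚ_[p] := (PadicInt.subring p).toAddSubgroup

lemma mem_Zp (p : ℕ) [Fact p.Prime] (x : ℚ_[p]) : x ∈ Zp p ↔ ‖x‖ ≤ 1 := Iff.rfl

lemma mk_eq_iff (p : ℕ) [Fact p.Prime] (x y : ℚ_[p]) :
    (QuotientAddGroup.mk x : ℚ_[p] ⧸ Zp p) = QuotientAddGroup.mk y ↔ ‖x - y‖ ≤ 1 := by
  rw [eq_comm, QuotientAddGroup.eq, mem_Zp, neg_add_eq_sub]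

lemma baer (p : ℕ) [Fact p.Prime] : Module.Baer ℤ (ℚ_[p] ⧸ Zp p) := by
  let : DivisibleBy ℚ_[p] ℤ := inferInstance
  let : DivisibleBy (ℚ_[p] ⧸ Zp p) ℤ :=
    Function.Surjective.divisibleBy (QuotientAddGroup.mk : ℚ_[p] → ℚ_[p] ⧸ Zp p)
      QuotientAddGroup.mk_surjective fun _ _ => rfl
  exact Module.Baer.of_divisible _

/-- Division by p of homomorphisms out of a torsion-free group. -/
lemma div_hom (p : ℕ) [Fact p.Prime] {G : Type*} [AddCommGroup G]
    [NoZeroSMulDivisors ℤ G] (ψ : G →+ ℚ_[p] ⧸ Zp p) :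
    ∃ ψ' : G →+ ℚ_[p] ⧸ Zp p, ∀ x, p • ψ' x = ψ x := by
  have hp : p ≠ 0 := (Fact.out : p.Prime).ne_zero
  obtain ⟨h, hh⟩ := (baer p).extension_property_addMonoidHom (nsmulAddMonoidHom (α := G) p)
    (by
      rw [injective_iff_map_eq_zero]
      intro a ha
      have ha' : (p : ℤ) • a = 0 := by simpa using ha
      rcases NoZeroSMulDivisors.eq_zero_or_eq_zero_of_smul_eq_zero ha' with h | h
      · exact absurd (by exact_mod_cast h) hp
      · exact h) ψ
  refine ⟨h, fun x => ?_⟩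
  rw [← map_nsmul, ← hh]
  rfl

lemma norm_p_pow (p : ℕ) [Fact p.Prime] (n : ℕ) (x : ℚ_[p]) :
    ‖(p : ℚ_[p]) ^ n * x‖ = ((p : ℝ)⁻¹) ^ n * ‖x‖ := by
  rw [norm_mul, norm_pow, Padic.norm_p]

/-- Every homomorphism to `ℚ_p / ℤ_p` lifts to `ℚ_p`. -/
lemma lift_hom (p : ℕ) [Fact p.Prime] {G : Type*} [AddCommGroup G]
    [NoZeroSMulDivisors ℤ G] (φ : G →+ ℚ_[p] ⧸ Zp p) :
    ∃ F : G →+ ℚ_[p], ∀ x, (QuotientAddGroup.mk (F x) : ℚ_[p] ⧸ Zp p) = φ x := by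
  choose d hd using fun ψ : G →+ ℚ_[p] ⧸ Zp p => div_hom p ψ
  let ψ : ℕ → (G →+ ℚ_[p] ⧸ Zp p) := fun n => d^[n] φ
  have hψ : ∀ n x, p • ψ (n + 1) x = ψ n x := by
    intro n x
    simp only [ψ, Function.iterate_succ_apply']
    exact hd _ x
  choose s hs using fun (n : ℕ) (x : G) => QuotientAddGroup.mk_surjective (s := Zp p) (ψ n x)
  have hp1 : (1 : ℝ) < p := by exact_mod_cast (Fact.out : p.Prime).one_lt
  have hr0 : (0 : ℝ) < (p : ℝ)⁻¹ := by positivity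
  have hr1 : (p : ℝ)⁻¹ < 1 := inv_lt_one_of_one_lt₀ hp1
  let t : G → ℕ → ℚ_[p] := fun x n => (p : ℚ_[p]) ^ n * s n x
  have hstep : ∀ x n, ‖t x (n + 1) - t x n‖ ≤ ((p : ℝ)⁻¹) ^ n := by
    intro x n
    have h1 : ‖(p : ℚ_[p]) * s (n + 1) x - s n x‖ ≤ 1 := by
      rw [← mk_eq_iff, hs, ← hψ, ← hs, ← nsmul_eq_mul]
      rfl
    have h2 : t x (n + 1) - t x n = (p : ℚ_[p]) ^ n * ((p : ℚ_[p]) * s (n + 1) x - s n x) := by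
      simp only [t]; ring
    rw [h2, norm_p_pow]
    exact mul_le_of_le_one_right (by positivity) h1
  have hdiff : ∀ x n k, ‖t x (n + k) - t x n‖ ≤ ((p : ℝ)⁻¹) ^ n := by
    intro x n k
    induction k with
    | zero => simp
    | succ k ih =>
      have : t x (n + (k + 1)) - t x n
          = (t x (n + k + 1) - t x (n + k)) + (t x (n + k) - t x n) := by
        rw [← add_assoc]; ring
      rw [this]
      refine (Padic.nonarchimedean _ _).trans (max_le ((hstep x (n + k)).trans ?_) ih)
      exact pow_le_pow_of_le_one hr0.le hr1.le (by omega)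
  have hlim : ∀ x, ∃ L, Filter.Tendsto (t x) Filter.atTop (nhds L) := by
    intro x
    apply cauchySeq_tendsto_of_complete
    refine cauchySeq_of_le_geometric (p : ℝ)⁻¹ 1 hr1 fun n => ?_
    rw [dist_comm, dist_eq_norm, one_mul]
    exact hstep x n
  choose F hF using hlim
  have hFt : ∀ x n, ‖F x - t x n‖ ≤ ((p : ℝ)⁻¹) ^ n := by
    intro x n
    refine le_of_tendsto ((hF x).sub_const (t x n)).norm ?_
    filter_upwards [Filter.eventually_ge_atTop n] with k hk
    obtain ⟨j, rfl⟩ := Nat.exists_eq_add_of_le hk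
    exact hdiff x n j
  have hadd : ∀ x y, F (x + y) = F x + F y := by
    intro x y
    have hb : ∀ n, ‖F (x + y) - (F x + F y)‖ ≤ ((p : ℝ)⁻¹) ^ n := by
      intro n
      have h1 : ‖s n (x + y) - (s n x + s n y)‖ ≤ 1 := by
        rw [← mk_eq_iff, hs, map_add, ← hs, ← hs]
        rfl
      have h2 : ‖t (x + y) n - (t x n + t y n)‖ ≤ ((p : ℝ)⁻¹) ^ n := by
        have : t (x + y) n - (t x n + t y n)
            = (p : ℚ_[p]) ^ n * (s n (x + y) - (s n x + s n y)) := by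
          simp only [t]; ring
        rw [this, norm_p_pow]
        exact mul_le_of_le_one_right (by positivity) h1
      have h3 : F (x + y) - (F x + F y) = (F (x + y) - t (x + y) n)
          + ((t (x + y) n - (t x n + t y n)) + ((t x n - F x) + (t y n - F y))) := by ring
      rw [h3]
      refine (Padic.nonarchimedean _ _).trans (max_le (hFt _ n) ?_)
      refine (Padic.nonarchimedean _ _).trans (max_le h2 ?_)
      refine (Padic.nonarchimedean _ _).trans (max_le ?_ ?_)
      · rw [norm_sub_rev]; exact hFt _ n
      · rw [norm_sub_rev]; exact hFt _ n
    have h0 : ‖F (x + y) - (F x + F y)‖ ≤ 0 :=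
      ge_of_tendsto' (tendsto_pow_atTop_nhds_zero_of_lt_one hr0.le hr1) hb
    exact sub_eq_zero.1 (norm_le_zero_iff.1 h0)
  refine ⟨AddMonoidHom.mk' F hadd, fun x => ?_⟩
  have h0 : (QuotientAddGroup.mk (s 0 x) : ℚ_[p] ⧸ Zp p) = φ x := hs 0 x
  rw [← h0, mk_eq_iff]
  simpa [t] using hFt x 0

/-- A rational number with p-power denominator and p-adic norm at most one is an integer. -/
lemma int_of_norm (p : ℕ) [Fact p.Prime] (m : ℕ) (q : ℚ) (k : ℤ) (hk : (p : ℚ) ^ m * q = k)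
    (hq : ‖(q : ℚ_[p])‖ ≤ 1) : ∃ j : ℤ, (j : ℚ) = q := by
  have hp : (p : ℚ) ≠ 0 := by exact_mod_cast (Fact.out : p.Prime).ne_zero
  have h1 : ‖((k : ℤ) : ℚ_[p])‖ ≤ (p : ℝ) ^ (-(m : ℤ)) := by
    have : ((k : ℤ) : ℚ_[p]) = (p : ℚ_[p]) ^ m * (q : ℚ_[p]) := by
      have := congrArg (fun z : ℚ => (z : ℚ_[p])) hk
      push_cast at this
      exact this.symm
    rw [this, norm_p_pow, zpow_neg, zpow_natCast, inv_pow]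
    exact mul_le_of_le_one_right (by positivity) hq
  rw [Padic.norm_int_le_pow_iff_dvd] at h1
  obtain ⟨j, rfl⟩ := h1
  refine ⟨j, ?_⟩
  push_cast at hk
  exact (mul_left_cancel₀ (pow_ne_zero m hp) hk).symm

/-- The canonical map `ℚ/ℤ → ℚ_p/ℤ_p`. -/
lemma circle_map (p : ℕ) [Fact p.Prime] : ∃ c : AddCircle (1 : ℚ) →+ ℚ_[p] ⧸ Zp p,
    ∀ q : ℚ, c (q : AddCircle (1 : ℚ)) = QuotientAddGroup.mk (q : ℚ_[p]) := by
  refine ⟨QuotientAddGroup.map _ _ (Rat.castHom ℚ_[p]).toAddMonoidHom ?_, fun q => rfl⟩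
  intro x hx
  obtain ⟨n, rfl⟩ := AddSubgroup.mem_zmultiples_iff.1 hx
  rw [AddSubgroup.mem_comap, mem_Zp]
  simpa using Padic.norm_int_le_one (p := p) n

end Stmt9Aux

open Stmt9Aux in
theorem stmt9 (p : ℕ) [Fact p.Prime] (G : Type*) [AddCommGroup G]
    [NoZeroSMulDivisors ℤ G] (H : AddSubgroup G) (m : ℕ)
    (hm : ∀ g : G, p ^ m • g ∈ H) :
    ∀ g : G, g ∉ H →
      ∃ f : G →+ ℤ_[p],
        (p : ℝ) ^ (-(m : ℤ)) < ‖f g‖ ∧ ∀ h ∈ H, ‖f h‖ ≤ (p : ℝ) ^ (-(m : ℤ)) := by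
  intro g hg
  have hne : (QuotientAddGroup.mk g : G ⧸ H) ≠ 0 := by
    rwa [Ne, QuotientAddGroup.eq_zero_iff]
  obtain ⟨χ', hχ'⟩ := CharacterModule.exists_character_apply_ne_zero_of_ne_zero hne
  let χ : G ⧸ H →+ AddCircle (1 : ℚ) := χ'
  have hχ : χ (QuotientAddGroup.mk g) ≠ 0 := hχ'
  obtain ⟨c, hc⟩ := circle_map p
  obtain ⟨F, hF⟩ := lift_hom p ((c.comp χ).comp (QuotientAddGroup.mk' H))
  have hFH : ∀ h ∈ H, ‖F h‖ ≤ 1 := by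
    intro h hh
    have h1 := hF h
    have h2 : QuotientAddGroup.mk' H h = 0 := (QuotientAddGroup.eq_zero_iff h).2 hh
    rw [AddMonoidHom.comp_apply, h2, map_zero] at h1
    exact (mem_Zp p _).1 ((QuotientAddGroup.eq_zero_iff _).1 h1)
  have hFg : 1 < ‖F g‖ := by
    by_contra hcon
    rw [not_lt] at hcon
    apply hχ
    have h1 : c (χ (QuotientAddGroup.mk g)) = 0 := by
      rw [← (QuotientAddGroup.eq_zero_iff (N := Zp p) (F g)).2 hcon]
      exact (hF g).symm
    obtain ⟨q, hq⟩ := QuotientAddGroup.mk_surjective (χ (QuotientAddGroup.mk g))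
    have hq' : (q : AddCircle (1 : ℚ)) = χ (QuotientAddGroup.mk g) := hq
    rw [← hq', hc] at h1
    have hqn : ‖(q : ℚ_[p])‖ ≤ 1 := (mem_Zp p _).1 ((QuotientAddGroup.eq_zero_iff _).1 h1)
    have h2 : (((p ^ m) • q : ℚ) : AddCircle (1 : ℚ)) = 0 := by
      rw [AddCircle.coe_nsmul, hq', ← map_nsmul, ← QuotientAddGroup.mk_nsmul,
        (QuotientAddGroup.eq_zero_iff _).2 (hm g), map_zero]
    obtain ⟨k, hk⟩ := (AddCircle.coe_eq_zero_iff (1 : ℚ)).1 h2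
    obtain ⟨j, hj⟩ := int_of_norm p m q k (by simpa using hk.symm) hqn
    rw [← hq']
    exact (AddCircle.coe_eq_zero_iff (1 : ℚ)).2 ⟨j, by simpa using hj⟩
  have hint : ∀ x, ‖(p : ℚ_[p]) ^ m * F x‖ ≤ 1 := by
    intro x
    have := hFH _ (hm x)
    rw [map_nsmul, nsmul_eq_mul] at this
    exact_mod_cast this
  have hp0 : (0 : ℝ) < p := by exact_mod_cast (Fact.out : p.Prime).pos
  refine ⟨AddMonoidHom.mk' (fun x => (⟨(p : ℚ_[p]) ^ m * F x, hint x⟩ : ℤ_[p])) ?_, ?_, ?_⟩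
  · intro x y
    apply Subtype.ext
    change (p : ℚ_[p]) ^ m * F (x + y) = (p : ℚ_[p]) ^ m * F x + (p : ℚ_[p]) ^ m * F y
    rw [map_add, mul_add]
  · change _ < ‖(p : ℚ_[p]) ^ m * F g‖
    rw [norm_p_pow, zpow_neg, zpow_natCast, inv_pow]
    exact lt_mul_of_one_lt_right (by positivity) hFg
  · intro h hh
    change ‖(p : ℚ_[p]) ^ m * F h‖ ≤ _
    rw [norm_p_pow, zpow_neg, zpow_natCast, inv_pow]
    exact mul_le_of_le_one_right (by positivity) (hFH h hh)
end

section
/- Let p be a prime and let G be a torsion-free abelian group. Then G is p-simple but not p-divisible if and only if there is, up to multiplication by an element of ℤ_p, a unique nonzero p-adic functional on G; precisely: Hom(G, ℤ_p) contains a nonzero element, and for any two p-adic functionals f₁, f₂ on G, either f₂ = α • f₁ for some α ∈ ℤ_p or f₁ = α • f₂ for some α ∈ ℤ_p. -/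
/-- `G` is `p`-simple if `G_p` is the only proper `p`-ideal of `G`. -/
def IsPSimple (p : ℕ) (G : Type*) [AddCommGroup G] : Prop :=
  ∀ J : AddSubgroup G, IsPIdeal p J → (J : Set G) ≠ Set.univ → (J : Set G) = GpSet p G

open Filter Topology

/-- A compatible sequence of integers has a `p`-adic limit. -/
theorem padic_limit (p : ℕ) [hp : Fact p.Prime] (c : ℕ → ℤ)
    (hc : ∀ n, ((p : ℤ) ^ n) ∣ c (n + 1) - c n) :
    ∃ z : ℤ_[p], ∀ n, (p : ℤ_[p]) ^ n ∣ z - (c n : ℤ_[p]) := by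
  have h := (inferInstance : IsAdicComplete (IsLocalRing.maximalIdeal ℤ_[p]) ℤ_[p])
  have hm : ∀ m n, m ≤ n → ((p : ℤ) ^ m) ∣ c n - c m := by
    intro m n hmn
    induction n, hmn using Nat.le_induction with
    | base => simp
    | succ n hmn ih =>
      have := dvd_add ((pow_dvd_pow (p : ℤ) hmn).trans (hc n)) ih
      simpa using this
  obtain ⟨L, hL⟩ := h.toIsPrecomplete.prec (f := fun n => (c n : ℤ_[p])) (by
    intro m n hmn
    rw [SModEq.sub_mem, PadicInt.maximalIdeal_eq_span_p, Ideal.span_singleton_pow,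
      smul_eq_mul, Ideal.mul_top, Ideal.mem_span_singleton]
    have := map_dvd (Int.castRingHom ℤ_[p]) (hm m n hmn)
    simp only [map_pow, map_sub, map_natCast, eq_intCast] at this
    rw [← dvd_neg]
    simpa using this)
  refine ⟨L, fun n => ?_⟩
  have := hL n
  rw [SModEq.sub_mem, PadicInt.maximalIdeal_eq_span_p, Ideal.span_singleton_pow,
      smul_eq_mul, Ideal.mul_top, Ideal.mem_span_singleton] at this
  rw [← dvd_neg]
  simpa using this

theorem padic_eq_zero (p : ℕ) [hp : Fact p.Prime] (z : ℤ_[p])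
    (h : ∀ n, (p : ℤ_[p]) ^ n ∣ z) : z = 0 := by
  by_contra hz
  have h1 : z = 0 := by
    refine IsHausdorff.haus (I := IsLocalRing.maximalIdeal ℤ_[p]) inferInstance z ?_
    intro n
    rw [SModEq.zero, PadicInt.maximalIdeal_eq_span_p, Ideal.span_singleton_pow,
      smul_eq_mul, Ideal.mul_top, Ideal.mem_span_singleton]
    exact h n
  exact hz h1

theorem padic_int_dvd (p : ℕ) [hp : Fact p.Prime] (n : ℕ) (z : ℤ) (h : (p : ℤ) ^ n ∣ z) :
    (p : ℤ_[p]) ^ n ∣ (z : ℤ_[p]) := by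
  have := map_dvd (Int.castRingHom ℤ_[p]) h
  simpa using this

/-- fractions in `ℚ/ℤ` -/
theorem circ_iff (p : ℕ) [hp : Fact p.Prime] (n : ℕ) (c d : ℤ) :
    (((c : ℚ) / (p : ℚ) ^ n : ℚ) : AddCircle (1 : ℚ)) = (((d : ℚ) / (p : ℚ) ^ n : ℚ) : AddCircle (1 : ℚ))
      ↔ (p : ℤ) ^ n ∣ c - d := by
  have hp0 : (p : ℚ) ^ n ≠ 0 := pow_ne_zero _ (by exact_mod_cast hp.out.ne_zero)
  rw [← sub_eq_zero, ← AddCircle.coe_sub, AddCircle.coe_eq_zero_iff]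
  constructor
  · rintro ⟨k, hk⟩
    refine ⟨k, ?_⟩
    field_simp at hk
    simp at hk
    have : ((c - d : ℤ) : ℚ) = ((p ^ n * k : ℤ) : ℚ) := by push_cast; linarith
    exact_mod_cast this
  · rintro ⟨k, hk⟩
    refine ⟨k, ?_⟩
    have : ((c - d : ℤ) : ℚ) = ((p ^ n * k : ℤ) : ℚ) := by rw [hk]
    push_cast at this
    field_simp
    simp
    linarith

theorem circ_exists (p : ℕ) [hp : Fact p.Prime] (n : ℕ) (t : AddCircle (1 : ℚ))
    (ht : (p ^ n) • t = 0) :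
    ∃ c : ℤ, t = (((c : ℚ) / (p : ℚ) ^ n : ℚ) : AddCircle (1 : ℚ)) := by
  have hp0 : (p : ℚ) ^ n ≠ 0 := pow_ne_zero _ (by exact_mod_cast hp.out.ne_zero)
  induction t using QuotientAddGroup.induction_on with
  | H q =>
    have h2 : (((p ^ n) • q : ℚ) : AddCircle (1 : ℚ)) = 0 := ht
    rw [AddCircle.coe_eq_zero_iff] at h2
    obtain ⟨c, hc⟩ := h2
    refine ⟨c, ?_⟩
    congr 1
    simp at hc
    field_simp
    linarith

theorem exists_functional_aux (p : ℕ) [hp : Fact p.Prime] (A : Type*) [AddCommGroup A]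
    (htf : ∀ x : A, p • x = 0 → x = 0) (a : A) (ha : ¬ ∃ x : A, p • x = a) :
    ∃ f : A →+ ℤ_[p], f a ≠ 0 := by
  let S : Submonoid ℤ := Submonoid.powers (p : ℤ)
  let L := LocalizedModule S A
  let N : AddSubgroup L := (LocalizedModule.mkLinearMap S A).toAddMonoidHom.range
  let P : S := ⟨(p : ℤ), Submonoid.mem_powers _⟩
  let q : ℕ → A → L ⧸ N := fun n b => QuotientAddGroup.mk' N (LocalizedModule.mk b (P ^ n))
  have htf' : ∀ (n : ℕ) (x : A), p ^ n • x = 0 → x = 0 := by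
    intro n
    induction n with
    | zero => intro x hx; simpa using hx
    | succ n ih =>
      intro x hx
      apply htf; apply ih
      rwa [smul_smul, ← pow_succ]
  have hq_add : ∀ n b b', q n (b + b') = q n b + q n b' := by
    intro n b b'
    simp only [q]
    rw [← map_add]
    congr 1
    rw [LocalizedModule.mk_add_mk, ← smul_add, LocalizedModule.mk_cancel_common_left]
  have hq_succ : ∀ n b, p • q (n+1) b = q n b := by
    intro n b
    simp only [q]
    rw [← map_nsmul]
    congr 1
    have h1 : p • LocalizedModule.mk b (P ^ (n+1)) = LocalizedModule.mk (P • b) (P * P ^ n) := by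
      let φ : A →+ L := AddMonoidHom.mk' (fun b => LocalizedModule.mk b (P ^ (n+1))) (by
        intro b b'
        rw [LocalizedModule.mk_add_mk, ← smul_add, LocalizedModule.mk_cancel_common_left])
      have h2 : φ (p • b) = p • φ b := map_nsmul φ p b
      have h3 : P • b = p • b := natCast_zsmul b p
      rw [← pow_succ', h3]
      exact h2.symm
    rw [h1, LocalizedModule.mk_cancel_common_left]
  have hq_zero : ∀ b, q 0 b = 0 := by
    intro b
    simp only [q, pow_zero]
    rw [QuotientAddGroup.mk'_apply, QuotientAddGroup.eq_zero_iff]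
    exact ⟨b, rfl⟩
  have hq_pow : ∀ n b, p ^ n • q n b = 0 := by
    intro n b
    induction n with
    | zero => simpa using hq_zero b
    | succ n ih => rw [pow_succ, mul_smul, hq_succ, ih]
  have hqa : q 1 a ≠ 0 := by
    intro h
    simp only [q, pow_one] at h
    rw [QuotientAddGroup.mk'_apply, QuotientAddGroup.eq_zero_iff] at h
    obtain ⟨x, hx⟩ := h
    change LocalizedModule.mk x 1 = _ at hx
    rw [LocalizedModule.mk_eq] at hx
    obtain ⟨⟨_, n, rfl⟩, hu⟩ := hx
    apply ha
    refine ⟨x, ?_⟩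
    simp only [Submonoid.smul_def, P] at hu
    rw [← sub_eq_zero]
    apply htf' n
    rw [smul_sub, sub_eq_zero]
    simpa [← natCast_zsmul] using hu
  obtain ⟨χ, hχ⟩ := CharacterModule.exists_character_apply_ne_zero_of_ne_zero hqa
  have hex : ∀ n b, ∃ c : ℤ, χ (q n b) = (((c : ℚ) / (p : ℚ) ^ n : ℚ) : AddCircle (1 : ℚ)) := by
    intro n b
    apply circ_exists
    rw [← map_nsmul, hq_pow, map_zero]
  choose c hc using hex
  have hlim : ∀ b, ∃ z : ℤ_[p], ∀ n, (p : ℤ_[p]) ^ n ∣ z - (c n b : ℤ_[p]) := by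
    intro b
    apply padic_limit p (fun n => c n b)
    intro n
    rw [← circ_iff, ← hc n b, ← hq_succ n b, map_nsmul, hc (n+1) b, ← AddCircle.coe_nsmul]
    congr 1
    have hp0 : (p : ℚ) ≠ 0 := by exact_mod_cast hp.out.ne_zero
    rw [nsmul_eq_mul]
    field_simp
    ring
  choose z hz using hlim
  refine ⟨AddMonoidHom.mk' z ?_, ?_⟩
  · intro b b'
    rw [← sub_eq_zero]
    apply padic_eq_zero p
    intro n
    have h1 : (p : ℤ) ^ n ∣ c n (b + b') - (c n b + c n b') := by
      rw [← circ_iff, ← hc, hq_add, map_add, hc, hc, ← AddCircle.coe_add]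
      congr 1
      push_cast
      ring
    have h2 := padic_int_dvd p n _ h1
    have h3 := dvd_sub (dvd_add (hz (b + b') n) h2) (dvd_add (hz b n) (hz b' n))
    push_cast at h3
    convert h3 using 1
    ring
  · intro h
    have h0 : z a = 0 := h
    have h1 := hz a 1
    rw [h0, zero_sub, dvd_neg, pow_one] at h1
    have h2 : (p : ℤ) ∣ c 1 a := by
      rw [← PadicInt.norm_int_lt_one_iff_dvd]
      exact (PadicInt.norm_lt_one_iff_dvd _).2 h1
    apply hχ
    rw [hc 1 a]
    have := (circ_iff p 1 (c 1 a) 0).2 (by simpa using h2)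
    rw [this]
    simp

theorem exists_functional (p : ℕ) [hp : Fact p.Prime] (A : Type*) [AddCommGroup A]
    (htf : ∀ x : A, p • x = 0 → x = 0) (a : A) (ha : a ∉ GpSet p A) :
    ∃ f : A →+ ℤ_[p], f a ≠ 0 := by
  classical
  have ha' : ∃ k, ¬ pDvd p k a := by simpa [GpSet] using ha
  obtain ⟨k, hk, hmin⟩ : ∃ k, ¬ pDvd p k a ∧ ∀ m < k, pDvd p m a :=
    ⟨Nat.find ha', Nat.find_spec ha', fun m hm => not_not.1 (Nat.find_min ha' hm)⟩
  cases k with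
  | zero => exact absurd ⟨a, by simp⟩ hk
  | succ k =>
    obtain ⟨b, hb⟩ := hmin k (Nat.lt_succ_self k)
    obtain ⟨f, hf⟩ := exists_functional_aux p A htf b (by
      rintro ⟨x, hx⟩
      exact hk ⟨x, by rw [pow_succ, mul_smul, hx, hb]⟩)
    refine ⟨f, ?_⟩
    rw [← hb, map_nsmul, nsmul_eq_mul]
    refine mul_ne_zero ?_ hf
    push_cast
    exact pow_ne_zero _ (by exact_mod_cast hp.out.ne_zero)

theorem ker_isPIdeal (p : ℕ) [hp : Fact p.Prime] (G : Type*) [AddCommGroup G]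
    (f : G →+ ℤ_[p]) : IsPIdeal p f.ker := by
  constructor
  · intro n hn g hg
    rw [AddMonoidHom.mem_ker, map_zsmul, zsmul_eq_mul] at hg
    rcases mul_eq_zero.1 hg with h | h
    · exact absurd (by exact_mod_cast h) hn
    · exact h
  · intro g hg
    apply padic_eq_zero p
    intro n
    obtain ⟨h, hh, x, hx⟩ := hg n
    have hh' : f h = 0 := hh
    have := congrArg f hx
    rw [map_nsmul, map_sub, hh', sub_zero, nsmul_eq_mul] at this
    change _ ∣ f g
    rw [← this]
    push_cast
    exact dvd_mul_right _ _

theorem stmt10 (p : ℕ) [Fact p.Prime] (G : Type*) [AddCommGroup G]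
    [NoZeroSMulDivisors ℤ G] :
    (IsPSimple p G ∧ ∃ g : G, ¬∃ x : G, p • x = g) ↔
      ((∃ f : G →+ ℤ_[p], f ≠ 0) ∧
        ∀ f₁ f₂ : G →+ ℤ_[p],
          (∃ α : ℤ_[p], ∀ g : G, f₂ g = α * f₁ g) ∨
          (∃ α : ℤ_[p], ∀ g : G, f₁ g = α * f₂ g)) := by
  have hp : p.Prime := Fact.out
  have hpz : (p : ℤ) ≠ 0 := by exact_mod_cast hp.ne_zero
  have htf : ∀ x : G, p • x = 0 → x = 0 := by
    intro x hx
    rw [← natCast_zsmul] at hx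
    exact (NoZeroSMulDivisors.eq_zero_or_eq_zero_of_smul_eq_zero hx).resolve_left hpz
  constructor
  · rintro ⟨hs, a, ha⟩
    have hker : ∀ f : G →+ ℤ_[p], f ≠ 0 → ∀ g, f g = 0 ↔ g ∈ GpSet p G := by
      intro f hf g
      rw [← hs f.ker (ker_isPIdeal p G f) ?_]
      · rfl
      · intro h
        apply hf
        ext x
        have : x ∈ (f.ker : Set G) := by rw [h]; trivial
        exact this
    constructor
    · obtain ⟨f, hf⟩ := exists_functional_aux p G htf a ha
      exact ⟨f, fun h => hf (by simp [h])⟩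
    · intro f₁ f₂
      by_cases h1 : f₁ = 0
      · right; exact ⟨0, by simp [h1]⟩
      by_cases h2 : f₂ = 0
      · left; exact ⟨0, by simp [h2]⟩
      have hag : a ∉ GpSet p G := fun h => ha (by simpa [pDvd] using h 1)
      have e1 : f₁ a ≠ 0 := fun h => hag ((hker f₁ h1 a).1 h)
      have e2 : f₂ a ≠ 0 := fun h => hag ((hker f₂ h2 a).1 h)
      let F : G →+ ℤ_[p] := (AddMonoidHom.mulLeft (f₂ a)).comp f₁ - (AddMonoidHom.mulLeft (f₁ a)).comp f₂
      have hF : F = 0 := by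
        by_contra hF
        exact hag ((hker F hF a).1 (by simp [F, mul_comm]))
      have hFg : ∀ g, f₂ a * f₁ g = f₁ a * f₂ g := by
        intro g
        have : F g = 0 := by rw [hF]; rfl
        simpa [F, sub_eq_zero] using this
      rcases ValuationRing.dvd_total (f₁ a) (f₂ a) with ⟨α, hα⟩ | ⟨α, hα⟩
      · left
        refine ⟨α, fun g => mul_left_cancel₀ e1 ?_⟩
        rw [← hFg g, hα]; ring
      · right
        refine ⟨α, fun g => mul_left_cancel₀ e2 ?_⟩
        rw [hFg g, hα]; ring
  · rintro ⟨⟨f, hf⟩, hu⟩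
    constructor
    · intro J hJ hne
      obtain ⟨hpure, hcl⟩ := hJ
      apply Set.Subset.antisymm
      · intro g hg
        by_contra hgp
        obtain ⟨f₂, hf₂⟩ := exists_functional p G htf g hgp
        obtain ⟨h, hh⟩ := (Set.ne_univ_iff_exists_notMem _).1 hne
        obtain ⟨f₀, hf₀⟩ := exists_functional p (G ⧸ J) (by
          intro x hx
          induction x using QuotientAddGroup.induction_on with
          | H y =>
            rw [← QuotientAddGroup.mk_nsmul, QuotientAddGroup.eq_zero_iff] at hx
            rw [QuotientAddGroup.eq_zero_iff]
            exact hpure p hpz y (by rwa [natCast_zsmul])) (h : G ⧸ J) (by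
          intro hd
          apply hh
          apply hcl
          intro k
          obtain ⟨x, hx⟩ := hd k
          induction x using QuotientAddGroup.induction_on with
          | H y =>
            rw [← QuotientAddGroup.mk_nsmul, QuotientAddGroup.eq] at hx
            exact ⟨_, hx, y, by abel⟩)
        let f₁ : G →+ ℤ_[p] := f₀.comp (QuotientAddGroup.mk' J)
        have h1g : f₁ g = 0 := by
          have : (g : G ⧸ J) = 0 := (QuotientAddGroup.eq_zero_iff g).2 hg
          simp [f₁, this]
        have h1h : f₁ h ≠ 0 := hf₀
        rcases hu f₁ f₂ with ⟨α, hα⟩ | ⟨α, hα⟩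
        · exact hf₂ (by rw [hα, h1g, mul_zero])
        · have := hα g
          rw [h1g] at this
          have hα0 : α = 0 := (mul_eq_zero.1 this.symm).resolve_right hf₂
          exact h1h (by rw [hα, hα0, zero_mul])
      · intro g hg
        apply hcl
        intro k
        exact ⟨0, J.zero_mem, by simpa using hg k⟩
    · by_contra hdiv
      push Not at hdiv
      apply hf
      ext g
      have hall : ∀ n (g : G), (p : ℤ_[p]) ^ n ∣ f g := by
        intro n
        induction n with
        | zero => intro g; simp
        | succ n ih =>
          intro g
          obtain ⟨x, hx⟩ := hdiv g
          rw [← hx, map_nsmul, nsmul_eq_mul, pow_succ']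
          exact mul_dvd_mul_left _ (ih x)
      exact padic_eq_zero p _ (fun n => hall n g)
end

section
/- Let p be a prime, let G be a torsion-free abelian group, and let f be a p-adic functional on G. Then d_p^{*p}(f, 0) = sup({‖f(g)‖ / d_p(g, 0) : g ∈ G, d_p(g, 0) ≠ 0} ∪ {0}), where d_p^{*p} denotes the p-adic metric on Hom(G, ℤ_p). Equivalently, for every k ∈ ℕ: there exists a group homomorphism f' : G → ℤ_p with f = p^k • f' if and only if for every g ∈ G and every j ∈ ℕ such that g is divisible by p^j in G, one has ‖f(g)‖ ≤ p^{-(k+j)}. -/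
/-- In `Hom(G, ℤ_p)`, the distance of `f` to `0` in the `p`-adic metric is at most
`p^{-k}` (i.e. `f` is divisible by `p^k` in `Hom(G, ℤ_p)`) if and only if
`‖f g‖ ≤ p^{-(k+j)}` whenever `g` is divisible by `p^j` in `G`; this expresses
that `d_p^{*p}(f, 0) = sup {‖f(g)‖ / d_p(g,0)}`. -/
theorem stmt11 (p : ℕ) [Fact p.Prime] (G : Type*) [AddCommGroup G]
    [NoZeroSMulDivisors ℤ G] (f : G →+ ℤ_[p]) :
    ∀ k : ℕ,
      (∃ f' : G →+ ℤ_[p], ∀ g : G, f g = (p : ℤ_[p]) ^ k * f' g) ↔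
      (∀ (g : G) (j : ℕ), pDvd p j g → ‖f g‖ ≤ (p : ℝ) ^ (-((k : ℤ) + (j : ℤ)))) := by
  intro k
  have hp : (p : ℤ_[p]) ^ k ≠ 0 :=
    pow_ne_zero _ (by exact_mod_cast (Fact.out : p.Prime).ne_zero)
  constructor
  · rintro ⟨f', hf⟩ g j ⟨x, rfl⟩
    have h := (PadicInt.norm_le_pow_iff_mem_span_pow (f (p ^ j • x)) (k + j)).2 (by
      rw [Ideal.mem_span_singleton, hf, map_nsmul, nsmul_eq_mul, pow_add]
      push_cast
      exact ⟨f' x, by ring⟩)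
    simpa using h
  · intro h
    have h' : ∀ g, ∃ y, f g = (p : ℤ_[p]) ^ k * y := by
      intro g
      have h1 := h g 0 ⟨g, by simp⟩
      exact Ideal.mem_span_singleton.1
        ((PadicInt.norm_le_pow_iff_mem_span_pow (f g) k).1 (by simpa using h1))
    choose F hF using h'
    refine ⟨AddMonoidHom.mk' F ?_, hF⟩
    intro a b
    apply mul_left_cancel₀ hp
    rw [mul_add, ← hF, ← hF, ← hF, map_add]
end

section
/- Let p be a prime, let G be a torsion-free abelian group, let F be a nonempty subset of Hom(G, ℤ_p), and let f ∈ Hom(G, ℤ_p). Then the following are equivalent: (1) there exists g ∈ G such that ‖f(g)‖ > ‖f'(g)‖ for all f' ∈ F; (2) f does not lie in the closure, with respect to the relative topology on Hom(G, ℤ_p), of the ℤ_p-span of F. -/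
theorem aux_char {p : ℕ} [Fact p.Prime] {ι : Type*} [Fintype ι] [DecidableEq ι] (k : ℕ)
    (W : Submodule ℤ_[p] (ι → ℤ_[p])) (hW : ∀ w : ι → ℤ_[p], (p : ℤ_[p]) ^ k • w ∈ W)
    (v : ι → ℤ_[p]) (hv : v ∉ W) :
    ∃ c : ι → ℤ, (∀ w ∈ W, (p : ℤ_[p]) ^ k ∣ ∑ i, (c i : ℤ_[p]) * w i) ∧
      ¬ (p : ℤ_[p]) ^ k ∣ ∑ i, (c i : ℤ_[p]) * v i := by
  have hp : (p : ℚ) ^ k ≠ 0 := pow_ne_zero _ (by exact_mod_cast (Fact.out : p.Prime).ne_zero)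
  have hq : W.mkQ v ≠ 0 := by simpa using hv
  obtain ⟨χ, hχ⟩ := CharacterModule.exists_character_apply_ne_zero_of_ne_zero hq
  let ψ : (ι → ℤ_[p]) →+ AddCircle (1 : ℚ) := AddMonoidHom.comp χ W.mkQ.toAddMonoidHom
  have hψv : ψ v ≠ 0 := hχ
  have hψW : ∀ w ∈ W, ψ w = 0 := by
    intro w hw
    have : W.mkQ w = 0 := by simpa using hw
    change χ (W.mkQ w) = 0
    rw [this]; exact map_zero χ
  have h1 : ∀ i, ∃ c : ℤ, ψ (Pi.single i 1) = (((c : ℚ) / (p : ℚ) ^ k : ℚ) : AddCircle (1 : ℚ)) := by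
    intro i
    obtain ⟨q, hq⟩ := QuotientAddGroup.mk_surjective (ψ (Pi.single i 1))
    have h0 : (p ^ k : ℕ) • ψ (Pi.single i 1) = 0 := by
      rw [← map_nsmul]
      apply hψW
      have := hW (Pi.single i 1)
      convert this using 1
      ext j
      simp
    rw [← hq] at h0
    have h2 : (((p ^ k : ℕ) • q : ℚ) : AddCircle (1 : ℚ)) = 0 := h0
    rw [AddCircle.coe_eq_zero_iff] at h2
    obtain ⟨n, hn⟩ := h2
    refine ⟨n, ?_⟩
    rw [← hq]
    change (q : AddCircle (1:ℚ)) = _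
    congr 1
    simp at hn
    rw [hn]; field_simp
  choose c hc using h1
  have key : ∀ w : ι → ℤ_[p], ψ w = 0 ↔ (p : ℤ_[p]) ^ k ∣ ∑ i, (c i : ℤ_[p]) * w i := by
    intro w
    have h3 : ∀ i, ∃ m : ℤ, ∃ r : ℤ_[p], w i = m + (p : ℤ_[p]) ^ k * r := by
      intro i
      have := PadicInt.appr_spec k (w i)
      rw [Ideal.mem_span_singleton] at this
      obtain ⟨r, hr⟩ := this
      exact ⟨(w i).appr k, r, by push_cast; rw [← hr]; ring⟩
    choose m r hmr using h3
    have hw : w = (∑ i, m i • Pi.single i (1 : ℤ_[p])) + (p : ℤ_[p]) ^ k • r := by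
      ext j
      simp [hmr j, Finset.sum_apply, Pi.single_apply]
    have e1 : ψ w = (((∑ i, m i * c i : ℤ) : ℚ) / (p : ℚ) ^ k : ℚ) := by
      conv_lhs => rw [hw]
      rw [map_add, hψW _ (hW r), add_zero, map_sum]
      push_cast
      rw [Finset.sum_div]
      have : ∀ s : Finset ι, ((∑ i ∈ s, ((m i : ℚ) * c i / (p : ℚ) ^ k) : ℚ) : AddCircle (1:ℚ)) =
        ∑ i ∈ s, (((m i : ℚ) * c i / (p : ℚ) ^ k : ℚ) : AddCircle (1:ℚ)) := fun s =>
          map_sum (QuotientAddGroup.mk' (AddSubgroup.zmultiples (1:ℚ))) _ s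
      rw [this]
      refine Finset.sum_congr rfl fun i _ => ?_
      rw [map_zsmul, hc, ← AddCircle.coe_zsmul]
      congr 1
      simp [mul_div_assoc]
    have e2 : ∑ i, (c i : ℤ_[p]) * w i =
        ((∑ i, m i * c i : ℤ) : ℤ_[p]) + (p : ℤ_[p]) ^ k * ∑ i, (c i : ℤ_[p]) * r i := by
      push_cast
      rw [Finset.mul_sum, ← Finset.sum_add_distrib]
      refine Finset.sum_congr rfl fun i _ => ?_
      rw [hmr i]; ring
    rw [e1, e2, dvd_add_left (dvd_mul_right _ _), AddCircle.coe_eq_zero_iff,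
      PadicInt.pow_p_dvd_int_iff]
    generalize (∑ i, m i * c i) = N
    constructor
    · rintro ⟨n, hn⟩
      refine ⟨n, ?_⟩
      simp at hn
      have : (N : ℚ) = (p:ℚ)^k * n := by rw [hn]; field_simp
      exact_mod_cast this
    · rintro ⟨n, hn⟩
      refine ⟨n, ?_⟩
      rw [hn]; push_cast; field_simp; simp
  exact ⟨c, fun w hw => (key w).1 (hψW w hw), fun h => hψv ((key v).2 h)⟩

theorem aux_norm_s13 {p : ℕ} [Fact p.Prime] (k : ℕ) (x : ℤ_[p]) :
    (p : ℤ_[p]) ^ k ∣ x ↔ ‖x‖ ≤ (p : ℝ) ^ (-k : ℤ) := by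
  rw [PadicInt.norm_le_pow_iff_mem_span_pow, Ideal.mem_span_singleton]

theorem stmt13 (p : ℕ) [Fact p.Prime] (G : Type*) [AddCommGroup G]
    [NoZeroSMulDivisors ℤ G] (F : Set (G →+ ℤ_[p])) (hF : F.Nonempty)
    (f : G →+ ℤ_[p]) :
    (∃ g : G, ∀ f' ∈ F, ‖f' g‖ < ‖f g‖) ↔
      (⇑f : G → ℤ_[p]) ∉
        closure {φ : G → ℤ_[p] | ∃ f' ∈ Submodule.span ℤ_[p] F, ⇑f' = φ} := by
  classical
  constructor
  · rintro ⟨g, hg⟩ hcl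
    have hpos : 0 < ‖f g‖ := by
      obtain ⟨f', hf'⟩ := hF
      exact (norm_nonneg _).trans_lt (hg f' hf')
    have hspan : ∀ h ∈ Submodule.span ℤ_[p] F, ‖h g‖ < ‖f g‖ := by
      intro h hh
      induction hh using Submodule.span_induction with
      | mem x hx => exact hg x hx
      | zero => simpa using hpos
      | add x y _ _ hx hy =>
        exact (PadicInt.nonarchimedean (x g) (y g)).trans_lt (max_lt hx hy)
      | smul a x _ hx =>
        change ‖a * x g‖ < _
        rw [norm_mul]
        exact (mul_le_of_le_one_left (norm_nonneg _) (PadicInt.norm_le_one a)).trans_lt hx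
    rw [mem_closure_iff] at hcl
    obtain ⟨φ, hφ, h, hh, rfl⟩ := hcl {φ | ‖φ g - f g‖ < ‖f g‖}
      (isOpen_lt (by fun_prop) (by fun_prop)) (by simpa using hpos)
    have h1 := hspan h hh
    have h2 : ‖h g - f g‖ < ‖f g‖ := hφ
    have h3 := PadicInt.nonarchimedean (h g) (-(h g - f g))
    rw [norm_neg] at h3
    have : h g + -(h g - f g) = f g := by ring
    rw [this] at h3
    exact absurd (h3.trans_lt (max_lt h1 h2)) (lt_irrefl _)
  · intro hcl
    have : ∃ (I : Finset G) (k : ℕ), ∀ h ∈ Submodule.span ℤ_[p] F,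
        ¬ ∀ i ∈ I, (p : ℤ_[p]) ^ k ∣ f i - h i := by
      by_contra! hcon
      apply hcl
      rw [mem_closure_iff]
      intro o ho hfo
      obtain ⟨I, u, hu, huo⟩ := isOpen_pi_iff.1 ho _ hfo
      have hk : ∀ a : G, ∃ k : ℕ, a ∈ I → ∀ y, (p : ℤ_[p]) ^ k ∣ f a - y → y ∈ u a := by
        intro a
        by_cases ha : a ∈ I
        · obtain ⟨ε, hε, hb⟩ := Metric.isOpen_iff.1 (hu a ha).1 _ (hu a ha).2
          obtain ⟨k, hk⟩ := PadicInt.exists_pow_neg_lt p hε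
          refine ⟨k, fun _ y hy => hb ?_⟩
          rw [Metric.mem_ball, dist_comm, dist_eq_norm]
          exact ((aux_norm_s13 _ _).1 hy).trans_lt hk
        · exact ⟨0, fun h => absurd h ha⟩
      choose k hk using hk
      obtain ⟨h, hh, hI⟩ := hcon I (I.sup k)
      refine ⟨h, huo fun a ha => hk a ha _ ?_, h, hh, rfl⟩
      exact (pow_dvd_pow _ (Finset.le_sup ha)).trans (hI a ha)
    obtain ⟨I, k, hIk⟩ := this
    let L : (G →+ ℤ_[p]) →ₗ[ℤ_[p]] (I → ℤ_[p]) :=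
      { toFun := fun h i => h i
        map_add' := fun _ _ => rfl
        map_smul' := fun _ _ => rfl }
    let P : (I → ℤ_[p]) →ₗ[ℤ_[p]] (I → ℤ_[p]) := (p : ℤ_[p]) ^ k • LinearMap.id
    obtain ⟨c, hc, hcf⟩ := aux_char k ((Submodule.span ℤ_[p] F).map L ⊔ LinearMap.range P)
      (fun w => Submodule.mem_sup_right ⟨w, rfl⟩) (L f) (by
        intro hmem
        obtain ⟨_, ⟨h, hh, rfl⟩, _, ⟨w, rfl⟩, hs⟩ := Submodule.mem_sup.1 hmem
        refine hIk h hh fun i hi => ⟨w ⟨i, hi⟩, ?_⟩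
        have : h i + (p : ℤ_[p]) ^ k * w ⟨i, hi⟩ = f i := congrFun hs ⟨i, hi⟩
        rw [← this]; ring)
    have hL : ∀ h : G →+ ℤ_[p], ∑ i, (c i : ℤ_[p]) * L h i = h (∑ i, c i • (i : G)) := by
      intro h
      rw [map_sum]
      refine Finset.sum_congr rfl fun i _ => ?_
      rw [map_zsmul, zsmul_eq_mul]
      rfl
    refine ⟨∑ i, c i • (i : G), fun f' hf' => ?_⟩
    have h1 := hc (L f') (Submodule.mem_sup_left ⟨f', Submodule.subset_span hf', rfl⟩)
    rw [hL, aux_norm_s13] at h1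
    rw [hL, aux_norm_s13, not_le] at hcf
    exact h1.trans_lt hcf
end

section
/- Let p be a prime and let G be a torsion-free abelian group. Consider the natural homomorphism Φ^p from G to the double dual Hom(Hom(G, ℤ_p), ℤ_p), sending g to the evaluation map ĝ : f ↦ f(g). Then: (1) for every g ∈ G, d_p(g, 0) = max{‖f(g)‖ : f ∈ Hom(G, ℤ_p)}, i.e., ‖f(g)‖ ≤ d_p(g, 0) for every p-adic functional f and this bound is attained; in particular Φ^p is a pseudo-isometry from (G, d_p) onto its image; and (2) the image {ĝ : g ∈ G} is dense in Hom(Hom(G, ℤ_p), ℤ_p) with respect to the relative topology (the topology of pointwise convergence inherited from the product space ℤ_p^{Hom(G, ℤ_p)}). -/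
/-- A functional on a finitely generated subgroup. -/
lemma fg_functional (p : ℕ) [Fact p.Prime] (H : Type*) [AddCommGroup H]
    [Module.IsTorsionFree ℤ H] [Module.Finite ℤ H] (x : H) (hx : ¬ ∃ y : H, p • y = x) :
    ∃ h : H →+ ℤ_[p], h x = 1 := by
  classical
  obtain ⟨n, b⟩ : Σ n, Module.Basis (Fin n) ℤ H := Module.basisOfFiniteTypeTorsionFree'
  have h1 : ∃ i, ¬ (p : ℤ) ∣ b.repr x i := by
    by_contra hcon
    push Not at hcon
    choose c hc using hcon
    apply hx
    refine ⟨∑ i, c i • b i, ?_⟩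
    conv_rhs => rw [← b.sum_repr x]
    rw [Finset.smul_sum]
    refine Finset.sum_congr rfl fun i _ => ?_
    rw [hc i, mul_smul, natCast_zsmul]
  obtain ⟨i, hi⟩ := h1
  have hu : IsUnit ((b.repr x i : ℤ) : ℤ_[p]) := by
    by_contra hcon
    rw [PadicInt.not_isUnit_iff, PadicInt.norm_int_lt_one_iff_dvd] at hcon
    exact hi hcon
  obtain ⟨u, hu⟩ := hu
  refine ⟨(AddMonoidHom.mulLeft ((u⁻¹ : ℤ_[p]ˣ) : ℤ_[p])).comp
    ((Int.castAddHom ℤ_[p]).comp (b.coord i).toAddMonoidHom), ?_⟩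
  have : ((u⁻¹ : ℤ_[p]ˣ) : ℤ_[p]) * ((b.repr x i : ℤ) : ℤ_[p]) = 1 := by
    rw [← hu]; simp
  simpa using this

lemma exists_functional_s15 (p : ℕ) [Fact p.Prime] (G : Type*) [AddCommGroup G]
    [Module.IsTorsionFree ℤ G] (x : G) (hx : ¬ ∃ y : G, p • y = x) :
    ∃ h : G →+ ℤ_[p], h x = 1 := by
  classical
  have key := IsCompact.inter_iInter_nonempty (X := G → ℤ_[p]) (s := {f | f x = 1})
    (IsClosed.isCompact (isClosed_eq (continuous_apply x) continuous_const))
    (fun ab : G × G => {f : G → ℤ_[p] | f (ab.1 + ab.2) = f ab.1 + f ab.2})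
    (fun ab => isClosed_eq (by fun_prop) (by fun_prop))
    (by
      intro u
      let s : Finset G := insert x (u.image Prod.fst ∪ u.image Prod.snd)
      let H : Submodule ℤ G := Submodule.span ℤ (s : Set G)
      have hs : ∀ y ∈ s, y ∈ H := fun y hy => Submodule.subset_span hy
      have hxH : x ∈ H := hs x (by simp [s])
      have : Module.Finite ℤ H := Module.Finite.span_finset ℤ s
      obtain ⟨h, hh⟩ := fg_functional p H ⟨x, hxH⟩ (by
        rintro ⟨y, hy⟩
        exact hx ⟨y, by simpa using congrArg Subtype.val hy⟩)
      refine ⟨fun g => if hg : g ∈ H then h ⟨g, hg⟩ else 0, ?_, ?_⟩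
      · simp [hxH, hh]
      · simp only [Set.mem_iInter]
        rintro ⟨a, b⟩ hab
        have ha : a ∈ H := hs a (by
          simp only [s, Finset.mem_insert, Finset.mem_union, Finset.mem_image]
          exact Or.inr (Or.inl ⟨_, hab, rfl⟩))
        have hb : b ∈ H := hs b (by
          simp only [s, Finset.mem_insert, Finset.mem_union, Finset.mem_image]
          exact Or.inr (Or.inr ⟨_, hab, rfl⟩))
        have hab' : a + b ∈ H := H.add_mem ha hb
        simp only [Set.mem_ofPred_eq, ha, hb, hab', dif_pos]
        rw [← map_add]
        rfl)
  obtain ⟨f, hf1, hf2⟩ := key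
  simp only [Set.mem_iInter, Set.mem_ofPred_eq] at hf2
  exact ⟨AddMonoidHom.mk' f fun a b => hf2 (a, b), hf1⟩

lemma char_form (p : ℕ) [Fact p.Prime] (k : ℕ) (ψ : ℤ_[p] →+ AddCircle (1 : ℚ))
    (h : ∀ z, ψ ((p : ℤ_[p]) ^ k * z) = 0) :
    ∃ m : ℤ, ∀ (z : ℤ_[p]) (n : ℤ), (p : ℤ_[p]) ^ k ∣ z - n →
      ψ z = (((n * m : ℤ) / (p : ℚ) ^ k : ℚ) : AddCircle (1 : ℚ)) := by
  have hp : (p : ℚ) ^ k ≠ 0 := pow_ne_zero _ (by exact_mod_cast (Fact.out : p.Prime).ne_zero)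
  obtain ⟨q, hq⟩ : ∃ q : ℚ, (q : AddCircle (1 : ℚ)) = ψ 1 := QuotientAddGroup.mk_surjective _
  have h1 : (((p ^ k : ℕ) • q : ℚ) : AddCircle (1 : ℚ)) = 0 := by
    rw [AddCircle.coe_nsmul, hq, ← map_nsmul]
    simpa using h 1
  rw [AddCircle.coe_eq_zero_iff] at h1
  obtain ⟨m, hm⟩ := h1
  have hm' : q = m / (p : ℚ) ^ k := by
    field_simp
    simp at hm
    linarith
  refine ⟨m, fun z n hz => ?_⟩
  obtain ⟨c, hc⟩ := hz
  have hz : z = (p : ℤ_[p]) ^ k * c + n • (1 : ℤ_[p]) := by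
    rw [← hc]; simp
  rw [hz, map_add, h, zero_add, map_zsmul, ← hq, ← AddCircle.coe_zsmul, hm']
  congr 1
  push_cast
  rw [zsmul_eq_mul]
  ring

lemma approx (p : ℕ) [Fact p.Prime] (G : Type*) [AddCommGroup G]
    (Φ : (G →+ ℤ_[p]) →+ ℤ_[p]) (I : Finset (G →+ ℤ_[p])) (k : ℕ) :
    ∃ g : G, ∀ f ∈ I, (p : ℤ_[p]) ^ k ∣ Φ f - f g := by
  classical
  have hp0 : (p : ℤ_[p]) ^ k ≠ 0 :=
    pow_ne_zero _ (by exact_mod_cast (Fact.out : p.Prime).ne_zero)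
  have hpq : (p : ℚ) ^ k ≠ 0 := pow_ne_zero _ (by exact_mod_cast (Fact.out : p.Prime).ne_zero)
  let F : G →+ (I → ℤ_[p]) := AddMonoidHom.mk' (fun g i => i.1 g) (by intro a b; ext i; simp)
  let M : (I → ℤ_[p]) →+ (I → ℤ_[p]) := AddMonoidHom.mulLeft (fun _ => (p : ℤ_[p]) ^ k)
  let S : AddSubgroup (I → ℤ_[p]) := F.range ⊔ M.range
  let v : I → ℤ_[p] := fun i => Φ i.1
  by_cases hv : v ∈ S
  · obtain ⟨_, ⟨g, rfl⟩, _, ⟨w, rfl⟩, hgw⟩ := AddSubgroup.mem_sup.1 hv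
    refine ⟨g, fun f hf => ⟨w ⟨f, hf⟩, ?_⟩⟩
    have := congrFun hgw ⟨f, hf⟩
    simp only [F, M, v, Pi.add_apply, AddMonoidHom.mk'_apply, AddMonoidHom.coe_mulLeft,
      Pi.mul_apply] at this
    rw [← this]; ring
  exfalso
  obtain ⟨c, hc⟩ := CharacterModule.exists_character_apply_ne_zero_of_ne_zero
    (a := (QuotientAddGroup.mk v : (I → ℤ_[p]) ⧸ S))
    (fun h => hv ((QuotientAddGroup.eq_zero_iff v).1 h))
  let c' : ((I → ℤ_[p]) ⧸ S) →+ AddCircle (1 : ℚ) := c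
  let χ : (I → ℤ_[p]) →+ AddCircle (1 : ℚ) := c'.comp (QuotientAddGroup.mk' S)
  have hχv : χ v ≠ 0 := hc
  have hχS : ∀ a ∈ S, χ a = 0 := by
    intro a ha
    change c' (QuotientAddGroup.mk a) = 0
    rw [(QuotientAddGroup.eq_zero_iff a).2 ha, map_zero]
  have hform := fun i : I => char_form p k
    (χ.comp (AddMonoidHom.single (fun _ : I => ℤ_[p]) i)) (by
      intro z
      apply hχS
      apply AddSubgroup.mem_sup_right
      refine ⟨Pi.single i z, ?_⟩
      ext j
      by_cases hj : j = i
      · subst hj; simp [M]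
      · simp [M, hj])
  choose m hm using hform
  have hχ : ∀ a, χ a = 0 ↔ (p : ℤ_[p]) ^ k ∣ ∑ i, m i * a i := by
    intro a
    have hn : ∀ i, ∃ n : ℤ, (p : ℤ_[p]) ^ k ∣ a i - n := fun i =>
      ⟨((a i).appr k : ℕ), by
        simpa using Ideal.mem_span_singleton.1 (PadicInt.appr_spec k (a i))⟩
    choose n hn using hn
    have e1 : χ a = (((∑ i, n i * m i : ℤ) / (p : ℚ) ^ k : ℚ) : AddCircle (1 : ℚ)) := by
      have : a = ∑ i, Pi.single i (a i) := (Finset.univ_sum_single a).symm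
      rw [this, map_sum]
      have h2 : ∀ i, χ (Pi.single i (a i)) =
          (((n i * m i : ℤ) / (p : ℚ) ^ k : ℚ) : AddCircle (1 : ℚ)) :=
        fun i => hm i (a i) (n i) (hn i)
      simp_rw [h2]
      rw [Int.cast_sum, Finset.sum_div]
      exact (map_sum (QuotientAddGroup.mk' (AddSubgroup.zmultiples (1 : ℚ))) _ _).symm
    have e2 : (p : ℤ_[p]) ^ k ∣ ∑ i, m i * a i - ((∑ i, n i * m i : ℤ) : ℤ_[p]) := by
      push_cast
      rw [← Finset.sum_sub_distrib]
      refine Finset.dvd_sum fun i _ => ?_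
      have : (m i : ℤ_[p]) * a i - n i * m i = m i * (a i - n i) := by ring
      rw [this]
      exact (hn i).mul_left _
    rw [e1, ← dvd_iff_dvd_of_dvd_sub (dvd_sub_comm.1 e2), PadicInt.pow_p_dvd_int_iff,
      AddCircle.coe_eq_zero_iff]
    constructor
    · rintro ⟨t, ht⟩
      refine ⟨t, ?_⟩
      rw [eq_div_iff hpq] at ht
      have : ((∑ i, n i * m i : ℤ) : ℚ) = ((p ^ k * t : ℤ) : ℚ) := by
        rw [← ht]; push_cast; simp; ring
      exact_mod_cast this
    · rintro ⟨t, ht⟩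
      refine ⟨t, ?_⟩
      rw [ht]
      push_cast
      field_simp
      simp
  apply hχv
  rw [hχ]
  have hdiv : ∀ g : G, ∃ z : ℤ_[p], (∑ i : I, m i • i.1) g = (p : ℤ_[p]) ^ k * z := by
    intro g
    have := (hχ (F g)).1 (hχS _ (AddSubgroup.mem_sup_left ⟨g, rfl⟩))
    obtain ⟨z, hz⟩ := this
    refine ⟨z, ?_⟩
    rw [← hz]
    simp [F, AddMonoidHom.finsetSum_apply]
  choose z hz using hdiv
  let f' : G →+ ℤ_[p] := AddMonoidHom.mk' z (by
    intro a b
    apply mul_left_cancel₀ hp0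
    rw [mul_add, ← hz, ← hz, ← hz, map_add])
  have hf' : ∑ i : I, m i • i.1 = (p ^ k) • f' := by
    ext g
    rw [hz]
    simp [f']
  have := congrArg Φ hf'
  rw [map_sum, map_nsmul] at this
  refine ⟨Φ f', ?_⟩
  simpa [v] using this


/-- The natural map `Φ^p : G → Hom(Hom(G, ℤ_p), ℤ_p)` is a pseudo-isometry
(`d_p(g, 0) = max ‖f g‖` over all `p`-adic functionals `f`), and its image is
dense in the double dual with respect to the topology of pointwise convergence
inherited from the product space `ℤ_p^{Hom(G, ℤ_p)}`. -/
theorem stmt15 (p : ℕ) [Fact p.Prime] (G : Type*) [AddCommGroup G]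
    [NoZeroSMulDivisors ℤ G] :
    (∀ g : G, (∀ f : G →+ ℤ_[p], ‖f g‖ ≤ pdist p g 0) ∧
      ∃ f : G →+ ℤ_[p], ‖f g‖ = pdist p g 0) ∧
    (∀ Φ : (G →+ ℤ_[p]) →+ ℤ_[p],
      (⇑Φ : (G →+ ℤ_[p]) → ℤ_[p]) ∈
        closure {ψ : (G →+ ℤ_[p]) → ℤ_[p] | ∃ g : G, ψ = fun f => f g}) := by
  have : Module.IsTorsionFree ℤ G := by
    infer_instance
  have hp1 : (1 : ℝ) < p := by exact_mod_cast (Fact.out : p.Prime).one_lt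
  refine ⟨fun g => ⟨fun f => ?_, ?_⟩, fun Φ => ?_⟩
  · apply le_csInf
    · exact ⟨_, 0, ⟨g, by simp⟩, rfl⟩
    · rintro r ⟨k, ⟨x, hx⟩, rfl⟩
      rw [PadicInt.norm_le_pow_iff_mem_span_pow, Ideal.mem_span_singleton]
      rw [sub_zero] at hx
      exact ⟨f x, by rw [← hx, map_nsmul]; simp⟩
  · have hbdd : BddBelow {r : ℝ | ∃ k : ℕ, pDvd p k (g - 0) ∧ r = (p : ℝ) ^ (-(k : ℤ))} := by
      refine ⟨0, ?_⟩
      rintro r ⟨k, _, rfl⟩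
      positivity
    by_cases hall : ∀ k, pDvd p k (g - 0)
    · refine ⟨0, ?_⟩
      apply le_antisymm
      · refine le_csInf ⟨_, 0, hall 0, rfl⟩ ?_
        rintro r ⟨k, _, rfl⟩
        simp only [AddMonoidHom.zero_apply, norm_zero]
        positivity
      · simp only [AddMonoidHom.zero_apply, norm_zero]
        apply le_of_forall_pos_lt_add
        intro ε hε
        obtain ⟨k, hk⟩ := PadicInt.exists_pow_neg_lt p hε
        rw [zero_add]
        exact (csInf_le hbdd ⟨k, hall k, rfl⟩).trans_lt hk
    · classical
      push Not at hall
      have hspec := Nat.find_spec hall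
      obtain ⟨k, hk⟩ : ∃ k, Nat.find hall = k + 1 := by
        apply Nat.exists_eq_succ_of_ne_zero
        intro h0
        rw [h0] at hspec
        exact hspec ⟨g, by simp⟩
      have hkd : pDvd p k (g - 0) := by
        by_contra h
        have := Nat.find_min' hall h
        omega
      rw [hk] at hspec
      obtain ⟨x, hx⟩ := hkd
      rw [sub_zero] at hx hspec
      obtain ⟨f, hf⟩ := exists_functional_s15 p G x (by
        rintro ⟨y, hy⟩
        exact hspec ⟨y, by rw [pow_succ, mul_smul, hy, hx]⟩)
      have hfg : ‖f g‖ = (p : ℝ) ^ (-(k : ℤ)) := by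
        rw [← hx, map_nsmul, hf, nsmul_eq_mul, mul_one, Nat.cast_pow, PadicInt.norm_p_pow]
      refine ⟨f, le_antisymm ?_ ?_⟩
      · refine le_csInf ⟨_, k, ⟨x, by simpa using hx⟩, rfl⟩ ?_
        rintro r ⟨j, ⟨y, hy⟩, rfl⟩
        rw [PadicInt.norm_le_pow_iff_mem_span_pow, Ideal.mem_span_singleton]
        rw [sub_zero] at hy
        exact ⟨f y, by rw [← hy, map_nsmul]; simp⟩
      · rw [hfg]
        exact csInf_le hbdd ⟨k, ⟨x, by simpa using hx⟩, rfl⟩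
  · rw [mem_closure_iff_nhds]
    intro t ht
    rw [nhds_pi, Filter.mem_pi'] at ht
    obtain ⟨I, s, hs, hst⟩ := ht
    have hε : ∀ f, ∃ k : ℕ, Metric.closedBall (Φ f) ((p : ℝ) ^ (-(k : ℤ))) ⊆ s f := by
      intro f
      obtain ⟨ε, hε, hsub⟩ := Metric.mem_nhds_iff.1 (hs f)
      obtain ⟨k, hk⟩ := PadicInt.exists_pow_neg_lt p hε
      exact ⟨k, (Metric.closedBall_subset_ball hk).trans hsub⟩
    choose k hk using hε
    obtain ⟨g, hg⟩ := approx p G Φ I (I.sup k)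
    refine ⟨fun f => f g, hst ?_, g, rfl⟩
    intro f hf
    apply hk f
    rw [Metric.mem_closedBall, dist_comm, dist_eq_norm, PadicInt.norm_le_pow_iff_mem_span_pow,
      Ideal.mem_span_singleton]
    exact (pow_dvd_pow _ (Finset.le_sup hf)).trans (hg f hf)
end

section
/- Let p be a prime, let G be a torsion-free abelian group, and let H be a subgroup of G of index p^k for some k ∈ ℕ. Then there exists a unique continuous additive group homomorphism θ_H from the double dual Hom(Hom(G, ℤ_p), ℤ_p), equipped with the relative topology, to the quotient group G/H, equipped with the discrete topology, such that θ_H(ĝ) = g + H for every g ∈ G, where ĝ denotes the evaluation map f ↦ f(g). -/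
open Topology in
theorem aux_locConst (p : ℕ) [Fact p.Prime] (n : ℕ) :
    IsLocallyConstant (PadicInt.toZModPow (p := p) n) := by
  rw [IsLocallyConstant.iff_eventually_eq]
  intro x
  have hp : (0 : ℝ) < (p : ℝ) ^ (-n : ℤ) := by
    have := (Fact.out : p.Prime).pos
    positivity
  filter_upwards [Metric.ball_mem_nhds x hp] with y hy
  rw [← sub_eq_zero, ← map_sub, ← RingHom.mem_ker, PadicInt.ker_toZModPow,
    ← PadicInt.norm_le_pow_iff_mem_span_pow]
  rw [Metric.mem_ball, dist_eq_norm] at hy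
  exact hy.le

theorem aux_small (p : ℕ) [Fact p.Prime] (x : ℤ_[p]) (u : Set ℤ_[p]) (hu : IsOpen u)
    (hx : x ∈ u) : ∀ᶠ n in Filter.atTop, ∀ y, PadicInt.toZModPow n y = PadicInt.toZModPow n x →
      y ∈ u := by
  obtain ⟨ε, hε, hb⟩ := Metric.isOpen_iff.1 hu x hx
  have hp : (1 : ℝ) < p := by exact_mod_cast (Fact.out : p.Prime).one_lt
  have ht := tendsto_inv_atTop_zero.comp (tendsto_pow_atTop_atTop_of_one_lt hp)
  filter_upwards [ht.eventually (gt_mem_nhds hε)] with n hn y hy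
  apply hb
  rw [← sub_eq_zero, ← map_sub, ← RingHom.mem_ker, PadicInt.ker_toZModPow,
    ← PadicInt.norm_le_pow_iff_mem_span_pow] at hy
  rw [Metric.mem_ball, dist_eq_norm]
  refine hy.trans_lt ?_
  simpa using hn

/-- Lifting of characters along reduction modulo `p ^ n`, by compactness. -/
theorem aux_lift (p : ℕ) [Fact p.Prime] (G : Type*) [AddCommGroup G]
    [NoZeroSMulDivisors ℤ G] (n : ℕ) (χ : G →+ ZMod (p ^ n)) :
    ∃ f : G →+ ℤ_[p], ∀ g, PadicInt.toZModPow n (f g) = χ g := by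
  classical
  let t : Finset G → Set (G → ℤ_[p]) := fun S =>
    {f | ∀ x ∈ Submodule.span ℤ (S : Set G), ∀ y ∈ Submodule.span ℤ (S : Set G),
      f (x + y) = f x + f y ∧ PadicInt.toZModPow n (f x) = χ x}
  have hcl : ∀ S, IsClosed (t S) := by
    intro S
    simp only [t, Set.ofPred_forall, Set.ofPred_and]
    refine isClosed_iInter fun x => isClosed_iInter fun _ => isClosed_iInter fun y =>
      isClosed_iInter fun _ => IsClosed.inter ?_ ?_
    · exact isClosed_eq (by fun_prop) (by fun_prop)
    · exact ((aux_locConst p n).comp_continuous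
        (continuous_apply (A := fun _ : G => ℤ_[p]) x)).isClosed_fiber (χ x)
  have hanti : Antitone t := by
    intro S T hST f hf x hx y hy
    have := Submodule.span_mono (R := ℤ) (Finset.coe_subset.2 hST)
    exact hf x (this hx) y (this hy)
  have hne : ∀ S, (t S).Nonempty := by
    intro S
    let L := Submodule.span ℤ (S : Set G)
    have : Module.Finite ℤ L := Module.Finite.span_of_finite ℤ S.finite_toSet
    have : Module.IsTorsionFree ℤ G := inferInstance
    have : Module.Free ℤ L := inferInstance
    obtain ⟨h, hh⟩ := Module.projective_lifting_property
      ((PadicInt.toZModPow (p := p) n).toAddMonoidHom.toIntLinearMap)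
      (χ.toIntLinearMap.comp L.subtype) (ZMod.ringHom_surjective (PadicInt.toZModPow (p := p) n))
    refine ⟨fun x => if hx : x ∈ L then h ⟨x, hx⟩ else 0, ?_⟩
    intro x hx y hy
    have hx' : x ∈ L := hx
    have hy' : y ∈ L := hy
    have hxy : x + y ∈ L := L.add_mem hx hy
    constructor
    · simp only [hx', hy', hxy, dif_pos]
      rw [← map_add]
      rfl
    · simp only [hx', dif_pos]
      exact LinearMap.congr_fun hh ⟨x, hx'⟩
  obtain ⟨f, hf⟩ := IsCompact.nonempty_iInter_of_directed_nonempty_isCompact_isClosed t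
    hanti.directed_ge hne (fun S => (hcl S).isCompact) hcl
  have hf' : ∀ x y, f (x + y) = f x + f y ∧ PadicInt.toZModPow n (f x) = χ x := by
    intro x y
    have := Set.mem_iInter.1 hf {x, y}
    exact this x (Submodule.subset_span (by simp)) y (Submodule.subset_span (by simp))
  exact ⟨AddMonoidHom.mk' f fun x y => (hf' x y).1, fun g => (hf' g g).2⟩

theorem aux_enough (N : ℕ) [NeZero N] : HasEnoughRootsOfUnity (Multiplicative (ZMod N)) N where
  prim := ⟨Multiplicative.ofAdd 1, by
    have := IsPrimitiveRoot.orderOf (Multiplicative.ofAdd (1 : ZMod N))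
    rwa [orderOf_ofAdd_eq_addOrderOf, ZMod.addOrderOf_one] at this⟩
  cyc := by
    have : IsCyclic (Multiplicative (ZMod N))ˣ :=
      isCyclic_of_surjective (toUnits (G := Multiplicative (ZMod N))) toUnits.surjective
    infer_instance

/-- Multiplicative characters from additive ones. -/
def auxChar (A : Type*) [AddCommGroup A] (N : ℕ) :
    (Multiplicative A →* (Multiplicative (ZMod N))ˣ) ≃ (A →+ ZMod N) where
  toFun φ := AddMonoidHom.toMultiplicative.symm ((toUnits (G := Multiplicative (ZMod N))).symm.toMonoidHom.comp φ)
  invFun χ := (toUnits (G := Multiplicative (ZMod N))).toMonoidHom.comp (AddMonoidHom.toMultiplicative χ)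
  left_inv φ := by ext; rfl
  right_inv χ := by ext; rfl

theorem aux_dual (A : Type*) [AddCommGroup A] [Finite A] (N : ℕ) [NeZero N]
    (hN : ∀ a : A, N • a = 0) :
    (∀ a : A, a ≠ 0 → ∃ χ : A →+ ZMod N, χ a ≠ 0) ∧
    ∀ Ψ : (A →+ ZMod N) →+ ZMod N, ∃ a : A, ∀ χ, Ψ χ = χ a := by
  have := aux_enough N
  have hexp : Monoid.exponent (Multiplicative A) ∣ N :=
    Monoid.exponent_dvd_of_forall_pow_eq_one fun a => hN a.toAdd
  have := HasEnoughRootsOfUnity.of_dvd (Multiplicative (ZMod N)) hexp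
  constructor
  · intro a ha
    obtain ⟨φ, hφ⟩ := CommGroup.exists_apply_ne_one_of_hasEnoughRootsOfUnity (Multiplicative A)
      (Multiplicative (ZMod N)) (a := Multiplicative.ofAdd a) ha
    refine ⟨auxChar A N φ, fun h => hφ ?_⟩
    exact Units.ext h
  · intro Ψ
    let η : (Multiplicative A →* (Multiplicative (ZMod N))ˣ) →* (Multiplicative (ZMod N))ˣ :=
      MonoidHom.mk' (fun φ => toUnits (Multiplicative.ofAdd (Ψ (auxChar A N φ)))) (by
        intro φ ψ
        have : auxChar A N (φ * ψ) = auxChar A N φ + auxChar A N ψ := by ext; rfl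
        rw [this, map_add, ofAdd_add, map_mul])
    refine ⟨(CommGroup.monoidHomMonoidHomEquiv (Multiplicative A)
      (Multiplicative (ZMod N)) η).toAdd, fun χ => ?_⟩
    have := CommGroup.apply_monoidHomMonoidHomEquiv (Multiplicative (ZMod N))
      ((auxChar A N).symm χ) η
    have h2 : η ((auxChar A N).symm χ) = toUnits (Multiplicative.ofAdd (Ψ χ)) := by
      change toUnits (Multiplicative.ofAdd (Ψ (auxChar A N ((auxChar A N).symm χ)))) = _
      rw [Equiv.apply_symm_apply]
    rw [h2] at this
    exact (toUnits.injective this).symm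

theorem aux_wd (p : ℕ) [Fact p.Prime] (G : Type*) [AddCommGroup G] (n : ℕ)
    (Φ : (G →+ ℤ_[p]) →+ ℤ_[p]) (f : G →+ ℤ_[p])
    (hf : ∀ g, PadicInt.toZModPow n (f g) = 0) : PadicInt.toZModPow n (Φ f) = 0 := by
  have hp : (p : ℤ_[p]) ^ n ≠ 0 :=
    pow_ne_zero _ (by exact_mod_cast (Fact.out : p.Prime).ne_zero)
  have h : ∀ g, ∃ c, f g = (p : ℤ_[p]) ^ n * c := by
    intro g
    have := hf g
    rwa [← RingHom.mem_ker, PadicInt.ker_toZModPow, Ideal.mem_span_singleton] at this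
  choose c hc using h
  let f' : G →+ ℤ_[p] := AddMonoidHom.mk' c (by
    intro x y
    apply mul_left_cancel₀ hp
    rw [mul_add, ← hc, ← hc, ← hc, map_add])
  have hff : f = (p ^ n) • f' := by
    ext g
    rw [hc g]
    simp [f']
  rw [hff, map_nsmul, map_nsmul, nsmul_eq_mul, ZMod.natCast_self, zero_mul]

theorem aux_core (p : ℕ) [Fact p.Prime] (G : Type*) [AddCommGroup G]
    [NoZeroSMulDivisors ℤ G] (H : AddSubgroup G) [Finite (G ⧸ H)] (n : ℕ)
    (hn : ∀ g : G, (p ^ n) • g ∈ H) (Φ : (G →+ ℤ_[p]) →+ ℤ_[p]) :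
    ∃ g : G, ∀ f : G →+ ℤ_[p], (∀ h ∈ H, PadicInt.toZModPow n (f h) = 0) →
      PadicInt.toZModPow n (Φ f) = PadicInt.toZModPow n (f g) := by
  have : NeZero (p ^ n) := ⟨pow_ne_zero _ (Fact.out : p.Prime).ne_zero⟩
  have hN : ∀ a : G ⧸ H, (p ^ n) • a = 0 := by
    intro a
    induction a using QuotientAddGroup.induction_on with
    | H g => exact (QuotientAddGroup.eq_zero_iff _).2 (hn g)
  choose L hL using fun χ : G ⧸ H →+ ZMod (p ^ n) =>
    aux_lift p G n (χ.comp (QuotientAddGroup.mk' H))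
  have key : ∀ f f' : G →+ ℤ_[p],
      (∀ g, PadicInt.toZModPow n (f g) = PadicInt.toZModPow n (f' g)) →
      PadicInt.toZModPow n (Φ f) = PadicInt.toZModPow n (Φ f') := by
    intro f f' h
    have := aux_wd p G n Φ (f - f') (by intro g; simp [h])
    rwa [map_sub, map_sub, sub_eq_zero] at this
  let Ψ : (G ⧸ H →+ ZMod (p ^ n)) →+ ZMod (p ^ n) :=
    AddMonoidHom.mk' (fun χ => PadicInt.toZModPow n (Φ (L χ))) (by
      intro χ ψ
      rw [← map_add, ← map_add]
      apply key
      intro g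
      simp [hL])
  obtain ⟨a, ha⟩ := (aux_dual (G ⧸ H) (p ^ n) hN).2 Ψ
  obtain ⟨g, rfl⟩ := QuotientAddGroup.mk_surjective a
  refine ⟨g, fun f hf => ?_⟩
  let χ : G ⧸ H →+ ZMod (p ^ n) :=
    QuotientAddGroup.lift H ((PadicInt.toZModPow (p := p) n).toAddMonoidHom.comp f)
      (fun h hh => hf h hh)
  have h1 : PadicInt.toZModPow n (Φ f) = Ψ χ := by
    apply key
    intro g
    rw [hL]
    rfl
  rw [h1, ha]
  rfl

theorem aux_sep (p : ℕ) [Fact p.Prime] (G : Type*) [AddCommGroup G]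
    [NoZeroSMulDivisors ℤ G] (H : AddSubgroup G) [Finite (G ⧸ H)] (n : ℕ)
    (hn : ∀ g : G, (p ^ n) • g ∈ H) (g g' : G)
    (hg : ∀ f : G →+ ℤ_[p], (∀ h ∈ H, PadicInt.toZModPow n (f h) = 0) →
      PadicInt.toZModPow n (f g) = PadicInt.toZModPow n (f g')) :
    (QuotientAddGroup.mk g : G ⧸ H) = QuotientAddGroup.mk g' := by
  have : NeZero (p ^ n) := ⟨pow_ne_zero _ (Fact.out : p.Prime).ne_zero⟩
  have hN : ∀ a : G ⧸ H, (p ^ n) • a = 0 := by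
    intro a
    induction a using QuotientAddGroup.induction_on with
    | H g => exact (QuotientAddGroup.eq_zero_iff _).2 (hn g)
  by_contra hne
  obtain ⟨χ, hχ⟩ := (aux_dual (G ⧸ H) (p ^ n) hN).1 _ (sub_ne_zero.2 hne)
  obtain ⟨f, hf⟩ := aux_lift p G n (χ.comp (QuotientAddGroup.mk' H))
  have := hg f (by
    intro h hh
    rw [hf]
    have : (QuotientAddGroup.mk' H) h = 0 := (QuotientAddGroup.eq_zero_iff _).2 hh
    simp only [AddMonoidHom.comp_apply, this, map_zero])
  rw [hf, hf] at this
  apply hχ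
  rw [map_sub, sub_eq_zero]
  exact this

/-- Density of evaluations. -/
theorem aux_dense (p : ℕ) [Fact p.Prime] (G : Type*) [AddCommGroup G]
    [NoZeroSMulDivisors ℤ G] (Φ : (G →+ ℤ_[p]) →+ ℤ_[p]) (V : Set ((G →+ ℤ_[p]) → ℤ_[p]))
    (hV : IsOpen V) (hΦ : (⇑Φ : (G →+ ℤ_[p]) → ℤ_[p]) ∈ V) :
    ∃ g : G, (fun f : G →+ ℤ_[p] => f g) ∈ V := by
  obtain ⟨I, u, hu, huV⟩ := isOpen_pi_iff.1 hV _ hΦ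
  have hev : ∀ᶠ n in Filter.atTop, ∀ f ∈ I, ∀ y,
      PadicInt.toZModPow n y = PadicInt.toZModPow n (Φ f) → y ∈ u f :=
    (Filter.eventually_all_finset I).2 fun f hf => aux_small p _ _ (hu f hf).1 (hu f hf).2
  obtain ⟨n, hn⟩ := hev.exists
  have : NeZero (p ^ n) := ⟨pow_ne_zero _ (Fact.out : p.Prime).ne_zero⟩
  let F : G →+ (I → ZMod (p ^ n)) := AddMonoidHom.mk'
    (fun g f => PadicInt.toZModPow n ((f : G →+ ℤ_[p]) g)) (by intro x y; ext f; simp)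
  have : Finite (G ⧸ F.ker) :=
    Finite.of_injective _ (QuotientAddGroup.kerLift_injective F)
  obtain ⟨g, hg⟩ := aux_core p G F.ker n (by
    intro g
    rw [AddMonoidHom.mem_ker, map_nsmul]
    ext f
    rw [Pi.smul_apply, nsmul_eq_mul, ZMod.natCast_self, zero_mul]
    rfl) Φ
  refine ⟨g, huV ?_⟩
  intro f hf
  refine hn f hf _ (hg f ?_).symm
  intro h hh
  exact congr_fun (AddMonoidHom.mem_ker.1 hh) ⟨f, hf⟩

theorem stmt16 (p : ℕ) [Fact p.Prime] (G : Type*) [AddCommGroup G]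
    [NoZeroSMulDivisors ℤ G] (H : AddSubgroup G) (k : ℕ)
    (hH : Nat.card (G ⧸ H) = p ^ k) :
    -- the relative topology on the double dual, inherited from `ℤ_p^{Hom(G, ℤ_p)}`
    letI : TopologicalSpace ((G →+ ℤ_[p]) →+ ℤ_[p]) :=
      TopologicalSpace.induced (fun Φ => (⇑Φ : (G →+ ℤ_[p]) → ℤ_[p])) inferInstance
    -- the discrete topology on `G ⧸ H`
    letI : TopologicalSpace (G ⧸ H) := ⊥
    ∃! θ : ((G →+ ℤ_[p]) →+ ℤ_[p]) →+ G ⧸ H,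
      Continuous θ ∧
      ∀ g : G,
        θ (AddMonoidHom.mk' (fun f : G →+ ℤ_[p] => f g) (fun _ _ => rfl)) =
          QuotientAddGroup.mk g := by
  letI τ : TopologicalSpace ((G →+ ℤ_[p]) →+ ℤ_[p]) :=
    TopologicalSpace.induced (fun Φ => (⇑Φ : (G →+ ℤ_[p]) → ℤ_[p])) inferInstance
  letI σ : TopologicalSpace (G ⧸ H) := ⊥
  have : DiscreteTopology (G ⧸ H) := ⟨rfl⟩
  have : Finite (G ⧸ H) := Nat.finite_of_card_ne_zero
    (by rw [hH]; exact pow_ne_zero _ (Fact.out : p.Prime).ne_zero)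
  have : NeZero (p ^ k) := ⟨pow_ne_zero _ (Fact.out : p.Prime).ne_zero⟩
  have hk : ∀ g : G, (p ^ k) • g ∈ H := by
    intro g
    rw [← QuotientAddGroup.eq_zero_iff, ← hH]
    exact card_nsmul_eq_zero' (x := (QuotientAddGroup.mk g : G ⧸ H))
  choose T hT using aux_core p G H k hk
  have hcoe : Continuous (fun Φ : (G →+ ℤ_[p]) →+ ℤ_[p] => (⇑Φ : (G →+ ℤ_[p]) → ℤ_[p])) :=
    continuous_induced_dom
  let θ : ((G →+ ℤ_[p]) →+ ℤ_[p]) →+ G ⧸ H :=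
    AddMonoidHom.mk' (fun Φ => QuotientAddGroup.mk (T Φ)) (by
      intro Φ Φ'
      rw [← QuotientAddGroup.mk_add]
      apply aux_sep p G H k hk
      intro f hf
      rw [← hT _ f hf, map_add, map_add, ← hT _ f hf, ← hT _ f hf, ← map_add]
      rfl)
  refine existsUnique_of_exists_of_unique ⟨θ, ?_, ?_⟩ ?_
  · -- continuity: lifts of the finitely many characters
    choose L hL using fun χ : G ⧸ H →+ ZMod (p ^ k) =>
      aux_lift p G k (χ.comp (QuotientAddGroup.mk' H))
    have : Finite (G ⧸ H →+ ZMod (p ^ k)) := DFunLike.finite _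
    rw [← IsLocallyConstant.iff_continuous, IsLocallyConstant.iff_eventually_eq]
    intro Φ
    have hev : ∀ᶠ Φ' in nhds Φ, ∀ χ, PadicInt.toZModPow k (Φ' (L χ)) =
        PadicInt.toZModPow k (Φ (L χ)) := by
      rw [Filter.eventually_all]
      intro χ
      have hc : Continuous (fun Φ' : (G →+ ℤ_[p]) →+ ℤ_[p] => Φ' (L χ)) :=
        (continuous_apply (L χ)).comp hcoe
      exact ((aux_locConst p k).comp_continuous hc).eventually_eq Φ
    filter_upwards [hev] with Φ' hΦ'
    apply aux_sep p G H k hk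
    intro f hf
    let χ : G ⧸ H →+ ZMod (p ^ k) :=
      QuotientAddGroup.lift H ((PadicInt.toZModPow (p := p) k).toAddMonoidHom.comp f)
        (fun h hh => hf h hh)
    have h1 : ∀ g, PadicInt.toZModPow k (f g) = PadicInt.toZModPow k (L χ g) := by
      intro g
      rw [hL]
      rfl
    have h2 : ∀ h ∈ H, PadicInt.toZModPow k (L χ h) = 0 := fun h hh => by rw [← h1, hf h hh]
    rw [h1, h1, ← hT _ _ h2, ← hT _ _ h2, hΦ']
  · intro g
    apply aux_sep p G H k hk
    intro f hf
    rw [← hT _ f hf]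
    rfl
  · rintro θ₁ θ₂ ⟨hc₁, h₁⟩ ⟨hc₂, h₂⟩
    apply AddMonoidHom.ext
    intro Φ
    have ho : IsOpen ((θ₁ ⁻¹' {θ₁ Φ}) ∩ (θ₂ ⁻¹' {θ₂ Φ})) :=
      ((isOpen_discrete _).preimage hc₁).inter ((isOpen_discrete _).preimage hc₂)
    obtain ⟨V, hV, hVe⟩ := isOpen_induced_iff.1 ho
    have hΦ : Φ ∈ (fun Φ : (G →+ ℤ_[p]) →+ ℤ_[p] => (⇑Φ : (G →+ ℤ_[p]) → ℤ_[p])) ⁻¹' V := by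
      rw [hVe]
      exact ⟨rfl, rfl⟩
    obtain ⟨g, hg⟩ := aux_dense p G Φ V hV hΦ
    have hg' : AddMonoidHom.mk' (fun f : G →+ ℤ_[p] => f g) (fun _ _ => rfl) ∈
        (fun Φ : (G →+ ℤ_[p]) →+ ℤ_[p] => (⇑Φ : (G →+ ℤ_[p]) → ℤ_[p])) ⁻¹' V := hg
    rw [hVe] at hg'
    have e₁ := hg'.1
    have e₂ := hg'.2
    rw [Set.mem_preimage, Set.mem_singleton_iff] at e₁ e₂
    rw [← e₁, ← e₂, h₁, h₂]
end

section
/- Let p be a prime and let G be a torsion-free abelian group. Let S denote the set of subgroups H of G whose index in G is a power of p, and let K denote the inverse limit of the quotients G/H over H ∈ S, realized concretely as K = {x ∈ Π_{H ∈ S} G/H : for all H, H' ∈ S with H ⊆ H', the natural map G/H → G/H' sends x_H to x_{H'}}, equipped with the subspace topology from the product of the discrete groups G/H. Then there exists an additive group isomorphism η from K to the double dual Hom(Hom(G, ℤ_p), ℤ_p), equipped with the relative topology, such that η is a homeomorphism and η((g + H)_{H ∈ S}) = ĝ for every g ∈ G, where ĝ denotes the evaluation map f ↦ f(g). In other words,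 the pro-p completion of G is isomorphic, as a topological group and compatibly with the canonical maps from G, to the p-adic double dual of G. -/
section Helpers

variable {p : ℕ} [Fact p.Prime]

theorem aux_complete (n : ℕ) (u : ℕ → ℤ_[p])
    (hu : ∀ k, (p : ℤ_[p]) ^ (n + k) ∣ u (k + 1) - u k) :
    ∃ z : ℤ_[p], ∀ k, (p : ℤ_[p]) ^ (n + k) ∣ z - u k := by
  have hmono : ∀ k j, (p : ℤ_[p]) ^ (n + k) ∣ u (k + j) - u k := by
    intro k j
    induction j with
    | zero => simp
    | succ j ih =>
      have h1 : (p : ℤ_[p]) ^ (n + k) ∣ u (k + j + 1) - u (k + j) :=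
        (pow_dvd_pow _ (by omega)).trans (hu (k + j))
      have := dvd_add h1 ih
      rwa [sub_add_sub_cancel] at this
  have key : ∀ (m : ℕ) (a b : ℤ_[p]),
      a ≡ b [SMOD ((IsLocalRing.maximalIdeal ℤ_[p]) ^ m • ⊤ : Submodule ℤ_[p] ℤ_[p])] ↔
        (p : ℤ_[p]) ^ m ∣ a - b := by
    intro m a b
    rw [SModEq.sub_mem, PadicInt.maximalIdeal_eq_span_p, Ideal.span_singleton_pow, smul_eq_mul,
      Ideal.mul_top, Ideal.mem_span_singleton]
  obtain ⟨L, hL⟩ := IsPrecomplete.prec' (I := IsLocalRing.maximalIdeal ℤ_[p])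
    (fun j => u (j - n)) (by
      intro a b hab
      rw [key, ← dvd_neg, neg_sub]
      obtain ⟨j, hj⟩ := Nat.exists_eq_add_of_le (Nat.sub_le_sub_right hab n)
      rw [hj]
      exact (pow_dvd_pow _ (by omega)).trans (hmono (a - n) j))
  refine ⟨L, fun k => ?_⟩
  have := (key _ _ _).1 (hL (n + k))
  rw [← dvd_neg, neg_sub] at this
  simpa using this

theorem aux_zero (z : ℤ_[p]) (h : ∀ n : ℕ, (p : ℤ_[p]) ^ n ∣ z) : z = 0 := by
  by_contra hz
  have h1 := (PadicInt.norm_le_pow_iff_mem_span_pow z (z.valuation + 1)).2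
    (Ideal.mem_span_singleton.2 (h _))
  rw [PadicInt.norm_le_pow_iff_le_valuation z hz] at h1
  omega

theorem aux_circle (N : ℕ) (hN : 0 < N) (a : ℤ) :
    ((((a : ℚ) / N : ℚ)) : AddCircle (1 : ℚ)) = 0 ↔ (N : ℤ) ∣ a := by
  rw [AddCircle.coe_eq_zero_iff]
  have hN' : (N : ℚ) ≠ 0 := by positivity
  constructor
  · rintro ⟨m, hm⟩
    refine ⟨m, ?_⟩
    rw [eq_div_iff hN'] at hm
    simp at hm
    have : a = m * N := by exact_mod_cast hm.symm
    rw [this, mul_comm]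
  · rintro ⟨m, rfl⟩
    refine ⟨m, ?_⟩
    push_cast
    field_simp
    simp

theorem aux_rep (N : ℕ) (hN : 0 < N) (c : AddCircle (1 : ℚ)) (hc : N • c = 0) :
    ∃ a : ℤ, c = (((a : ℚ) / N : ℚ) : AddCircle (1 : ℚ)) := by
  obtain ⟨q, rfl⟩ := QuotientAddGroup.mk_surjective c
  have hN' : (N : ℚ) ≠ 0 := by positivity
  have : ((N • q : ℚ) : AddCircle (1 : ℚ)) = 0 := hc
  rw [AddCircle.coe_eq_zero_iff] at this
  obtain ⟨m, hm⟩ := this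
  refine ⟨m, ?_⟩
  have : q = (m : ℚ) / N := by
    rw [eq_div_iff hN']
    simp at hm
    linarith
  rw [← this]

theorem aux_sep_s17 {G : Type*} [AddCommGroup G] (htf : ∀ g : G, p • g = 0 → g = 0)
    (H : AddSubgroup G) (n : ℕ) (hH : ∀ g : G, p ^ n • g ∈ H) (x : G) (hx : x ∉ H) :
    ∃ f : G →+ ℤ_[p], (∀ h ∈ H, (p : ℤ_[p]) ^ n ∣ f h) ∧ ¬ (p : ℤ_[p]) ^ n ∣ f x := by
  have hp0 : 0 < p := (Fact.out : p.Prime).pos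
  obtain ⟨c, hc⟩ := CharacterModule.exists_character_apply_ne_zero_of_ne_zero
    (A := G ⧸ H) (a := (x : G ⧸ H)) (by simpa using hx)
  let χ : G →+ AddCircle (1 : ℚ) := AddMonoidHom.comp c (QuotientAddGroup.mk' H)
  have hχx : χ x ≠ 0 := hc
  have hχH : ∀ h ∈ H, χ h = 0 := by
    intro h hh
    change c (h : G ⧸ H) = 0
    rw [(QuotientAddGroup.eq_zero_iff h).2 hh, map_zero]
  have hdiv : ∀ ψ : G →+ AddCircle (1 : ℚ), ∃ ψ' : G →+ AddCircle (1 : ℚ),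
      ∀ g, p • ψ' g = ψ g := by
    intro ψ
    obtain ⟨h, hh⟩ := (Module.Baer.of_divisible
      (AddCircle (1 : ℚ))).extension_property_addMonoidHom (nsmulAddMonoidHom (α := G) p)
      ((injective_iff_map_eq_zero _).2 htf) ψ
    refine ⟨h, fun g => ?_⟩
    rw [← hh, ← map_nsmul]
    rfl
  choose D hD using hdiv
  let ψ : ℕ → (G →+ AddCircle (1 : ℚ)) := fun k => D^[k] χ
  have hψ : ∀ k g, p • ψ (k + 1) g = ψ k g := by
    intro k g
    simp only [ψ, Function.iterate_succ_apply']
    exact hD _ g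
  have hkill : ∀ k g, p ^ (n + k) • ψ k g = 0 := by
    intro k
    induction k with
    | zero =>
      intro g
      change p ^ n • χ g = 0
      rw [← map_nsmul]
      exact hχH _ (hH g)
    | succ k ih =>
      intro g
      rw [← add_assoc, pow_succ, mul_smul, hψ, ih]
  have hrep := fun k g => aux_rep (p ^ (n + k)) (by positivity) (ψ k g) (hkill k g)
  choose a ha using hrep
  have hstep : ∀ g k, (p : ℤ_[p]) ^ (n + k) ∣ (a (k + 1) g : ℤ_[p]) - (a k g : ℤ_[p]) := by
    intro g k
    rw [← Int.cast_sub, PadicInt.pow_p_dvd_int_iff]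
    have := (aux_circle (p ^ (n + k)) (by positivity) (a (k + 1) g - a k g)).1 (by
      have h1 := hψ k g
      rw [ha, ha, ← AddCircle.coe_nsmul, ← sub_eq_zero, ← AddCircle.coe_sub] at h1
      rw [← h1]
      congr 1
      have : (p : ℚ) ≠ 0 := by positivity
      rw [← add_assoc]
      push_cast
      rw [pow_succ]
      simp
      field_simp)
    exact_mod_cast this
  have hlim := fun g => aux_complete n (fun k => (a k g : ℤ_[p])) (hstep g)
  choose F hF using hlim
  have hadd : ∀ g h, F (g + h) = F g + F h := by
    intro g h
    rw [← sub_eq_zero]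
    apply aux_zero
    intro k
    refine (pow_dvd_pow _ (Nat.le_add_left k n)).trans ?_
    have h1 : (p : ℤ_[p]) ^ (n + k) ∣ (a k (g + h) : ℤ_[p]) - a k g - a k h := by
      rw [← Int.cast_sub, ← Int.cast_sub, PadicInt.pow_p_dvd_int_iff]
      have := (aux_circle (p ^ (n + k)) (by positivity) (a k (g + h) - a k g - a k h)).1 (by
        have h1 := map_add (ψ k) g h
        rw [ha, ha, ha, ← AddCircle.coe_add, ← sub_eq_zero, ← AddCircle.coe_sub] at h1
        rw [← h1]
        congr 1
        push_cast
        ring)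
      exact_mod_cast this
    have h2 := dvd_add (dvd_sub (dvd_sub (hF (g + h) k) (hF g k)) (hF h k)) h1
    convert h2 using 1
    ring
  have hiff : ∀ g, (p : ℤ_[p]) ^ n ∣ F g ↔ χ g = 0 := by
    intro g
    have h0 : (p : ℤ_[p]) ^ n ∣ F g - (a 0 g : ℤ_[p]) := hF g 0
    have h1 : χ g = _ := ha 0 g
    rw [h1, aux_circle _ (by positivity), dvd_iff_dvd_of_dvd_sub h0, PadicInt.pow_p_dvd_int_iff]
    simp
  exact ⟨AddMonoidHom.mk' F hadd, fun h hh => (hiff h).2 (hχH h hh), fun h => hχx ((hiff x).1 h)⟩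

theorem aux_approx (z : ℤ_[p]) (n : ℕ) : ∃ m : ℕ, (p : ℤ_[p]) ^ n ∣ z - m :=
  ⟨z.appr n, Ideal.mem_span_singleton.1 (PadicInt.appr_spec n z)⟩

theorem aux_dense_s17 {G : Type*} [AddCommGroup G] (Φ : (G →+ ℤ_[p]) →+ ℤ_[p])
    (I : Finset (G →+ ℤ_[p])) (n : ℕ) : ∃ g : G, ∀ f ∈ I, (p : ℤ_[p]) ^ n ∣ Φ f - f g := by
  classical
  by_contra hcon
  have hp0 : (p : ℤ_[p]) ≠ 0 := by exact_mod_cast (Fact.out : p.Prime).ne_zero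
  let A : AddSubgroup (I → ℤ_[p]) :=
    { carrier := {v | ∃ g : G, ∀ f : I, (p : ℤ_[p]) ^ n ∣ v f - f.1 g}
      zero_mem' := ⟨0, by simp⟩
      add_mem' := by
        rintro v w ⟨g, hg⟩ ⟨h, hh⟩
        refine ⟨g + h, fun f => ?_⟩
        have := dvd_add (hg f) (hh f)
        rw [map_add]
        convert this using 1
        simp; ring
      neg_mem' := by
        rintro v ⟨g, hg⟩
        refine ⟨-g, fun f => ?_⟩
        have := (dvd_neg).2 (hg f)
        rw [map_neg]
        convert this using 1
        simp; ring }
  obtain ⟨F, hF, hFx⟩ := aux_sep_s17 (p := p) (G := I → ℤ_[p])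
    (by
      intro g hg
      funext i
      have := congrFun hg i
      simpa [hp0] using this)
    A n (fun v => ⟨0, fun f => by simp⟩) (fun f => Φ f.1)
    (by
      rintro ⟨g, hg⟩
      exact hcon ⟨g, fun f hf => hg ⟨f, hf⟩⟩)
  choose l hl using fun i : I => aux_approx (F (Pi.single i 1)) n
  have hFmod : ∀ v : I → ℤ_[p], (p : ℤ_[p]) ^ n ∣ F v - ∑ i, (l i : ℤ_[p]) * v i := by
    intro v
    have h1 : F v = ∑ i, F (Pi.single i (v i)) := by
      rw [← map_sum, Finset.univ_sum_single]
    rw [h1, ← Finset.sum_sub_distrib]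
    refine Finset.dvd_sum fun i _ => ?_
    obtain ⟨m, w, hm⟩ := aux_approx (v i) n
    have h2 : v i = m • (1 : ℤ_[p]) + p ^ n • w := by
      simp; linear_combination hm
    have h3 : F (Pi.single i (v i)) =
        m * F (Pi.single i 1) + (p : ℤ_[p]) ^ n * F (Pi.single i w) := by
      rw [h2, Pi.single_add, Pi.single_smul, Pi.single_smul, map_add, map_nsmul, map_nsmul]
      simp
    obtain ⟨s, hs⟩ := hl i
    refine ⟨F (Pi.single i w) + m * s - l i * w, ?_⟩
    rw [h3]
    linear_combination m * hs - l i * hm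
  let T : G →+ ℤ_[p] := ∑ i : I, l i • i.1
  have hT : ∀ g, (p : ℤ_[p]) ^ n ∣ T g := by
    intro g
    have h1 : (p : ℤ_[p]) ^ n ∣ F (fun i => i.1 g) := hF _ ⟨g, fun f => by simp⟩
    have h2 := (dvd_iff_dvd_of_dvd_sub (hFmod (fun i => i.1 g))).1 h1
    simpa [T] using h2
  choose t ht using hT
  have hpn : (p : ℤ_[p]) ^ n ≠ 0 := pow_ne_zero _ hp0
  have hT' : T = p ^ n • AddMonoidHom.mk' t (by
      intro a b
      apply mul_left_cancel₀ hpn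
      rw [mul_add, ← ht, ← ht, ← ht, map_add]) := by
    ext g
    simp [ht]
  have hΦ : (p : ℤ_[p]) ^ n ∣ Φ T := by
    rw [hT', map_nsmul]
    simp
  apply hFx
  rw [dvd_iff_dvd_of_dvd_sub (hFmod _)]
  simpa [T] using hΦ

theorem aux_card_inf {G : Type*} [AddCommGroup G] (H H' : AddSubgroup G)
    (h : ∃ k : ℕ, Nat.card (G ⧸ H) = p ^ k) (h' : ∃ k : ℕ, Nat.card (G ⧸ H') = p ^ k) :
    ∃ k : ℕ, Nat.card (G ⧸ (H ⊓ H')) = p ^ k := by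
  obtain ⟨k, hk⟩ := h
  obtain ⟨k', hk'⟩ := h'
  have h1 : (H ⊓ H').index ∣ p ^ (k + k') := by
    rw [← AddSubgroup.relIndex_mul_index (inf_le_right : H ⊓ H' ≤ H'),
      AddSubgroup.inf_relIndex_right, pow_add]
    refine mul_dvd_mul ?_ ?_
    · rw [← hk]
      exact AddSubgroup.relIndex_dvd_index_of_normal H H'
    · rw [← hk']
      exact dvd_rfl
  obtain ⟨m, _, hm⟩ := (Nat.dvd_prime_pow (Fact.out : p.Prime)).1 h1
  exact ⟨m, hm⟩

/-- The subgroup of elements on which `f` vanishes modulo `p ^ n`. -/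
noncomputable def auxSub {G : Type*} [AddCommGroup G] (f : G →+ ℤ_[p]) (n : ℕ) : AddSubgroup G :=
  ((PadicInt.toZModPow n).toAddMonoidHom.comp f).ker

theorem mem_auxSub {G : Type*} [AddCommGroup G] (f : G →+ ℤ_[p]) (n : ℕ) (g : G) :
    g ∈ auxSub f n ↔ (p : ℤ_[p]) ^ n ∣ f g := by
  rw [← Ideal.mem_span_singleton, ← PadicInt.ker_toZModPow]
  rfl

theorem card_auxSub {G : Type*} [AddCommGroup G] (f : G →+ ℤ_[p]) (n : ℕ) :
    ∃ k : ℕ, Nat.card (G ⧸ auxSub f n) = p ^ k := by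
  have h1 : Nat.card (G ⧸ auxSub f n) ∣ p ^ n := by
    unfold auxSub
    rw [Nat.card_congr (QuotientAddGroup.quotientKerEquivRange
      ((PadicInt.toZModPow n).toAddMonoidHom.comp f)).toEquiv]
    have := AddSubgroup.card_addSubgroup_dvd_card
      ((PadicInt.toZModPow n).toAddMonoidHom.comp f).range
    rwa [Nat.card_zmod] at this
  obtain ⟨m, _, hm⟩ := (Nat.dvd_prime_pow (Fact.out : p.Prime)).1 h1
  exact ⟨m, hm⟩

/-- Subgroups of `p`-power index. -/
abbrev AuxS (p : ℕ) (G : Type*) [AddCommGroup G] :=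
  {H : AddSubgroup G // ∃ k : ℕ, Nat.card (G ⧸ H) = p ^ k}

/-- The concrete inverse limit. -/
def AuxK (p : ℕ) (G : Type*) [AddCommGroup G] : AddSubgroup (∀ H : AuxS p G, G ⧸ H.1) where
  carrier := {x | ∀ (H H' : AuxS p G) (hle : H.1 ≤ H'.1),
    QuotientAddGroup.map H.1 H'.1 (AddMonoidHom.id G) (fun _ hg => hle hg) (x H) = x H'}
  zero_mem' := by
    intro H H' hle
    simp
  add_mem' := by
    intro x y hx hy H H' hle
    simp only [Pi.add_apply, map_add, hx H H' hle, hy H H' hle]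
  neg_mem' := by
    intro x hx H H' hle
    simp only [Pi.neg_apply, map_neg, hx H H' hle]

/-- The index in the inverse system attached to a functional and a level. -/
noncomputable def auxI {G : Type*} [AddCommGroup G] (f : G →+ ℤ_[p]) (n : ℕ) : AuxS p G :=
  ⟨auxSub f n, card_auxSub f n⟩

theorem auxK_rep {G : Type*} [AddCommGroup G] (x : AuxK p G) (H H' : AuxS p G)
    (hle : H.1 ≤ H'.1) (g : G) (hg : (g : G ⧸ H.1) = x.1 H) : (g : G ⧸ H'.1) = x.1 H' := by
  have := x.2 H H' hle
  rw [← this, ← hg]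
  rfl

theorem aux_mk_eq {G : Type*} [AddCommGroup G] (f : G →+ ℤ_[p]) (n : ℕ) (g h : G)
    (e : (g : G ⧸ (auxI f n).1) = (h : G ⧸ (auxI f n).1)) : (p : ℤ_[p]) ^ n ∣ f g - f h := by
  rw [QuotientAddGroup.eq] at e
  have := (mem_auxSub f n _).1 e
  rw [map_add, map_neg, ← dvd_neg] at this
  convert this using 1
  ring

theorem auxE_exists {G : Type*} [AddCommGroup G] (x : AuxK p G) (f : G →+ ℤ_[p]) :
    ∃ z : ℤ_[p], ∀ (n : ℕ) (g : G), (g : G ⧸ (auxI f n).1) = x.1 (auxI f n) →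
      (p : ℤ_[p]) ^ n ∣ z - f g := by
  choose r hr using fun n => QuotientAddGroup.mk_surjective (x.1 (auxI f n))
  obtain ⟨z, hz⟩ := aux_complete 0 (fun k => f (r k)) (by
    intro k
    rw [zero_add]
    apply aux_mk_eq
    rw [hr k]
    refine auxK_rep x (auxI f (k + 1)) (auxI f k) ?_ _ (hr (k + 1))
    intro g hg
    exact (mem_auxSub f k g).2 ((pow_dvd_pow _ (Nat.le_succ k)).trans
      ((mem_auxSub f (k + 1) g).1 hg)))
  refine ⟨z, fun n g hg => ?_⟩
  have h1 := hz n
  rw [zero_add] at h1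
  have h2 := aux_mk_eq f n (r n) g ((hr n).trans hg.symm)
  have := dvd_add h1 h2
  rwa [sub_add_sub_cancel] at this

/-- The value of the isomorphism. -/
noncomputable def auxE {G : Type*} [AddCommGroup G] (x : AuxK p G) (f : G →+ ℤ_[p]) : ℤ_[p] :=
  (auxE_exists x f).choose

theorem auxE_spec {G : Type*} [AddCommGroup G] (x : AuxK p G) (f : G →+ ℤ_[p]) (n : ℕ) (g : G)
    (hg : (g : G ⧸ (auxI f n).1) = x.1 (auxI f n)) : (p : ℤ_[p]) ^ n ∣ auxE x f - f g :=
  (auxE_exists x f).choose_spec n g hg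

theorem auxE_add_left {G : Type*} [AddCommGroup G] (x y : AuxK p G) (f : G →+ ℤ_[p]) :
    auxE (x + y) f = auxE x f + auxE y f := by
  rw [← sub_eq_zero]
  apply aux_zero
  intro n
  obtain ⟨g, hg⟩ := QuotientAddGroup.mk_surjective (x.1 (auxI f n))
  obtain ⟨h, hh⟩ := QuotientAddGroup.mk_surjective (y.1 (auxI f n))
  have h1 := auxE_spec x f n g hg
  have h2 := auxE_spec y f n h hh
  have h3 := auxE_spec (x + y) f n (g + h) (by
    rw [QuotientAddGroup.mk_add, hg, hh]; rfl)
  have := dvd_sub (dvd_sub h3 h1) h2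
  rw [map_add] at this
  convert this using 1
  ring

theorem auxE_add_right {G : Type*} [AddCommGroup G] (x : AuxK p G) (f f' : G →+ ℤ_[p]) :
    auxE x (f + f') = auxE x f + auxE x f' := by
  rw [← sub_eq_zero]
  apply aux_zero
  intro n
  let H0 : AuxS p G := ⟨(auxI f n).1 ⊓ (auxI f' n).1,
    aux_card_inf _ _ (auxI f n).2 (auxI f' n).2⟩
  obtain ⟨g, hg⟩ := QuotientAddGroup.mk_surjective (x.1 H0)
  have h1 := auxE_spec x f n g (auxK_rep x H0 _ inf_le_left g hg)
  have h2 := auxE_spec x f' n g (auxK_rep x H0 _ inf_le_right g hg)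
  have h3 := auxE_spec x (f + f') n g (auxK_rep x H0 _ (by
    intro k hk
    refine (mem_auxSub _ n k).2 ?_
    exact dvd_add ((mem_auxSub f n k).1 hk.1) ((mem_auxSub f' n k).1 hk.2)) g hg)
  have := dvd_sub (dvd_sub h3 h1) h2
  rw [AddMonoidHom.add_apply] at this
  convert this using 1
  ring

/-- The canonical homomorphism from the inverse limit to the double dual. -/
noncomputable def auxEta (p : ℕ) [Fact p.Prime] (G : Type*) [AddCommGroup G] :
    AuxK p G →+ ((G →+ ℤ_[p]) →+ ℤ_[p]) :=
  AddMonoidHom.mk' (fun x => AddMonoidHom.mk' (auxE x) (auxE_add_right x)) (by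
    intro x y
    ext f
    exact auxE_add_left x y f)

theorem auxEta_mk {G : Type*} [AddCommGroup G] (g : G)
    (hg : (fun H : AuxS p G => (QuotientAddGroup.mk g : G ⧸ H.1)) ∈ AuxK p G)
    (f : G →+ ℤ_[p]) : auxE (⟨_, hg⟩ : AuxK p G) f = f g := by
  rw [← sub_eq_zero]
  apply aux_zero
  intro n
  exact auxE_spec _ f n g rfl

theorem auxEta_injective {G : Type*} [AddCommGroup G] (htf : ∀ g : G, p • g = 0 → g = 0) :
    Function.Injective (auxEta p G) := by
  rw [injective_iff_map_eq_zero]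
  intro x hx
  have hx' : ∀ f, auxE x f = 0 := fun f => DFunLike.congr_fun hx f
  apply Subtype.ext
  funext H
  obtain ⟨g, hg⟩ := QuotientAddGroup.mk_surjective (x.1 H)
  rw [← hg]
  change (g : G ⧸ H.1) = 0
  rw [QuotientAddGroup.eq_zero_iff]
  by_contra hgH
  obtain ⟨n, hn⟩ := H.2
  obtain ⟨f, hf, hfx⟩ := aux_sep_s17 htf H.1 n (by
    intro k
    rw [← QuotientAddGroup.eq_zero_iff, QuotientAddGroup.mk_nsmul, ← hn]
    exact card_nsmul_eq_zero') g hgH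
  have := auxE_spec x f n g (auxK_rep x H _ (fun k hk => (mem_auxSub f n k).2 (hf k hk)) g hg)
  rw [hx', zero_sub, dvd_neg] at this
  exact hfx this

theorem aux_ball (z : ℤ_[p]) (u : Set ℤ_[p]) (hu : u ∈ nhds z) :
    ∃ n : ℕ, ∀ w, (p : ℤ_[p]) ^ n ∣ z - w → w ∈ u := by
  obtain ⟨ε, hε, hb⟩ := Metric.mem_nhds_iff.1 hu
  obtain ⟨n, hn⟩ := PadicInt.exists_pow_neg_lt p hε
  refine ⟨n, fun w hw => hb ?_⟩
  rw [Metric.mem_ball, dist_comm, dist_eq_norm]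
  exact lt_of_le_of_lt ((PadicInt.norm_le_pow_iff_mem_span_pow _ n).2
    (Ideal.mem_span_singleton.2 hw)) hn

theorem auxE_continuous {G : Type*} [AddCommGroup G]
    [∀ H : AuxS p G, TopologicalSpace (G ⧸ H.1)] [∀ H : AuxS p G, DiscreteTopology (G ⧸ H.1)] :
    Continuous (fun (x : AuxK p G) (f : G →+ ℤ_[p]) => auxE x f) := by
  refine continuous_pi fun f => ?_
  rw [continuous_iff_continuousAt]
  intro x u hu
  obtain ⟨n, hn⟩ := aux_ball _ u hu
  have hc : Continuous (fun y : AuxK p G => y.1 (auxI f n)) :=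
    (continuous_apply (auxI f n)).comp continuous_subtype_val
  have ho : IsOpen ((fun y : AuxK p G => y.1 (auxI f n)) ⁻¹' {x.1 (auxI f n)}) :=
    (isOpen_discrete _).preimage hc
  refine Filter.mem_map.2 (Filter.mem_of_superset (ho.mem_nhds rfl) ?_)
  intro y hy
  apply hn
  obtain ⟨g, hg⟩ := QuotientAddGroup.mk_surjective (x.1 (auxI f n))
  have h1 := auxE_spec x f n g hg
  have h2 := auxE_spec y f n g (hg.trans (Eq.symm hy))
  have := dvd_sub h1 h2
  rwa [sub_sub_sub_cancel_right] at this

theorem auxK_compact {G : Type*} [AddCommGroup G]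
    [∀ H : AuxS p G, TopologicalSpace (G ⧸ H.1)] [∀ H : AuxS p G, DiscreteTopology (G ⧸ H.1)] :
    CompactSpace (AuxK p G) := by
  have hfin : ∀ H : AuxS p G, Finite (G ⧸ H.1) := by
    intro H
    obtain ⟨k, hk⟩ := H.2
    apply Nat.finite_of_card_ne_zero
    rw [hk]
    exact pow_ne_zero _ (Fact.out : p.Prime).ne_zero
  have hcl : IsClosed ((AuxK p G : Set (∀ H : AuxS p G, G ⧸ H.1))) := by
    have : (AuxK p G : Set (∀ H : AuxS p G, G ⧸ H.1)) =
        ⋂ (H : AuxS p G) (H' : AuxS p G) (hle : H.1 ≤ H'.1),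
          {x | QuotientAddGroup.map H.1 H'.1 (AddMonoidHom.id G) (fun _ hg => hle hg) (x H) =
            x H'} := by
      ext x
      simp only [Set.mem_iInter]
      rfl
    rw [this]
    refine isClosed_iInter fun H => isClosed_iInter fun H' => isClosed_iInter fun hle => ?_
    exact isClosed_eq (continuous_of_discreteTopology.comp (continuous_apply H))
      (continuous_apply H')
  exact isCompact_iff_compactSpace.1 hcl.isCompact

theorem auxEta_surjective {G : Type*} [AddCommGroup G] : Function.Surjective (auxEta p G) := by
  classical
  letI : ∀ H : AuxS p G, TopologicalSpace (G ⧸ H.1) := fun _ => ⊥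
  haveI : ∀ H : AuxS p G, DiscreteTopology (G ⧸ H.1) := fun _ => ⟨rfl⟩
  haveI := auxK_compact (p := p) (G := G)
  intro Φ
  have hcl := (isCompact_range (auxE_continuous (p := p) (G := G))).isClosed
  suffices hmem : (⇑Φ : (G →+ ℤ_[p]) → ℤ_[p]) ∈
      Set.range (fun (x : AuxK p G) (f : G →+ ℤ_[p]) => auxE x f) by
    obtain ⟨x, hx⟩ := hmem
    exact ⟨x, DFunLike.coe_injective hx⟩
  by_contra hmem
  obtain ⟨I, u, hu, hsub⟩ := isOpen_pi_iff.1 hcl.isOpen_compl _ hmem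
  have hn : ∀ f : G →+ ℤ_[p], ∃ n : ℕ, f ∈ I → ∀ w, (p : ℤ_[p]) ^ n ∣ Φ f - w → w ∈ u f := by
    intro f
    by_cases hf : f ∈ I
    · obtain ⟨n, hn⟩ := aux_ball _ (u f) ((hu f hf).1.mem_nhds (hu f hf).2)
      exact ⟨n, fun _ => hn⟩
    · exact ⟨0, fun h => absurd h hf⟩
  choose N hN using hn
  obtain ⟨g, hg⟩ := aux_dense_s17 Φ I (I.sup N)
  have hgK : (fun H : AuxS p G => (QuotientAddGroup.mk g : G ⧸ H.1)) ∈ AuxK p G := by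
    intro H H' hle
    rfl
  refine hsub (a := fun f => auxE (⟨_, hgK⟩ : AuxK p G) f) ?_ ⟨_, rfl⟩
  intro f hf
  simp only [auxEta_mk]
  exact hN f hf _ ((pow_dvd_pow _ (Finset.le_sup hf)).trans (hg f hf))

end Helpers


/-- The `p`-adic double dual of a torsion-free abelian group `G` is, as a
topological group and compatibly with the canonical maps from `G`, the pro-`p`
completion of `G`: the inverse limit of the quotients `G ⧸ H` over subgroups `H`
of `p`-power index. -/
theorem stmt17 (p : ℕ) [Fact p.Prime] (G : Type*) [AddCommGroup G]
    [NoZeroSMulDivisors ℤ G] :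
    ∃ K : AddSubgroup
        (∀ H : {H : AddSubgroup G // ∃ k : ℕ, Nat.card (G ⧸ H) = p ^ k}, G ⧸ H.1),
      -- `K` is the concrete inverse limit of the quotients `G ⧸ H`
      (K : Set (∀ H : {H : AddSubgroup G // ∃ k : ℕ, Nat.card (G ⧸ H) = p ^ k}, G ⧸ H.1)) =
        {x : ∀ H : {H : AddSubgroup G // ∃ k : ℕ, Nat.card (G ⧸ H) = p ^ k}, G ⧸ H.1 |
          ∀ (H H' : {H : AddSubgroup G // ∃ k : ℕ, Nat.card (G ⧸ H) = p ^ k})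
            (hle : H.1 ≤ H'.1),
            QuotientAddGroup.map H.1 H'.1 (AddMonoidHom.id G) (fun _ hg => hle hg) (x H) =
              x H'} ∧
      -- `η` is an additive isomorphism onto the double dual
      ∃ η : K ≃+ ((G →+ ℤ_[p]) →+ ℤ_[p]),
        -- `η` is a homeomorphism for the product-of-discrete topology on `K` and
        -- the relative (pointwise convergence) topology on the double dual
        (letI : ∀ H : {H : AddSubgroup G // ∃ k : ℕ, Nat.card (G ⧸ H) = p ^ k},
            TopologicalSpace (G ⧸ H.1) := fun _ => ⊥
         letI : TopologicalSpace ((G →+ ℤ_[p]) →+ ℤ_[p]) :=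
            TopologicalSpace.induced (fun Φ => (⇑Φ : (G →+ ℤ_[p]) → ℤ_[p])) inferInstance
         Continuous (⇑η) ∧ Continuous (⇑η.symm)) ∧
        -- `η` is compatible with the canonical maps from `G`
        ∀ (g : G)
          (hg : (fun H : {H : AddSubgroup G // ∃ k : ℕ, Nat.card (G ⧸ H) = p ^ k} =>
            (QuotientAddGroup.mk g : G ⧸ H.1)) ∈ K),
          η ⟨_, hg⟩ = AddMonoidHom.mk' (fun f : G →+ ℤ_[p] => f g) (fun _ _ => rfl) := by
  have htf : ∀ g : G, p • g = 0 → g = 0 := by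
    intro g hg
    have h1 : (p : ℤ) • g = 0 := by rw [natCast_zsmul, hg]
    rcases eq_zero_or_eq_zero_of_smul_eq_zero h1 with h | h
    · exact absurd (by exact_mod_cast h) (Fact.out : p.Prime).ne_zero
    · exact h
  refine ⟨AuxK p G, rfl, AddEquiv.ofBijective (auxEta p G)
    ⟨auxEta_injective htf, auxEta_surjective⟩, ?_, ?_⟩
  · letI : ∀ H : {H : AddSubgroup G // ∃ k : ℕ, Nat.card (G ⧸ H) = p ^ k},
        TopologicalSpace (G ⧸ H.1) := fun _ => ⊥
    letI : TopologicalSpace ((G →+ ℤ_[p]) →+ ℤ_[p]) :=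
      TopologicalSpace.induced (fun Φ => (⇑Φ : (G →+ ℤ_[p]) → ℤ_[p])) inferInstance
    haveI : ∀ H : AuxS p G, DiscreteTopology (G ⧸ H.1) := fun _ => ⟨rfl⟩
    haveI := auxK_compact (p := p) (G := G)
    haveI : T2Space ((G →+ ℤ_[p]) →+ ℤ_[p]) :=
      T2Space.of_injective_continuous DFunLike.coe_injective continuous_induced_dom
    have hc : Continuous (AddEquiv.ofBijective (auxEta p G)
        ⟨auxEta_injective htf, auxEta_surjective⟩) :=
      continuous_induced_rng.2 auxE_continuous
    exact ⟨hc, hc.continuous_symm_of_equiv_compact_to_t2 (f := (AddEquiv.ofBijective (auxEta p G)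
        ⟨auxEta_injective htf, auxEta_surjective⟩).toEquiv)⟩
  · intro g hg
    ext f
    exact auxEta_mk g hg f
end
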